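/- Let A and B be free groups and G = A ∗_U B an amalgamated product where U is a maximal cyclic subgroup of both A and B. If r ∈ G is not conjugate to any element of A and not conjugate to any element of B, then the canonical maps A → G/⟨⟨r⟩⟩ and B → G/⟨⟨r⟩⟩ are injective. -/

import Mathlib

/-- `G` together with `iA`, `iB` is the amalgamated product `A ∗_{⟨p⟩=⟨q⟩} B`:
the maps are injective, `p` and `q` are identified, and `G` satisfies the universal
property of the pushout. -/
def IsAmalgam {A B G : Type} [Group A] [Group B] [Group G]
    (iA : A →* G) (iB : B →* G) (p : A) (q : B) : Prop :=
  Function.Injective iA ∧ Function.Injective iB ∧ iA p = iB q ∧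
  ∀ (K : Type) [Group K] (fA : A →* K) (fB : B →* K), fA p = fB q →
    ∃! f : G →* K, f.comp iA = fA ∧ f.comp iB = fB

/-- A subgroup is maximal cyclic if it is infinite cyclic and not properly contained
in any cyclic subgroup. -/
def IsMaximalCyclic {H : Type} [Group H] (U : Subgroup H) : Prop :=
  (∃ g : H, U = Subgroup.zpowers g) ∧ (U : Set H).Infinite ∧
  ∀ g : H, U ≤ Subgroup.zpowers g → U = Subgroup.zpowers g


namespace FA

/-- every nontrivial subgroup has a nontrivial homomorphism to the rationals -/
def RC (H : Type) [Group H] : Prop :=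
  ∀ S : Subgroup H, S ≠ ⊥ → ∃ f : S →* Multiplicative ℚ, f ≠ 1

theorem RC_of_loc {H : Type} [Group H]
    (h : ∀ S : Subgroup H, S ≠ ⊥ → ∃ (K : Type) (_ : Group K) (f : S →* K), RC K ∧ f ≠ 1) :
    RC H := by
  intro S hS
  obtain ⟨K, _, f, hK, hf⟩ := h S hS
  have h1 : f.range ≠ ⊥ := by
    intro h0
    apply hf
    ext x
    have : f x ∈ f.range := ⟨x, rfl⟩
    rw [h0] at this
    simpa using this
  obtain ⟨g, hg⟩ := hK _ h1
  refine ⟨g.comp f.rangeRestrict, ?_⟩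
  intro h0
  apply hg
  ext ⟨y, x, rfl⟩
  have := DFunLike.congr_fun h0 x
  exact this

theorem RC_rat : RC (Multiplicative ℚ) := by
  intro S hS
  refine ⟨S.subtype, ?_⟩
  intro h
  apply hS
  rw [Subgroup.eq_bot_iff_forall]
  intro x hx
  exact DFunLike.congr_fun h ⟨x, hx⟩

theorem RC_of_sep {H : Type} [Group H]
    (h : ∀ x : H, x ≠ 1 → ∃ (K : Type) (_ : Group K) (f : H →* K), RC K ∧ f x ≠ 1) :
    RC H := by
  apply RC_of_loc
  intro S hS
  obtain ⟨x, hx, hx1⟩ := (Subgroup.ne_bot_iff_exists_ne_one.1 hS).elim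
    (fun a ha => (⟨a.1, a.2, fun h => ha (Subtype.ext h)⟩ : ∃ x, x ∈ S ∧ x ≠ 1))
  obtain ⟨K, i, f, hK, hf⟩ := h x hx1
  refine ⟨K, i, f.comp S.subtype, hK, ?_⟩
  intro h0
  exact hf (DFunLike.congr_fun h0 ⟨x, hx⟩)

theorem RC_inj {H K : Type} [Group H] [Group K] (hK : RC K) (f : H →* K)
    (hf : Function.Injective f) : RC H := by
  apply RC_of_sep
  intro x hx
  exact ⟨K, _, f, hK, fun h => hx (hf (by rw [h, map_one]))⟩

theorem RC_prod {H K : Type} [Group H] [Group K] (hH : RC H) (hK : RC K) : RC (H × K) := by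
  apply RC_of_sep
  rintro ⟨a, b⟩ hx
  by_cases ha : a = 1
  · refine ⟨K, _, MonoidHom.snd H K, hK, ?_⟩
    intro hb
    exact hx (Prod.ext ha hb)
  · exact ⟨H, _, MonoidHom.fst H K, hH, ha⟩

theorem RC_free {H : Type} [Group H] [IsFreeGroup H] : RC H := by
  intro S hS
  have e := IsFreeGroup.toFreeGroup S
  by_cases hE : IsEmpty (IsFreeGroup.Generators S)
  · exfalso
    apply hS
    rw [Subgroup.eq_bot_iff_forall]
    intro x hx
    have : Subsingleton S := e.toEquiv.subsingleton
    have := Subsingleton.elim (⟨x, hx⟩ : S) 1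
    exact congrArg Subtype.val this
  · rw [not_isEmpty_iff] at hE
    obtain ⟨g⟩ := hE
    refine ⟨(FreeGroup.lift (fun _ => Multiplicative.ofAdd (1 : ℚ))).comp e.toMonoidHom, ?_⟩
    intro h
    have := DFunLike.congr_fun h (e.symm (FreeGroup.of g))
    simp only [MonoidHom.comp_apply, MulEquiv.coe_toMonoidHom, MulEquiv.apply_symm_apply,
      FreeGroup.lift_apply_of, MonoidHom.one_apply] at this
    have h2 : (1 : ℚ) = 0 := Multiplicative.ofAdd.injective this
    norm_num at h2

theorem RC_torsion {H : Type} [Group H] (hH : RC H) (x : H) (hx : x ≠ 1) (n : ℤ) (hn : n ≠ 0) :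
    x ^ n ≠ 1 := by
  intro h
  have h1 : Subgroup.zpowers x ≠ ⊥ := by
    rwa [Ne, Subgroup.zpowers_eq_bot]
  obtain ⟨f, hf⟩ := hH _ h1
  apply hf
  have h2 : f ⟨x, Subgroup.mem_zpowers x⟩ = 1 := by
    have h3 : (f ⟨x, Subgroup.mem_zpowers x⟩) ^ n = 1 := by
      rw [← map_zpow]
      have : (⟨x, Subgroup.mem_zpowers x⟩ : Subgroup.zpowers x) ^ n = 1 := Subtype.ext (by simpa using h)
      rw [this, map_one]
    have h4 : (n : ℚ) * Multiplicative.toAdd (f ⟨x, Subgroup.mem_zpowers x⟩) = 0 := by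
      have := congrArg Multiplicative.toAdd h3
      simpa using this
    have h5 := (mul_eq_zero.1 h4).resolve_left (by exact_mod_cast hn)
    exact h5
  ext ⟨y, k, rfl⟩
  have : (⟨x ^ k, k, rfl⟩ : Subgroup.zpowers x) = ⟨x, Subgroup.mem_zpowers x⟩ ^ k := Subtype.ext (by simp)
  simp only [this, map_zpow, h2, one_zpow, MonoidHom.one_apply]

/-- functions extended by the group acting on the domain -/
@[ext] structure Wr (X Γ : Type) where
  c : X → ℚ
  g : Γ

namespace Wr
variable {X Γ : Type} [Group Γ] [MulAction Γ X]

instance : Mul (Wr X Γ) := ⟨fun a b => ⟨fun x => a.c x + b.c (a.g⁻¹ • x), a.g * b.g⟩⟩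
instance : One (Wr X Γ) := ⟨⟨fun _ => 0, 1⟩⟩
instance : Inv (Wr X Γ) := ⟨fun a => ⟨fun x => - a.c (a.g • x), a.g⁻¹⟩⟩

@[simp] theorem mul_c (a b : Wr X Γ) (x : X) : (a * b).c x = a.c x + b.c (a.g⁻¹ • x) := rfl
@[simp] theorem mul_g (a b : Wr X Γ) : (a * b).g = a.g * b.g := rfl
@[simp] theorem one_c (x : X) : (1 : Wr X Γ).c x = 0 := rfl
@[simp] theorem one_g : (1 : Wr X Γ).g = 1 := rfl

instance : Group (Wr X Γ) := Group.ofLeftAxioms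
  (by
    intro a b c
    ext x
    · simp [mul_smul, add_assoc]
    · simp [mul_assoc])
  (by
    intro a
    ext x
    · simp
    · simp)
  (by
    intro a
    ext x
    · change - a.c (a.g • x) + a.c ((a.g⁻¹)⁻¹ • x) = 0
      simp
    · change a.g⁻¹ * a.g = 1
      simp)

/-- projection -/
def proj : Wr X Γ →* Γ := ⟨⟨fun a => a.g, rfl⟩, fun _ _ => rfl⟩

@[simp] theorem proj_apply (a : Wr X Γ) : proj a = a.g := rfl

theorem rc (h : RC Γ) : RC (Wr X Γ) := by
  apply RC_of_loc
  intro S hS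
  by_cases h1 : ∃ x ∈ S, x.g ≠ 1
  · obtain ⟨x, hx, hg⟩ := h1
    refine ⟨Γ, _, proj.comp S.subtype, h, ?_⟩
    intro h0
    have h9 := DFunLike.congr_fun h0 ⟨x, hx⟩
    exact hg h9
  · push Not at h1
    obtain ⟨⟨a, ha⟩, ha1⟩ := Subgroup.ne_bot_iff_exists_ne_one.1 hS
    have h2 : ∃ x, a.c x ≠ 0 := by
      by_contra h3
      push Not at h3
      apply ha1
      apply Subtype.ext
      ext x
      · exact h3 x
      · exact h1 a ha
    obtain ⟨x, hx⟩ := h2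
    refine ⟨Multiplicative ℚ, _, ⟨⟨fun a => Multiplicative.ofAdd (a.1.c x), rfl⟩, ?_⟩, RC_rat, ?_⟩
    · rintro ⟨b, hb⟩ ⟨d, hd⟩
      change Multiplicative.ofAdd (b.c x + d.c (b.g⁻¹ • x)) = _
      rw [h1 b hb]
      simp
    · intro h0
      apply hx
      have := DFunLike.congr_fun h0 ⟨a, ha⟩
      exact Multiplicative.ofAdd.injective this

end Wr

/-- universal RC quotient killing `K` -/
def dq {P : Type} [Group P] (K : Set P) : Subgroup P where
  carrier := {x | ∀ (E : Type) (_ : Group E) (f : P →* E), RC E → (∀ k ∈ K, f k = 1) → f x = 1}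
  one_mem' := by intro E _ f _ _; exact map_one f
  mul_mem' := by
    intro a b ha hb E _ f h1 h2
    rw [map_mul, ha E _ f h1 h2, hb E _ f h1 h2, one_mul]
  inv_mem' := by
    intro a ha E _ f h1 h2
    rw [map_inv, ha E _ f h1 h2, inv_one]

instance {P : Type} [Group P] (K : Set P) : (dq K).Normal := by
  constructor
  intro n hn g E _ f h1 h2
  rw [map_mul, map_mul, hn E _ f h1 h2, map_inv]
  simp

theorem mem_dq_of_mem {P : Type} [Group P] {K : Set P} {k : P} (hk : k ∈ K) : k ∈ dq K :=
  fun _ _ _ _ h2 => h2 k hk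

theorem RC_dq {P : Type} [Group P] (K : Set P) : RC (P ⧸ dq K) := by
  apply RC_of_sep
  intro x hx
  obtain ⟨x, rfl⟩ := QuotientGroup.mk_surjective x
  have h : x ∉ dq K := by
    intro h
    exact hx ((QuotientGroup.eq_one_iff x).2 h)
  have h2 : ∃ (E : Type) (_ : Group E) (f : P →* E), RC E ∧ (∀ k ∈ K, f k = 1) ∧ f x ≠ 1 := by
    by_contra h3
    apply h
    intro E i f h1 h2
    by_contra h4
    exact h3 ⟨E, i, f, h1, h2, h4⟩
  obtain ⟨E, i, f, h1, h2, h3⟩ := h2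
  refine ⟨E, i, QuotientGroup.lift (dq K) f ?_, h1, h3⟩
  intro y hy
  exact hy E i f h1 h2

/-- Kaloujnine and Krasner type extension of a homomorphism of the kernel -/
theorem kk {H Γ : Type} [Group H] [Group Γ] (p : H →* Γ) (η : p.ker →* Multiplicative ℚ) :
    ∃ f : H →* Wr Γ Γ, (∀ h, (f h).g = p h) ∧
      ∀ h : p.ker, (f h).c 1 = Multiplicative.toAdd (η h) := by
  classical
  have ht : ∃ τ : Γ → H, τ 1 = 1 ∧ ∀ γ ∈ p.range, p (τ γ) = γ := by
    refine ⟨fun γ => if h : γ ∈ p.range then (if γ = 1 then 1 else h.choose) else 1, ?_, ?_⟩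
    · simp
    · intro γ hγ
      simp only [hγ, dif_pos]
      split_ifs with h1
      · simp [h1]
      · exact (hγ : ∃ x, p x = γ).choose_spec
  obtain ⟨τ, hτ1, hτ⟩ := ht
  have key : ∀ (h : H) (γ : Γ), γ ∈ p.range → (τ γ)⁻¹ * h * τ ((p h)⁻¹ * γ) ∈ p.ker := by
    intro h γ hγ
    have h2 : (p h)⁻¹ * γ ∈ p.range := p.range.mul_mem (p.range.inv_mem ⟨h, rfl⟩) hγ
    rw [MonoidHom.mem_ker, map_mul, map_mul, map_inv, hτ _ hγ, hτ _ h2]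
    group
  let d : H → Γ → ℚ := fun h γ => if hγ : γ ∈ p.range then
    Multiplicative.toAdd (η ⟨_, key h γ hγ⟩) else 0
  have hd : ∀ h k γ, d (h * k) γ = d h γ + d k ((p h)⁻¹ * γ) := by
    intro h k γ
    by_cases hγ : γ ∈ p.range
    · have h2 : (p h)⁻¹ * γ ∈ p.range := p.range.mul_mem (p.range.inv_mem ⟨h, rfl⟩) hγ
      simp only [d, hγ, h2, dif_pos]
      rw [← toAdd_mul, ← map_mul]
      congr 2
      apply Subtype.ext
      simp [mul_assoc]
    · have h2 : (p h)⁻¹ * γ ∉ p.range := by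
        intro h2
        apply hγ
        have := p.range.mul_mem ⟨h, rfl⟩ h2
        simpa using this
      simp only [d]
      rw [dif_neg hγ, dif_neg hγ, dif_neg h2, add_zero]
  refine ⟨MonoidHom.mk' (fun h => ⟨d h, p h⟩) ?_, fun h => rfl, ?_⟩
  · intro a b
    ext x
    · exact hd a b x
    · exact map_mul p a b
  · rintro ⟨h, hh⟩
    change d h 1 = _
    have h1 : (1 : Γ) ∈ p.range := p.range.one_mem
    simp only [d, h1, dif_pos]
    congr 2
    apply Subtype.ext
    rw [MonoidHom.mem_ker] at hh
    simp [hτ1, hh]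

end FA


namespace FA

section cons
variable {Γ X Y : Type} [Group Γ] [MulAction Γ X] [MulAction Γ Y]

/-- solvability for invariant functions -/
def JS (T : (Y → ℚ) →ₗ[ℚ] (X → ℚ)) (Δ : Subgroup Γ) (S : Set X) : Prop :=
  ∀ c : X → ℚ, (∀ δ ∈ Δ, ∀ x, c (δ • x) = c x) →
    ∃ d : Y → ℚ, (∀ δ ∈ Δ, ∀ y, d (δ • y) = d y) ∧ ∀ x ∈ S, T d x = c x

/-- saturation -/
def orbS (Δ : Subgroup Γ) (F : Set X) : Set X := {x | ∃ δ ∈ Δ, ∃ f ∈ F, x = δ • f}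

theorem height_exists (hX : ∀ (g : Γ) (x : X), g • x = x → g = 1) (S : Subgroup Γ)
    (φ : S →* Multiplicative ℚ) :
    ∃ (rep : X → X) (sg : X → S), (∀ x, x = (sg x : Γ) • rep x) ∧
      (∀ (s : S) x, rep ((s : Γ) • x) = rep x) ∧
      (∀ (s : S) x, sg ((s : Γ) • x) = s * sg x) := by
  classical
  have h1 : ∀ x : X, ∃ s : S,
      x = (s : Γ) • (Quotient.out (Quotient.mk (MulAction.orbitRel S X) x)) := by
    intro x
    have h := Quotient.mk_out (s := MulAction.orbitRel S X) x
    have h2 := (MulAction.orbitRel S X).symm h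
    obtain ⟨s, hs⟩ := h2
    exact ⟨s, hs.symm⟩
  choose sg hsg using h1
  have h2 : ∀ (s : S) (x : X), (Quotient.mk (MulAction.orbitRel S X) ((s : Γ) • x)) =
      (Quotient.mk (MulAction.orbitRel S X) x) := by
    intro s x
    apply Quotient.sound
    exact ⟨s, rfl⟩
  refine ⟨fun x => Quotient.out (Quotient.mk (MulAction.orbitRel S X) x), sg, hsg, ?_, ?_⟩
  · intro s x
    change Quotient.out _ = Quotient.out _
    rw [h2]
  · intro s x
    have h3 := hsg ((s : Γ) • x)
    rw [h2] at h3
    have h4 := hsg x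
    set r := Quotient.out (Quotient.mk (MulAction.orbitRel S X) x) with hr
    have h5 : ((sg ((s : Γ) • x) : Γ)⁻¹ * ((s : Γ) * (sg x : Γ))) • r = r := by
      rw [mul_smul, mul_smul, ← h4, inv_smul_eq_iff, ← h3]
    have h6 := hX _ _ h5
    apply Subtype.ext
    rw [inv_mul_eq_one] at h6
    simpa using h6

theorem JS_pow (T : (Y → ℚ) →ₗ[ℚ] (X → ℚ))
    (hT : ∀ (g : Γ) d x, T (fun y => d (g • y)) x = T d (g • x))
    (S : Subgroup Γ) (φ : S →* Multiplicative ℚ) (A : Set X)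
    (rX : X → X) (sX : X → S) (h1X : ∀ x, x = (sX x : Γ) • rX x)
    (h2X : ∀ (s : S) x, rX ((s : Γ) • x) = rX x)
    (hY : Y → ℚ) (hhY : ∀ (s : S) y, hY ((s : Γ) • y) = hY y + Multiplicative.toAdd (φ s))
    (hJ : JS T S A) (n : ℕ) :
    ∀ c : X → ℚ, (∀ δ ∈ S, ∀ x, c (δ • x) = c x) →
    ∃ d : Y → ℚ, (∀ δ : S, φ δ = 1 → ∀ y, d ((δ : Γ) • y) = d y) ∧
      ∀ x ∈ A, T d x = c x * (Multiplicative.toAdd (φ (sX x))) ^ n := by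
  induction n using Nat.strong_induction_on with
  | _ n ih =>
  intro c hc
  obtain ⟨d0, hd0, hd1⟩ := hJ c hc
  let cm : ℕ → X → ℚ := fun m x => T (fun y => d0 y * hY y ^ (m + 1)) (rX x) * (n.choose (m + 1))
  have hcm : ∀ m, ∀ δ ∈ S, ∀ x, cm m (δ • x) = cm m x := by
    intro m δ hδ x
    simp only [cm]
    rw [h2X ⟨δ, hδ⟩ x]
  have h3 : ∀ m, ∃ d : Y → ℚ, (∀ δ : S, φ δ = 1 → ∀ y, d ((δ : Γ) • y) = d y) ∧
      (m < n → ∀ x ∈ A, T d x = cm m x * (Multiplicative.toAdd (φ (sX x))) ^ (n - (m + 1))) := by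
    intro m
    by_cases hm : m < n
    · obtain ⟨d, h4, h5⟩ := ih (n - (m + 1)) (by omega) (cm m) (hcm m)
      exact ⟨d, h4, fun _ => h5⟩
    · exact ⟨0, by simp, fun h => absurd h hm⟩
  choose dm hdm1 hdm2 using h3
  refine ⟨(fun y => d0 y * hY y ^ n) - ∑ m ∈ Finset.range n, dm m, ?_, ?_⟩
  · intro δ hδ y
    simp only [Pi.sub_apply, Finset.sum_apply, hdm1 _ δ hδ, hd0 _ δ.2, hhY, hδ, toAdd_one, add_zero]
  · intro x hx
    rw [map_sub, map_sum, Pi.sub_apply, Finset.sum_apply]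
    have h4 : T (fun y => d0 y * hY y ^ n) x = ∑ m ∈ Finset.range (n + 1),
        T (fun y => d0 y * hY y ^ m) (rX x) * (Multiplicative.toAdd (φ (sX x))) ^ (n - m) *
          (n.choose m) := by
      conv_lhs => rw [h1X x, ← hT]
      have h5 : (fun y => d0 ((sX x : Γ) • y) * hY ((sX x : Γ) • y) ^ n) =
          ∑ m ∈ Finset.range (n + 1), ((Multiplicative.toAdd (φ (sX x))) ^ (n - m) *
          (n.choose m)) • (fun y => d0 y * hY y ^ m) := by
        funext y
        rw [hd0 _ (sX x).2, hhY, add_pow, Finset.mul_sum, Finset.sum_apply]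
        apply Finset.sum_congr rfl
        intro m _
        simp only [Pi.smul_apply, smul_eq_mul]
        ring
      rw [h5, map_sum, Finset.sum_apply]
      apply Finset.sum_congr rfl
      intro m _
      rw [map_smul]
      simp only [Pi.smul_apply, smul_eq_mul]
      ring
    rw [h4, Finset.sum_range_succ']
    have h6 : T (fun y => d0 y * hY y ^ 0) (rX x) = c x := by
      rw [← hd1 x hx]
      conv_rhs => rw [h1X x, ← hT]
      simp only [hd0 _ (sX x).2, pow_zero, mul_one]
    rw [h6]
    have h7 : ∀ m ∈ Finset.range n, T (dm m) x = T (fun y => d0 y * hY y ^ (m + 1)) (rX x) *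
        (Multiplicative.toAdd (φ (sX x))) ^ (n - (m + 1)) * (n.choose (m + 1)) := by
      intro m hm
      rw [hdm2 m (Finset.mem_range.1 hm) x hx]
      simp only [cm]
      ring
    rw [Finset.sum_congr rfl h7]
    simp

theorem JS_step (hX : ∀ (g : Γ) (x : X), g • x = x → g = 1)
    (hY : ∀ (g : Γ) (y : Y), g • y = y → g = 1)
    (T : (Y → ℚ) →ₗ[ℚ] (X → ℚ))
    (hT : ∀ (g : Γ) d x, T (fun y => d (g • y)) x = T d (g • x))
    (S S' : Subgroup Γ) (φ : S →* Multiplicative ℚ) (hle : S' ≤ S)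
    (hS' : ∀ s : S, φ s = 1 ↔ (s : Γ) ∈ S') (F : Finset X)
    (hJ : JS T S (orbS S (F : Set X))) : JS T S' (orbS S' (F : Set X)) := by
  classical
  intro c hc
  obtain ⟨rX, sX, h1X, h2X, h3X⟩ := height_exists hX S φ
  obtain ⟨rY, sY, h1Y, h2Y, h3Y⟩ := height_exists hY S φ
  let h : X → ℚ := fun x => Multiplicative.toAdd (φ (sX x))
  have hh : ∀ (s : S) x, h ((s : Γ) • x) = h x + Multiplicative.toAdd (φ s) := by
    intro s x
    simp only [h]
    rw [h3X, map_mul, toAdd_mul, add_comm]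
  have hP := JS_pow T hT S φ (orbS S (F : Set X)) rX sX h1X h2X
    (fun y => Multiplicative.toAdd (φ (sY y)))
    (by
      intro s x
      rw [h3Y, map_mul, toAdd_mul, add_comm]) hJ
  let H : Finset ℚ := F.image h
  let ci : ℚ → X → ℚ := fun i x =>
    if e : ∃ s : S, h ((s : Γ) • x) = i then c ((e.choose : Γ) • x) else 0
  have ci_eq : ∀ i x (s : S), h ((s : Γ) • x) = i → ci i x = c ((s : Γ) • x) := by
    intro i x s hs
    have e : ∃ s : S, h ((s : Γ) • x) = i := ⟨s, hs⟩
    simp only [ci]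
    rw [dif_pos e]
    have h4 := e.choose_spec
    have h5 : φ (e.choose * s⁻¹) = 1 := by
      rw [hh] at h4 hs
      apply Multiplicative.toAdd.injective
      rw [map_mul, map_inv, toAdd_mul, toAdd_inv, toAdd_one]
      linarith
    have h6 := (hS' _).1 h5
    have h7 := hc _ h6 ((s : Γ) • x)
    rw [← h7, ← mul_smul]
    simp
  have ci_inv : ∀ i, ∀ δ ∈ S, ∀ x, ci i (δ • x) = ci i x := by
    intro i δ hδ x
    by_cases e : ∃ s : S, h ((s : Γ) • x) = i
    · obtain ⟨s, hs⟩ := e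
      have h8 : ((s * ⟨δ, hδ⟩⁻¹ : S) : Γ) • (δ • x) = (s : Γ) • x := by
        rw [← mul_smul]
        simp
      rw [ci_eq i x s hs, ci_eq i (δ • x) (s * ⟨δ, hδ⟩⁻¹) (by rw [h8, hs]), h8]
    · have e' : ¬ ∃ s : S, h ((s : Γ) • (δ • x)) = i := by
        rintro ⟨s, hs⟩
        apply e
        refine ⟨s * ⟨δ, hδ⟩, ?_⟩
        rw [← hs]
        simp [mul_smul]
      simp only [ci]
      rw [dif_neg e, dif_neg e']
  choose D hD1 hD2 using fun n i => hP n (ci i) (ci_inv i)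
  let L : ℚ → Polynomial ℚ := fun i => Lagrange.basis H id i
  refine ⟨∑ i ∈ H, ∑ n ∈ Finset.range ((L i).natDegree + 1), (L i).coeff n • D n i, ?_, ?_⟩
  · intro δ hδ y
    have h9 := fun n i => hD1 n i ⟨δ, hle hδ⟩ ((hS' _).2 hδ) y
    simp only [Finset.sum_apply, Pi.smul_apply]
    simp only at h9
    simp only [h9]
  · intro x hx
    have hx0 : x ∈ orbS S (F : Set X) := by
      obtain ⟨δ, hδ, f, hf, rfl⟩ := hx
      exact ⟨δ, hle hδ, f, hf, rfl⟩
    have hxH : h x ∈ H := by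
      obtain ⟨δ, hδ, f, hf, rfl⟩ := hx
      have := hh ⟨δ, hle hδ⟩ f
      rw [(hS' _).2 hδ, toAdd_one, add_zero] at this
      simp only at this
      rw [this]
      exact Finset.mem_image_of_mem h hf
    rw [map_sum, Finset.sum_apply]
    have h10 : ∀ i ∈ H, T (∑ n ∈ Finset.range ((L i).natDegree + 1), (L i).coeff n • D n i) x =
        ci i x * (L i).eval (h x) := by
      intro i _
      rw [map_sum, Finset.sum_apply, Polynomial.eval_eq_sum_range, Finset.mul_sum]
      apply Finset.sum_congr rfl
      intro n _
      rw [map_smul, Pi.smul_apply, hD2 n i x hx0, smul_eq_mul]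
      simp only [h]
      ring
    rw [Finset.sum_congr rfl h10, Finset.sum_eq_single (h x)]
    · have h11 : (L (h x)).eval (h x) = 1 :=
        Lagrange.eval_basis_self (v := id) (Function.injective_id.injOn) hxH
      rw [h11, ci_eq (h x) x 1 (by simp)]
      simp
    · intro i _ hi
      have h12 : (L i).eval (h x) = 0 := Lagrange.eval_basis_of_ne (v := id) hi hxH
      rw [h12, mul_zero]
    · intro h13
      exact absurd hxH h13

theorem JS_main (hΓ : RC Γ) (hX : ∀ (g : Γ) (x : X), g • x = x → g = 1)
    (hY : ∀ (g : Γ) (y : Y), g • y = y → g = 1)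
    (T : (Y → ℚ) →ₗ[ℚ] (X → ℚ))
    (hT : ∀ (g : Γ) d x, T (fun y => d (g • y)) x = T d (g • x)) (F : Finset X) (n : ℕ) :
    ∀ (Δ : Subgroup Γ), {z : F × F | ∃ δ ∈ Δ, (z.2 : X) = δ • (z.1 : X)}.ncard ≤ n →
    JS T Δ (orbS Δ (F : Set X)) → ∀ c : X → ℚ, ∃ d : Y → ℚ, ∀ x ∈ F, T d x = c x := by
  classical
  induction n using Nat.strong_induction_on with
  | _ n ih =>
  intro Δ hn hJ
  let W : Set Γ := {δ | δ ∈ Δ ∧ ∃ x ∈ F, ∃ x' ∈ F, x' = δ • x}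
  let S := Subgroup.closure W
  have hWS : W ⊆ S := Subgroup.subset_closure
  have hS : S ≤ Δ := (Subgroup.closure_le _).2 (fun δ hδ => hδ.1)
  have hJS : JS T S (orbS S (F : Set X)) := by
    intro c hc
    let c' : X → ℚ := fun x => if e : ∃ δ ∈ Δ, δ • x ∈ F then c (e.choose • x) else 0
    have hc0 : ∀ x, ∀ δ ∈ Δ, δ • x ∈ F → c' x = c (δ • x) := by
      intro x δ hδ hx
      have e : ∃ δ ∈ Δ, δ • x ∈ F := ⟨δ, hδ, hx⟩
      simp only [c']
      rw [dif_pos e]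
      obtain ⟨h1, h2⟩ := e.choose_spec
      have h3 : e.choose * δ⁻¹ ∈ W := by
        refine ⟨Δ.mul_mem h1 (Δ.inv_mem hδ), δ • x, hx, _, h2, ?_⟩
        rw [← mul_smul]
        simp
      rw [← hc _ (hWS h3) (δ • x), ← mul_smul]
      simp
    have hc1 : ∀ δ ∈ Δ, ∀ x, c' (δ • x) = c' x := by
      intro δ hδ x
      by_cases e : ∃ δ ∈ Δ, δ • x ∈ F
      · obtain ⟨s, hs, hx⟩ := e
        have h8 : (s * δ⁻¹) • (δ • x) = s • x := by
          rw [← mul_smul]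
          simp
        rw [hc0 x s hs hx, hc0 (δ • x) (s * δ⁻¹) (Δ.mul_mem hs (Δ.inv_mem hδ)) (by rwa [h8]), h8]
      · have e' : ¬ ∃ s ∈ Δ, s • (δ • x) ∈ F := by
          rintro ⟨s, hs, hx⟩
          exact e ⟨s * δ, Δ.mul_mem hs hδ, by rwa [mul_smul]⟩
        simp only [c']
        rw [dif_neg e, dif_neg e']
    obtain ⟨d, hd1, hd2⟩ := hJ c' hc1
    refine ⟨d, fun δ hδ => hd1 δ (hS hδ), ?_⟩
    rintro x ⟨δ, hδ, f, hf, rfl⟩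
    rw [hd2 _ ⟨δ, hS hδ, f, hf, rfl⟩, hc1 δ (hS hδ), hc δ hδ, hc0 f 1 Δ.one_mem (by simpa using hf)]
    simp
  by_cases hbot : S = ⊥
  · intro c
    rw [hbot] at hJS
    obtain ⟨d, -, hd⟩ := hJS c (by
      intro δ hδ x
      rw [Subgroup.mem_bot.1 hδ, one_smul])
    exact ⟨d, fun x hx => hd x ⟨1, Subgroup.one_mem _, x, hx, by simp⟩⟩
  · obtain ⟨φ, hφ⟩ := hΓ S hbot
    let S' : Subgroup Γ := φ.ker.map S.subtype
    have hle : S' ≤ S := Subgroup.map_subtype_le _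
    have hS' : ∀ s : S, φ s = 1 ↔ (s : Γ) ∈ S' := by
      intro s
      constructor
      · intro h
        exact ⟨s, h, rfl⟩
      · rintro ⟨s', h, h2⟩
        have : s' = s := Subtype.ext h2
        rw [← this]
        exact h
    have hJ' := JS_step hX hY T hT S S' φ hle hS' F hJS
    have hex : ∃ δ ∈ W, δ ∉ S' := by
      by_contra h
      push Not at h
      apply hφ
      have h2 : S ≤ S' := (Subgroup.closure_le _).2 h
      ext s
      rw [(hS' s).2 (h2 s.2)]
      simp
    obtain ⟨δ, ⟨hδ, x, hx, x', hx', hxx⟩, hδ'⟩ := hex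
    refine ih _ (lt_of_lt_of_le ?_ hn) S' le_rfl hJ'
    apply Set.ncard_lt_ncard _ (Set.toFinite _)
    refine ⟨?_, ?_⟩
    · rintro ⟨a, b⟩ ⟨s, hs, h⟩
      exact ⟨s, hS (hle hs), h⟩
    · intro h
      obtain ⟨s, hs, h1⟩ := h (show ((⟨x, hx⟩, ⟨x', hx'⟩) : F × F) ∈ _ from ⟨δ, hδ, hxx⟩)
      apply hδ'
      have h2 : (s⁻¹ * δ) • x = x := by
        simp only at h1
        rw [mul_smul, ← hxx, h1, inv_smul_smul]
      have h3 := hX _ _ h2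
      rw [inv_mul_eq_one] at h3
      rwa [← h3]

/-- equivariant systems with solvable augmentation are solvable -/
theorem cons_surj (hΓ : RC Γ) (hX : ∀ (g : Γ) (x : X), g • x = x → g = 1)
    (hY : ∀ (g : Γ) (y : Y), g • y = y → g = 1)
    (τ : X → (Y →₀ ℚ))
    (hτ : ∀ (g : Γ) x (d : Y → ℚ), ((τ (g • x)).sum fun y a => a * d y) =
      (τ x).sum fun y a => a * d (g • y))
    (h0 : ∀ c : X → ℚ, (∀ (δ : Γ) x, c (δ • x) = c x) →
      ∃ d : Y → ℚ, (∀ (δ : Γ) y, d (δ • y) = d y) ∧ ∀ x, ((τ x).sum fun y a => a * d y) = c x)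
    (c : X → ℚ) : ∃ d : Y → ℚ, ∀ x, ((τ x).sum fun y a => a * d y) = c x := by
  classical
  let T : (Y → ℚ) →ₗ[ℚ] (X → ℚ) :=
    { toFun := fun d x => (τ x).sum fun y a => a * d y
      map_add' := by
        intro d e
        funext x
        simp only [Pi.add_apply, mul_add]
        exact Finsupp.sum_add
      map_smul' := by
        intro r d
        funext x
        simp only [Pi.smul_apply, smul_eq_mul, RingHom.id_apply, Finsupp.sum, Finset.mul_sum]
        apply Finset.sum_congr rfl
        intro y _
        ring }
  have hT : ∀ (g : Γ) d x, T (fun y => d (g • y)) x = T d (g • x) := by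
    intro g d x
    exact (hτ g x d).symm
  have hJ : ∀ S, JS T (⊤ : Subgroup Γ) S := by
    intro S c hc
    obtain ⟨d, h1, h2⟩ := h0 c (fun δ x => hc δ trivial x)
    exact ⟨d, fun δ _ => h1 δ, fun x _ => h2 x⟩
  have hM := fun F : Finset X => JS_main hΓ hX hY T hT F _ ⊤ le_rfl (hJ _)
  have hli : LinearIndependent ℚ τ := by
    rw [linearIndependent_iff']
    intro s g hg i hi
    obtain ⟨d, hd⟩ := hM s (fun x => if x = i then 1 else 0)
    let Dl : (Y →₀ ℚ) →ₗ[ℚ] ℚ := Finsupp.lsum ℚ (fun y => (d y) • LinearMap.id)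
    have hDl : ∀ x, Dl (τ x) = T d x := by
      intro x
      simp only [Dl, Finsupp.lsum_apply, T, LinearMap.coe_mk, AddHom.coe_mk]
      apply Finsupp.sum_congr
      intro y _
      simp [mul_comm]
    have h1 := congrArg Dl hg
    rw [map_sum, map_zero] at h1
    have h2 : ∀ x ∈ s, Dl (g x • τ x) = g x * (if x = i then 1 else 0) := by
      intro x hx
      rw [map_smul, hDl, hd x hx, smul_eq_mul]
    rw [Finset.sum_congr rfl h2] at h1
    simpa [hi] using h1
  obtain ⟨Dl, hDl⟩ : ∃ Dl : (Y →₀ ℚ) →ₗ[ℚ] ℚ, ∀ x, Dl (τ x) = c x := by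
    let f := (Module.Basis.span hli).constr ℚ c
    obtain ⟨Dl, hDl⟩ := LinearMap.exists_extend f
    refine ⟨Dl, fun x => ?_⟩
    have h1 : Dl (τ x) = f (Module.Basis.span hli x) := by
      rw [← hDl, LinearMap.comp_apply]
      congr 1
      exact (congrArg Subtype.val (Module.Basis.span_apply hli x)).symm
    rw [h1]
    exact Module.Basis.constr_basis _ _ _ _
  refine ⟨fun y => Dl (Finsupp.single y 1), fun x => ?_⟩
  rw [← hDl x]
  conv_rhs => rw [← Finsupp.sum_single (τ x)]
  rw [map_finsuppSum]
  apply Finsupp.sum_congr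
  intro y _
  rw [← smul_eq_mul, ← map_smul]
  simp

end cons
end FA


namespace FA

/-- right translation set -/
@[ext] structure RT (J Γ : Type) where
  j : J
  g : Γ

instance {J Γ : Type} [Group Γ] : MulAction Γ (RT J Γ) where
  smul g x := ⟨x.j, x.g * g⁻¹⟩
  one_smul := by
    intro x
    change (⟨x.j, x.g * 1⁻¹⟩ : RT J Γ) = x
    simp
  mul_smul := by
    intro a b x
    change (⟨x.j, x.g * (a * b)⁻¹⟩ : RT J Γ) = ⟨x.j, x.g * b⁻¹ * a⁻¹⟩
    simp [mul_assoc]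

theorem RT.smul_def {J Γ : Type} [Group Γ] (g : Γ) (x : RT J Γ) :
    g • x = ⟨x.j, x.g * g⁻¹⟩ := rfl

theorem coprod_gen {H X : Type} [Group H] (Q : Subgroup (Monoid.Coprod H (FreeGroup X)))
    (h1 : ∀ h, Monoid.Coprod.inl h ∈ Q) (h2 : ∀ x, Monoid.Coprod.inr (FreeGroup.of x) ∈ Q)
    (π : Monoid.Coprod H (FreeGroup X)) : π ∈ Q := by
  have h3 : ∀ w : FreeGroup X, (Monoid.Coprod.inr w : Monoid.Coprod H (FreeGroup X)) ∈ Q := by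
    intro w
    induction w using FreeGroup.induction_on with
    | C1 => rw [map_one]; exact Q.one_mem
    | of x => exact h2 x
    | inv_of x hx => rw [map_inv]; exact Q.inv_mem hx
    | mul x y hx hy => rw [map_mul]; exact Q.mul_mem hx hy
  induction π using Monoid.Coprod.induction_on with
  | inl h => exact h1 h
  | inr w => exact h3 w
  | mul x y hx hy => exact Q.mul_mem hx hy

theorem NS_aux {H X J Γ : Type} [Group H] [Fintype J] [DecidableEq J] [Group Γ] (hΓ : RC Γ)
    (s : J → Monoid.Coprod H (FreeGroup X)) (l : J → X → ℚ)
    (hl : ∀ i j, Multiplicative.toAdd (Monoid.Coprod.lift (1 : H →* Multiplicative ℚ)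
      (FreeGroup.lift (fun x => Multiplicative.ofAdd (l j x))) (s i)) = if i = j then 1 else 0)
    (q : Monoid.Coprod H (FreeGroup X) →* Γ) (hq : ∀ i, q (s i) = 1)
    (f0 : H →* Wr Γ Γ) (hf0g : ∀ h, (f0 h).g = q (Monoid.Coprod.inl h)) :
    ∃ F : Monoid.Coprod H (FreeGroup X) →* Wr Γ Γ, (∀ i, F (s i) = 1) ∧
      ∀ h, F (Monoid.Coprod.inl h) = f0 h := by
  classical
  let e : J → Monoid.Coprod H (FreeGroup X) →* Multiplicative ℚ := fun j => Monoid.Coprod.lift (1 : H →* Multiplicative ℚ)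
      (FreeGroup.lift (fun x => Multiplicative.ofAdd (l j x)))
  let Fc : (RT J Γ → ℚ) → Monoid.Coprod H (FreeGroup X) →* Wr Γ Γ := fun c => Monoid.Coprod.lift f0
    (FreeGroup.lift (fun x => ⟨fun γ => ∑ j, l j x * c ⟨j, γ⟩, q (Monoid.Coprod.inr (FreeGroup.of x))⟩))
  have Fc_inl : ∀ c h, Fc c (Monoid.Coprod.inl h) = f0 h := by
    intro c h
    simp only [Fc, Monoid.Coprod.lift_apply_inl]
  have Fc_inr : ∀ c x, Fc c (Monoid.Coprod.inr (FreeGroup.of x)) =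
      ⟨fun γ => ∑ j, l j x * c ⟨j, γ⟩, q (Monoid.Coprod.inr (FreeGroup.of x))⟩ := by
    intro c x
    simp only [Fc, Monoid.Coprod.lift_apply_inr, FreeGroup.lift_apply_of]
  have Fg : ∀ c π, (Fc c π).g = q π := by
    intro c π
    have h1 := coprod_gen (((Wr.proj.comp (Fc c)).eqLocus q))
      (by
        intro h
        change (Fc c (Monoid.Coprod.inl h)).g = _
        rw [Fc_inl, hf0g])
      (by
        intro x
        change (Fc c (Monoid.Coprod.inr (FreeGroup.of x))).g = _
        rw [Fc_inr]) π
    exact h1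
  obtain ⟨DF, hDF⟩ : ∃ DF : (RT J Γ → ℚ) → Monoid.Coprod H (FreeGroup X) → Γ → ℚ,
      ∀ c π γ, DF c π γ = (Fc c π).c γ - (Fc 0 π).c γ := ⟨_, fun _ _ _ => rfl⟩
  have DF_mul : ∀ c π ρ γ, DF c (π * ρ) γ = DF c π γ + DF c ρ ((q π)⁻¹ * γ) := by
    intro c π ρ γ
    simp only [hDF, map_mul, Wr.mul_c, Fg, smul_eq_mul]
    ring
  have DF_one : ∀ c γ, DF c 1 γ = 0 := by
    intro c γ
    simp only [hDF, map_one, sub_self]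
  have DF_inv : ∀ c π γ, DF c π⁻¹ γ = - DF c π (q π * γ) := by
    intro c π γ
    have := DF_mul c π π⁻¹ (q π * γ)
    rw [mul_inv_cancel, DF_one] at this
    simp at this
    linarith
  have DF_inl : ∀ c h γ, DF c (Monoid.Coprod.inl h) γ = 0 := by
    intro c h γ
    simp only [hDF, Fc_inl, sub_self]
  have DF_inr : ∀ c x γ, DF c (Monoid.Coprod.inr (FreeGroup.of x)) γ = ∑ j, l j x * c ⟨j, γ⟩ := by
    intro c x γ
    simp only [hDF, Fc_inr]
    simp
  have fin : ∀ π γ, ∃ τ : RT J Γ →₀ ℚ, ∀ c, DF c π γ = τ.sum fun y a => a * c y := by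
    intro π
    let Q : Subgroup (Monoid.Coprod H (FreeGroup X)) :=
      { carrier := {π | ∀ γ, ∃ τ : RT J Γ →₀ ℚ, ∀ c, DF c π γ = τ.sum fun y a => a * c y}
        one_mem' := by
          intro γ
          exact ⟨0, fun c => by rw [DF_one]; simp⟩
        mul_mem' := by
          intro a b ha hb γ
          obtain ⟨t1, h1⟩ := ha γ
          obtain ⟨t2, h2⟩ := hb ((q a)⁻¹ * γ)
          refine ⟨t1 + t2, fun c => ?_⟩
          rw [DF_mul, h1, h2, Finsupp.sum_add_index']
          · simp
          · intros; ring
        inv_mem' := by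
          intro a ha γ
          obtain ⟨t1, h1⟩ := ha (q a * γ)
          refine ⟨-t1, fun c => ?_⟩
          rw [DF_inv, h1, Finsupp.sum_neg_index (by simp)]
          simp [Finsupp.sum] }
    refine coprod_gen Q ?_ ?_ π
    · intro h γ
      exact ⟨0, fun c => by rw [DF_inl]; simp⟩
    · intro x γ
      refine ⟨∑ j, Finsupp.single ⟨j, γ⟩ (l j x), fun c => ?_⟩
      rw [DF_inr, ← Finsupp.sum_finsetSum_index (by simp) (by intros; ring)]
      apply Finset.sum_congr rfl
      intro j _
      rw [Finsupp.sum_single_index (by simp)]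
  have eqv : ∀ π (g : Γ) c γ, DF (fun y => c (g • y)) π γ = DF c π (γ * g⁻¹) := by
    intro π g
    let Q : Subgroup (Monoid.Coprod H (FreeGroup X)) :=
      { carrier := {π | ∀ c γ, DF (fun y => c (g • y)) π γ = DF c π (γ * g⁻¹)}
        one_mem' := by
          intro c γ
          rw [DF_one, DF_one]
        mul_mem' := by
          intro a b ha hb c γ
          rw [DF_mul, ha, hb, DF_mul, mul_assoc]
        inv_mem' := by
          intro a ha c γ
          rw [DF_inv, ha, DF_inv, mul_assoc] }
    refine coprod_gen Q ?_ ?_ π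
    · intro h c γ
      rw [DF_inl, DF_inl]
    · intro x c γ
      rw [DF_inr, DF_inr]
      rfl
  have aug : ∀ π (k : J → ℚ) γ, DF (fun y => k y.j) π γ = ∑ j, k j * Multiplicative.toAdd (e j π) := by
    intro π k
    let Q : Subgroup (Monoid.Coprod H (FreeGroup X)) :=
      { carrier := {π | ∀ γ, DF (fun y => k y.j) π γ = ∑ j, k j * Multiplicative.toAdd (e j π)}
        one_mem' := by
          intro γ
          rw [DF_one]
          simp
        mul_mem' := by
          intro a b ha hb γ
          rw [DF_mul, ha, hb, ← Finset.sum_add_distrib]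
          apply Finset.sum_congr rfl
          intro j _
          rw [map_mul, toAdd_mul]
          ring
        inv_mem' := by
          intro a ha γ
          rw [DF_inv, ha, ← Finset.sum_neg_distrib]
          apply Finset.sum_congr rfl
          intro j _
          rw [map_inv, toAdd_inv]
          ring }
    refine coprod_gen Q ?_ ?_ π
    · intro h γ
      rw [DF_inl]
      simp [e]
    · intro x γ
      rw [DF_inr]
      apply Finset.sum_congr rfl
      intro j _
      simp [e, mul_comm]
  choose τ hτ using fun x : RT J Γ => fin (s x.j) x.g
  have hfree : ∀ (g : Γ) (x : RT J Γ), g • x = x → g = 1 := by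
    intro g x h
    have := congrArg RT.g h
    rw [RT.smul_def] at this
    simpa using this
  obtain ⟨d, hd⟩ := cons_surj hΓ hfree hfree τ
    (by
      intro g x d
      rw [← hτ, ← hτ x (fun y => d (g • y)), eqv]
      rfl)
    (by
      intro c hc
      refine ⟨fun y => c ⟨y.j, 1⟩, fun δ y => rfl, fun x => ?_⟩
      rw [← hτ, aug (s x.j) (fun j => c ⟨j, 1⟩)]
      rw [Finset.sum_congr rfl (fun j _ => by rw [hl x.j j])]
      simp only [mul_ite, mul_one, mul_zero, Finset.sum_ite_eq, Finset.mem_univ, if_true]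
      have := hc x.g x
      rw [RT.smul_def] at this
      simpa using this)
    (fun x => - (Fc 0 (s x.j)).c x.g)
  have hkill : ∀ i, Fc d (s i) = 1 := by
    intro i
    ext γ
    · have := hd ⟨i, γ⟩
      rw [← hτ] at this
      simp only [hDF] at this
      rw [Wr.one_c]
      linarith
    · rw [Fg, Wr.one_g]
      exact hq i
  exact ⟨Fc d, hkill, Fc_inl d⟩

/-- nonsingular systems over RC groups -/
theorem NS {H X J : Type} [Group H] [Fintype J] [DecidableEq J] (hH : RC H)
    (s : J → Monoid.Coprod H (FreeGroup X)) (l : J → X → ℚ)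
    (hl : ∀ i j, Multiplicative.toAdd (Monoid.Coprod.lift (1 : H →* Multiplicative ℚ)
      (FreeGroup.lift (fun x => Multiplicative.ofAdd (l j x))) (s i)) = if i = j then 1 else 0) :
    ∃ (P : Type) (_ : Group P) (f : Monoid.Coprod H (FreeGroup X) →* P),
      (∀ i, f (s i) = 1) ∧ Function.Injective (f.comp Monoid.Coprod.inl) := by
  classical
  have hΓ := RC_dq (Set.range s)
  have hq : ∀ i, QuotientGroup.mk' (dq (Set.range s)) (s i) = 1 := by
    intro i
    exact (QuotientGroup.eq_one_iff _).2 (mem_dq_of_mem ⟨i, rfl⟩)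
  refine ⟨_, inferInstance, QuotientGroup.mk' (dq (Set.range s)), hq, ?_⟩
  rw [← MonoidHom.ker_eq_bot_iff]
  by_contra hne
  obtain ⟨η, hη⟩ := hH _ hne
  obtain ⟨f0, hf0g, hf0c⟩ := kk _ η
  obtain ⟨F, hF1, hF2⟩ := NS_aux hΓ s l hl _ hq f0 hf0g
  apply hη
  ext ⟨h, hh⟩
  have h1 : Monoid.Coprod.inl h ∈ dq (Set.range s) := (QuotientGroup.eq_one_iff _).1 hh
  have h2 := h1 _ _ F (Wr.rc hΓ) (by rintro _ ⟨i, rfl⟩; exact hF1 i)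
  rw [hF2] at h2
  have h3 := hf0c ⟨h, hh⟩
  simp only at h3
  rw [h2] at h3
  apply Multiplicative.toAdd.injective
  exact h3.symm

end FA


namespace FA

/-- alternating words -/
def AltW {G : Type} [Group G] (Z : Bool → Subgroup G) : Bool → List G → Prop
  | _, [] => True
  | b, x :: l => x ∈ Z b ∧ x ∉ Z (!b) ∧ AltW Z (!b) l

/-- normal form property -/
def NF {G : Type} [Group G] (Z : Bool → Subgroup G) : Prop :=
  ∀ b l, AltW Z b l → l ≠ [] → l.prod ≠ 1

theorem altW_rep {G : Type} [Group G] (Z : Bool → Subgroup G) (y : G)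
    (hy : y ∈ Z true ⊔ Z false) :
    (∀ b, y ∈ Z b) ∨ ∃ b l, l ≠ [] ∧ AltW Z b l ∧ l.prod = y := by
  classical
  have hboth : ∀ (z : G), (∀ b, z ∈ Z b) → ∀ b l, l ≠ [] → AltW Z b l →
      ∃ l', l' ≠ [] ∧ AltW Z b l' ∧ l'.prod = z * l.prod := by
    intro z hz b l hl h
    match l, hl, h with
    | x :: l', _, h =>
      refine ⟨(z * x) :: l', by simp, ⟨(Z b).mul_mem (hz b) h.1, ?_, h.2.2⟩, by simp [mul_assoc]⟩
      intro h'
      apply h.2.1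
      have := (Z !b).mul_mem ((Z !b).inv_mem (hz !b)) h'
      simpa using this
  have hdich : ∀ (z : G) b, z ∈ Z b → z ∈ Z (!b) → ∀ b, z ∈ Z b := by
    intro z b h1 h2 b'
    cases b <;> cases b' <;> assumption
  have step : ∀ b, ∀ z ∈ Z b, ∀ y,
      ((∀ b, y ∈ Z b) ∨ ∃ b l, l ≠ [] ∧ AltW Z b l ∧ l.prod = y) →
      ((∀ b, z * y ∈ Z b) ∨ ∃ b l, l ≠ [] ∧ AltW Z b l ∧ l.prod = z * y) := by
    intro b z hz y hy
    by_cases hz2 : z ∈ Z (!b)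
    · have hz3 := hdich z b hz hz2
      rcases hy with hy | ⟨b', l, hl, ha, rfl⟩
      · exact Or.inl fun b => (Z b).mul_mem (hz3 b) (hy b)
      · obtain ⟨l', h1, h2, h3⟩ := hboth z hz3 b' l hl ha
        exact Or.inr ⟨b', l', h1, h2, h3⟩
    · rcases hy with hy | ⟨b', l, hl, ha, rfl⟩
      · refine Or.inr ⟨b, [z * y], by simp, ⟨(Z b).mul_mem hz (hy b), ?_, trivial⟩, by simp⟩
        intro h
        apply hz2
        have := (Z !b).mul_mem h ((Z !b).inv_mem (hy !b))
        simpa using this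
      · by_cases hb : b' = b
        · subst hb
          match l, hl, ha with
          | x :: l', _, ha =>
            by_cases h1 : z * x ∈ Z (!b')
            · have h2 := hdich _ b' ((Z b').mul_mem hz ha.1) h1
              by_cases hl' : l' = []
              · subst hl'
                left
                simpa using h2
              · obtain ⟨l'', h3, h4, h5⟩ := hboth _ h2 (!b') l' hl' ha.2.2
                exact Or.inr ⟨_, l'', h3, h4, by rw [h5]; simp [mul_assoc]⟩
            · exact Or.inr ⟨b', (z * x) :: l', by simp,
                ⟨(Z b').mul_mem hz ha.1, h1, ha.2.2⟩, by simp [mul_assoc]⟩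
        · have hb' : b' = !b := by
            cases b <;> cases b' <;> simp_all
          subst hb'
          exact Or.inr ⟨b, z :: l, by simp, ⟨hz, hz2, ha⟩, by simp⟩
  have h1 : Z true ⊔ Z false = Subgroup.closure ((Z true : Set G) ∪ Z false) := by
    rw [Subgroup.closure_union, Subgroup.closure_eq, Subgroup.closure_eq]
  rw [h1] at hy
  induction hy using Subgroup.closure_induction_left with
  | one => exact Or.inl fun b => (Z b).one_mem
  | mul_left x hx y _ ih =>
    rcases hx with hx | hx
    · exact step true x hx y ih
    · exact step false x hx y ih
  | inv_mul_cancel x hx y _ ih =>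
    rcases hx with hx | hx
    · exact step true _ ((Z true).inv_mem hx) y ih
    · exact step false _ ((Z false).inv_mem hx) y ih

theorem PO_fam {Q : Type} [Group Q] {G : Bool → Type} [∀ b, Group (G b)] (φ : ∀ b, Q →* G b)
    (hφ : ∀ b, Function.Injective (φ b)) :
    NF (fun b => (Monoid.PushoutI.of (φ := φ) b).range) := by
  classical
  have hinf := fun b => Monoid.PushoutI.inf_of_range_eq_base_range (φ := φ) hφ
    (i := b) (j := !b) (by cases b <;> simp)
  have key : ∀ l b, AltW (fun b => (Monoid.PushoutI.of (φ := φ) b).range) b l →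
      ∃ w : Monoid.CoprodI.Word G, Monoid.PushoutI.Reduced φ w ∧
        Monoid.PushoutI.ofCoprodI w.prod = l.prod ∧ w.fstIdx ≠ some (!b) ∧ (l ≠ [] → w ≠ .empty) := by
    intro l
    induction l with
    | nil =>
      intro b _
      refine ⟨.empty, ?_, by simp, by simp [Monoid.CoprodI.Word.fstIdx, Monoid.CoprodI.Word.empty], by simp⟩
      intro g hg
      simp [Monoid.CoprodI.Word.empty] at hg
    | cons x l ih =>
      rintro b ⟨⟨m, rfl⟩, h2, h3⟩
      obtain ⟨w, hw1, hw2, hw3, -⟩ := ih _ h3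
      rw [Bool.not_not] at hw3
      have hm : m ∉ (φ b).range := by
        rintro ⟨q, rfl⟩
        apply h2
        refine ⟨φ (!b) q, ?_⟩
        rw [Monoid.PushoutI.of_apply_eq_base, Monoid.PushoutI.of_apply_eq_base]
      have hm1 : m ≠ 1 := by
        rintro rfl
        exact hm (one_mem _)
      refine ⟨Monoid.CoprodI.Word.cons m w hw3 hm1, ?_, ?_, ?_, ?_⟩
      · intro g hg
        simp only [Monoid.CoprodI.Word.cons, List.mem_cons] at hg
        rcases hg with rfl | hg
        · exact hm
        · exact hw1 g hg
      · rw [Monoid.CoprodI.Word.prod_cons, map_mul, hw2, Monoid.PushoutI.ofCoprodI_of]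
        simp
      · rw [Monoid.CoprodI.Word.fstIdx_cons]
        cases b <;> simp
      · intro _ h
        have := congrArg Monoid.CoprodI.Word.toList h
        simp [Monoid.CoprodI.Word.cons, Monoid.CoprodI.Word.empty] at this
  intro b l hl hne h1
  obtain ⟨w, hw1, hw2, -, hw4⟩ := key l b hl
  apply hw4 hne
  apply hw1.eq_empty_of_mem_range hφ
  rw [hw2, h1]
  exact one_mem _

/-- two-element family -/
def GB (X Y : Type) : Bool → Type
  | false => Y
  | true => X

instance {X Y : Type} [hX : Group X] [hY : Group Y] : ∀ b, Group (GB X Y b)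
  | false => hY
  | true => hX

/-- two-element family of maps -/
def GBhom {X Y Q : Type} [Group X] [Group Y] [Group Q] (f : Q →* X) (g : Q →* Y) :
    ∀ b, Q →* GB X Y b
  | false => g
  | true => f

/-- pushouts of groups -/
theorem PO {X Y Q : Type} [Group X] [Group Y] [Group Q] (f : Q →* X) (g : Q →* Y)
    (hf : Function.Injective f) (hg : Function.Injective g) :
    ∃ (P : Type) (_ : Group P) (i : X →* P) (j : Y →* P), Function.Injective i ∧
      Function.Injective j ∧ (∀ q, i (f q) = j (g q)) ∧
      (∀ x y, i x = j y → ∃ q, f q = x ∧ g q = y) ∧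
      NF (fun b : Bool => if b then i.range else j.range) := by
  let φ := GBhom f g
  have hφ : ∀ b, Function.Injective (φ b) := by
    intro b
    cases b
    · exact hg
    · exact hf
  let i : X →* Monoid.PushoutI φ := Monoid.PushoutI.of (φ := φ) true
  let j : Y →* Monoid.PushoutI φ := Monoid.PushoutI.of (φ := φ) false
  have hi : Function.Injective i := Monoid.PushoutI.of_injective hφ true
  have hj : Function.Injective j := Monoid.PushoutI.of_injective hφ false
  have hij : ∀ q, i (f q) = j (g q) := by
    intro q
    have h1 := Monoid.PushoutI.of_apply_eq_base φ true q
    have h2 := Monoid.PushoutI.of_apply_eq_base φ false q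
    exact h1.trans h2.symm
  refine ⟨Monoid.PushoutI φ, inferInstance, i, j, hi, hj, hij, ?_, ?_⟩
  · intro x y h
    have h1 := Monoid.PushoutI.inf_of_range_eq_base_range (φ := φ) hφ
      (i := true) (j := false) (by simp)
    have h2 : i x ∈ (Monoid.PushoutI.of (φ := φ) true).range ⊓
      (Monoid.PushoutI.of (φ := φ) false).range := ⟨⟨x, rfl⟩, ⟨y, h.symm⟩⟩
    rw [h1] at h2
    obtain ⟨q, hq⟩ := h2
    rw [← Monoid.PushoutI.of_apply_eq_base φ true q] at hq
    have h3 : f q = x := hi hq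
    refine ⟨q, h3, hj ?_⟩
    rw [← hij, h3, h]
  · have := PO_fam φ hφ
    convert this using 2 with b
    cases b
    · rfl
    · rfl

end FA


namespace FA

/-- partial homomorphism -/
def HomOn {G P : Type} [Group G] [Group P] (L : Subgroup G) (f : G → P) : Prop :=
  ∀ x ∈ L, ∀ y ∈ L, f (x * y) = f x * f y

/-- trivial kernel on a subgroup -/
def KT {G P : Type} [Group G] [Group P] (L : Subgroup G) (f : G → P) : Prop :=
  ∀ x ∈ L, f x = 1 → x = 1

section
variable {G P : Type} [Group G] [Group P]

theorem HomOn.mono {L M : Subgroup G} {f : G → P} (h : HomOn L f) (hM : M ≤ L) : HomOn M f :=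
  fun x hx y hy => h x (hM hx) y (hM hy)

theorem KT.mono {L M : Subgroup G} {f : G → P} (h : KT L f) (hM : M ≤ L) : KT M f :=
  fun x hx => h x (hM hx)

theorem HomOn.one {L : Subgroup G} {f : G → P} (h : HomOn L f) : f 1 = 1 := by
  have := h 1 L.one_mem 1 L.one_mem
  rw [one_mul] at this
  exact (mul_eq_left.1 this.symm)

theorem HomOn.inv {L : Subgroup G} {f : G → P} (h : HomOn L f) {x : G} (hx : x ∈ L) :
    f x⁻¹ = (f x)⁻¹ := by
  have := h x hx x⁻¹ (L.inv_mem hx)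
  rw [mul_inv_cancel, h.one] at this
  exact (inv_eq_of_mul_eq_one_right this.symm).symm

/-- bundled version -/
def HomOn.hom {L : Subgroup G} {f : G → P} (h : HomOn L f) : L →* P :=
  MonoidHom.mk' (fun x => f x) (fun x y => h x x.2 y y.2)

@[simp] theorem HomOn.hom_apply {L : Subgroup G} {f : G → P} (h : HomOn L f) (x : L) :
    h.hom x = f x := rfl

theorem HomOn.list {L : Subgroup G} {f : G → P} (h : HomOn L f) (l : List G)
    (hl : ∀ x ∈ l, x ∈ L) : f l.prod = (l.map f).prod := by
  induction l with
  | nil => simpa using h.one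
  | cons a l ih =>
    rw [List.prod_cons, List.map_cons, List.prod_cons, h a (hl a (by simp)) _
      (L.list_prod_mem fun x hx => hl x (by simp [hx])), ih fun x hx => hl x (by simp [hx])]

theorem HomOn.inj {L : Subgroup G} {f : G → P} (h : HomOn L f) (hk : KT L f) {x y : G}
    (hx : x ∈ L) (hy : y ∈ L) (hxy : f x = f y) : x = y := by
  have : f (x * y⁻¹) = 1 := by
    rw [h x hx _ (L.inv_mem hy), h.inv hy, hxy, mul_inv_cancel]
  exact mul_inv_eq_one.1 (hk _ (L.mul_mem hx (L.inv_mem hy)) this)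

theorem HomOn.comp {P' : Type} [Group P'] {L : Subgroup G} {f : G → P} (h : HomOn L f)
    (i : P →* P') : HomOn L (fun x => i (f x)) := by
  intro x hx y hy
  simp only [h x hx y hy, map_mul]

theorem HomOn.congr {L : Subgroup G} {f g : G → P} (h : HomOn L f)
    (e : ∀ x ∈ L, g x = f x) : HomOn L g := by
  intro x hx y hy
  rw [e _ (L.mul_mem hx hy), e x hx, e y hy, h x hx y hy]

open Classical in
/-- extension of a homomorphism by a junk value -/
noncomputable def extF {L : Subgroup G} (j : L →* P) : G → P :=
  fun x => if h : x ∈ L then j ⟨x, h⟩ else 1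

theorem extF_apply {L : Subgroup G} (j : L →* P) {x : G} (h : x ∈ L) : extF j x = j ⟨x, h⟩ := by
  simp [extF, h]

theorem extF_hom {L : Subgroup G} (j : L →* P) : HomOn L (extF j) := by
  intro x hx y hy
  rw [extF_apply j hx, extF_apply j hy, extF_apply j (L.mul_mem hx hy), ← map_mul]
  rfl

/-- uniqueness -/
theorem HomOn.ext_closure {f g : G → P} {W : Set G} (hf : HomOn (Subgroup.closure W) f)
    (hg : HomOn (Subgroup.closure W) g) (h : ∀ x ∈ W, f x = g x) :
    ∀ x ∈ Subgroup.closure W, f x = g x := by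
  intro x hx
  induction hx using Subgroup.closure_induction with
  | mem x hx => exact h x hx
  | one => rw [hf.one, hg.one]
  | mul x y hx hy h1 h2 => rw [hf x hx y hy, hg x hx y hy, h1, h2]
  | inv x hx h1 => rw [hf.inv hx, hg.inv hx, h1]

end

/-- the extension property of an amalgam of subgroups -/
def ExtP {G : Type} [Group G] (L N T Q : Subgroup G) : Prop :=
  ∀ (P : Type) [Group P] (f g : G → P), HomOn L f → HomOn N g → (∀ x ∈ Q, f x = g x) →
    ∃ F : G → P, HomOn T F ∧ (∀ x ∈ L, F x = f x) ∧ ∀ x ∈ N, F x = g x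

theorem AMQ {G P : Type} [Group G] [Group P] (L N T Q : Subgroup G) (hLT : L ≤ T) (hNT : N ≤ T)
    (hQL : Q ≤ L) (hQN : Q ≤ N) (hext : ExtP L N T Q) (f : G → P) (hf : HomOn L f) (hfQ : KT Q f) :
    ∃ (P' : Type) (_ : Group P') (F : G → P'), HomOn T F ∧ (∀ x ∈ L, F x = 1 ↔ f x = 1) ∧
      KT N F ∧ ∀ R : Subgroup G, R ≤ L → Q ≤ R → KT R f → KT (R ⊔ N) F := by
  classical
  let fQ : Q →* P := (hf.mono hQL).hom
  obtain ⟨P', _, i, j, hi, hj, hij, hpb, hnf⟩ := PO fQ (Subgroup.inclusion hQN)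
    (by
      intro x y hxy
      exact Subtype.ext ((hf.mono hQL).inj hfQ x.2 y.2 hxy))
    (Subgroup.inclusion_injective hQN)
  obtain ⟨F, hF, hFL, hFN⟩ := hext P' (fun x => i (f x)) (extF j) (hf.comp i) (extF_hom j)
    (by
      intro x hx
      rw [extF_apply j (hQN hx)]
      exact hij ⟨x, hx⟩)
  have hFN' : ∀ x (hx : x ∈ N), F x = j ⟨x, hx⟩ := by
    intro x hx
    rw [hFN x hx, extF_apply j hx]
  have hKN : KT N F := by
    intro x hx h
    rw [hFN' x hx, ← map_one j] at h
    exact congrArg Subtype.val (hj h)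
  refine ⟨P', inferInstance, F, hF, ?_, hKN, ?_⟩
  · intro x hx
    rw [hFL x hx]
    constructor
    · intro h
      exact hi (by rw [h, map_one])
    · intro h
      rw [h, map_one]
  · intro R hRL hQR hR x hx h1
    have hRN : R ⊔ N ≤ T := sup_le (hRL.trans hLT) hNT
    rcases altW_rep (fun b : Bool => if b then R else N) x (by simpa using hx) with h2 | ⟨b, l, h2, h3, h4⟩
    · exact hKN x (by simpa using h2 false) h1
    · exfalso
      have hall : ∀ l b, AltW (fun b : Bool => if b then R else N) b l → ∀ y ∈ l, y ∈ T := by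
        intro l
        induction l with
        | nil => intro b _ y hy; simp at hy
        | cons a l ih =>
          rintro b ⟨ha, -, hb⟩ y hy
          rcases List.mem_cons.1 hy with rfl | hy
          · cases b
            · exact hNT (by simpa using ha)
            · exact hLT (hRL (by simpa using ha))
          · exact ih _ hb y hy
      have halt : ∀ l b, AltW (fun b : Bool => if b then R else N) b l →
          AltW (fun b : Bool => if b then i.range else j.range) b (l.map F) := by
        intro l
        induction l with
        | nil => intro b _; trivial
        | cons a l ih =>
          rintro b ⟨ha, ha2, hb⟩
          refine ⟨?_, ?_, ih _ hb⟩
          · cases b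
            · have ha' : a ∈ N := by simpa using ha
              exact ⟨⟨a, ha'⟩, (hFN' a ha').symm⟩
            · have ha' : a ∈ R := by simpa using ha
              exact ⟨f a, (hFL a (hRL ha')).symm⟩
          · cases b
            · have ha' : a ∈ N := by simpa using ha
              have ha3 : a ∉ R := by simpa using ha2
              rintro ⟨p, hp⟩
              rw [hFN' a ha'] at hp
              obtain ⟨q, -, hq⟩ := hpb _ _ hp
              apply ha3
              have : (q : G) = a := congrArg Subtype.val hq
              rw [← this]
              exact hQR q.2
            · have ha' : a ∈ R := by simpa using ha
              have ha3 : a ∉ N := by simpa using ha2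
              rintro ⟨n, hn⟩
              rw [hFL a (hRL ha')] at hn
              obtain ⟨q, hq, hq2⟩ := hpb _ _ hn.symm
              apply ha3
              have : (q : G) = a := (hf.mono hRL).inj hR (hQR q.2) ha' hq
              rw [← this]
              exact hQN q.2
      apply hnf b (l.map F) (halt l b h3) (by simpa using h2)
      rw [← hF.list l (hall l b h3), h4, h1]

end FA


namespace FA

/-- noncommutative partial products -/
def pr {G : Type} [Group G] (g : ℕ → G) : ℕ → G
  | 0 => 1
  | n + 1 => pr g n * g n

theorem pr_congr {G : Type} [Group G] {g h : ℕ → G} {n : ℕ} (e : ∀ k < n, g k = h k) :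
    pr g n = pr h n := by
  induction n with
  | zero => rfl
  | succ n ih => simp only [pr]; rw [ih fun k hk => e k (by omega), e n (by omega)]

theorem pr_mem {G : Type} [Group G] {g : ℕ → G} {n : ℕ} (L : Subgroup G)
    (e : ∀ k < n, g k ∈ L) : pr g n ∈ L := by
  induction n with
  | zero => exact L.one_mem
  | succ n ih => exact L.mul_mem (ih fun k hk => e k (by omega)) (e n (by omega))

/-- tree-like systems of free groups amalgamated along isolated cyclic subgroups -/
structure IsSys {ι G : Type} [Group G] (adj : ι → ι → Prop) (B : ι → Subgroup G) : Prop where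
  symm : ∀ a b, adj a b → adj b a
  rank : ∀ r, ∃ d : ι → ℕ, d r = 0 ∧ (∀ a b, adj a b → d a = d b + 1 ∨ d b = d a + 1) ∧
    ∀ a b b', adj a b → adj a b' → d b < d a → d b' < d a → b = b'
  W : ∀ (n : ℕ) (v : ℕ → ι) (g : ℕ → G), 1 ≤ n → (∀ k < n, adj (v k) (v (k + 1))) →
    (∀ k < n, g k ∈ B (v k)) → (∀ k, k + 2 ≤ n → v k = v (k + 2) → g (k + 1) ∉ B (v k)) →
    v n = v 0 → pr g n ∉ B (v 0)
  free : ∀ i, IsFreeGroup (B i)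
  cyc : ∀ i j, adj i j → ∃ u, u ≠ 1 ∧ B i ⊓ B j = Subgroup.zpowers u
  iso : ∀ i j, adj i j → ∀ b ∈ B i, ∀ n : ℤ, n ≠ 0 → b ^ n ∈ B j → b ∈ B j

theorem free_of_le {G : Type} [Group G] {A B : Subgroup G} (h : A ≤ B) (hB : IsFreeGroup B) :
    IsFreeGroup A := by
  have : IsFreeGroup (A.subgroupOf B) := inferInstance
  exact IsFreeGroup.ofMulEquiv (Subgroup.subgroupOfEquivOfLe h)

theorem IsSys.restrict {ι G : Type} [Group G] {adj : ι → ι → Prop} {B : ι → Subgroup G}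
    (h : IsSys adj B) (adj' : ι → ι → Prop) (B' : ι → Subgroup G)
    (h1 : ∀ a b, adj' a b → adj a b) (h2 : ∀ a b, adj' a b → adj' b a)
    (h3 : ∀ i, B' i ≤ B i) (h4 : ∀ i j, adj' i j → B i ⊓ B j ≤ B' i) : IsSys adj' B' where
  symm := h2
  rank := by
    intro r
    obtain ⟨d, h5, h6, h7⟩ := h.rank r
    exact ⟨d, h5, fun a b hab => h6 a b (h1 a b hab),
      fun a b b' hb hb' => h7 a b b' (h1 _ _ hb) (h1 _ _ hb')⟩
  W := by
    intro n v g hn hadj hg hred hv hmem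
    refine h.W n v g hn (fun k hk => h1 _ _ (hadj k hk)) (fun k hk => h3 _ (hg k hk)) ?_ hv
      (h3 _ hmem)
    intro k hk hvk hmem'
    exact hred k hk hvk (h4 _ _ (hadj k (by omega)) ⟨hmem', h3 _ (hg (k + 1) (by omega))⟩)
  free := fun i => free_of_le (h3 i) (h.free i)
  cyc := by
    intro i j hij
    obtain ⟨u, hu, he⟩ := h.cyc i j (h1 _ _ hij)
    refine ⟨u, hu, ?_⟩
    rw [← he]
    apply le_antisymm
    · exact inf_le_inf (h3 i) (h3 j)
    · apply le_inf (h4 i j hij)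
      rw [inf_comm]
      exact h4 j i (h2 _ _ hij)
  iso := by
    intro i j hij b hb n hn hbn
    have h5 := h.iso i j (h1 _ _ hij) b (h3 _ hb) n hn (h3 _ hbn)
    exact h4 j i (h2 _ _ hij) ⟨h5, h3 _ hb⟩

/-- subgroup generated by the vertex groups of a set -/
def GS {ι G : Type} [Group G] (B : ι → Subgroup G) (S : Set ι) : Subgroup G :=
  Subgroup.closure {x | ∃ v ∈ S, x ∈ B v}

theorem le_GS {ι G : Type} [Group G] (B : ι → Subgroup G) {S : Set ι} {v : ι} (hv : v ∈ S) :
    B v ≤ GS B S := fun x hx => Subgroup.subset_closure ⟨v, hv, hx⟩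

theorem GS_mono {ι G : Type} [Group G] (B : ι → Subgroup G) {S S' : Set ι} (h : S ⊆ S') :
    GS B S ≤ GS B S' := Subgroup.closure_mono (fun _ ⟨v, hv, hx⟩ => ⟨v, h hv, hx⟩)

theorem GS_le {ι G : Type} [Group G] {B : ι → Subgroup G} {S : Set ι} {L : Subgroup G}
    (h : ∀ v ∈ S, B v ≤ L) : GS B S ≤ L :=
  (Subgroup.closure_le _).2 (fun _ ⟨v, hv, hx⟩ => h v hv hx)

/-- connected rooted sets -/
def CR {ι : Type} (adj : ι → ι → Prop) (d : ι → ℕ) (r : ι) (S : Set ι) : Prop :=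
  r ∈ S ∧ ∀ c ∈ S, c ≠ r → ∃ b ∈ S, adj c b ∧ d b < d c

section extend
variable {ι G P : Type} [Group G] [Group P] {adj : ι → ι → Prop} {B : ι → Subgroup G}

theorem extend_red (h : IsSys adj B) {S : Set ι} (f : ι → G → P) (hf : ∀ v ∈ S, HomOn (B v) (f v))
    (hag : ∀ a ∈ S, ∀ b ∈ S, adj a b → ∀ x, x ∈ B a → x ∈ B b → f a x = f b x) (n : ℕ) :
    ∀ (v : ℕ → ι) (g : ℕ → G), (∀ k < n, adj (v k) (v (k + 1))) →
      (∀ k ≤ n, v k ∈ S ∧ g k ∈ B (v k)) → v n = v 0 →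
      pr g (n + 1) = 1 → pr (fun k => f (v k) (g k)) (n + 1) = 1 := by
  induction n using Nat.strong_induction_on with
  | _ n ih =>
  intro v g hadj hg hv h1
  rcases Nat.eq_zero_or_pos n with rfl | hn
  · simp only [pr, one_mul] at h1 ⊢
    rw [h1, (hf _ (hg 0 le_rfl).1).one]
  by_cases hred : ∀ k, k + 2 ≤ n → v k = v (k + 2) → g (k + 1) ∉ B (v k)
  · exfalso
    apply h.W n v g hn hadj (fun k hk => (hg k hk.le).2) hred hv
    simp only [pr] at h1
    rw [eq_inv_of_mul_eq_one_left h1, ← hv]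
    exact (B _).inv_mem (hg n le_rfl).2
  push Not at hred
  obtain ⟨k, hk, hvk, hgk⟩ := hred
  let v' : ℕ → ι := fun j => if j ≤ k then v j else v (j + 2)
  let g' : ℕ → G := fun j => if j < k then g j else if j = k then g k * g (k + 1) * g (k + 2)
    else g (j + 2)
  have hpr : ∀ {K : Type} [Group K] (a b : ℕ → K), (∀ j < k, b j = a j) →
      b k = a k * a (k + 1) * a (k + 2) → (∀ j, k < j → j ≤ n - 2 → b j = a (j + 2)) →
      pr b (n - 2 + 1) = pr a (n + 1) := by
    intro K _ a b h1 h2 h3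
    have h4 : ∀ m, k + m ≤ n - 2 → pr b (k + m + 1) = pr a (k + m + 3) := by
      intro m
      induction m with
      | zero =>
        intro _
        simp only [add_zero, pr]
        rw [pr_congr h1, h2]
        simp only [mul_assoc]
      | succ m ihm =>
        intro hm
        change pr b (k + m + 1) * b (k + m + 1) = pr a (k + m + 3) * a (k + m + 3)
        rw [ihm (by omega), h3 (k + m + 1) (by omega) (by omega)]
    obtain ⟨m, hm⟩ : ∃ m, n - 2 = k + m := ⟨n - 2 - k, by omega⟩
    have h5 := h4 m (by omega)
    have h6 : n + 1 = k + m + 3 := by omega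
    rw [hm, h5, h6]
  have hprod : pr g' (n - 2 + 1) = pr g (n + 1) := by
    apply hpr
    · intro j hj
      simp only [g', if_pos hj]
    · simp only [g', lt_irrefl, if_false, if_true]
    · intro j hj _
      simp only [g', if_neg (by omega : ¬ j < k), if_neg (by omega : ¬ j = k)]
  have hS := fun j (hj : j ≤ n) => (hg j hj).1
  have hB := fun j (hj : j ≤ n) => (hg j hj).2
  have hgk2 : g (k + 2) ∈ B (v k) := by rw [hvk]; exact hB (k + 2) hk
  have hfprod : pr (fun j => f (v' j) (g' j)) (n - 2 + 1) = pr (fun j => f (v j) (g j)) (n + 1) := by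
    apply hpr
    · intro j hj
      simp only [g', v', if_pos hj, if_pos hj.le]
    · simp only [g', v', lt_irrefl, if_false, if_true, le_refl]
      have hh := hf (v k) (hS k (by omega))
      rw [hh _ ((B _).mul_mem (hB k (by omega)) hgk) _ hgk2, hh _ (hB k (by omega)) _ hgk]
      rw [hag (v k) (hS k (by omega)) (v (k + 1)) (hS _ (by omega)) (hadj k (by omega)) _ hgk
        (hB _ (by omega)), ← hvk]
    · intro j hj _
      simp only [g', v', if_neg (by omega : ¬ j < k), if_neg (by omega : ¬ j = k),
        if_neg (by omega : ¬ j ≤ k)]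
  rw [← hfprod]
  apply ih (n - 2) (by omega) v' g'
  · intro j hj
    rcases lt_trichotomy j k with hjk | hjk | hjk
    · simp only [v', if_pos (by omega : j ≤ k), if_pos (by omega : j + 1 ≤ k)]
      exact hadj j (by omega)
    · subst hjk
      simp only [v', if_pos (le_refl j), if_neg (by omega : ¬ j + 1 ≤ j)]
      rw [hvk]
      exact hadj (j + 2) (by omega)
    · simp only [v', if_neg (by omega : ¬ j ≤ k), if_neg (by omega : ¬ j + 1 ≤ k)]
      exact hadj (j + 2) (by omega)
  · intro j hj
    rcases lt_trichotomy j k with hjk | hjk | hjk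
    · simp only [v', g', if_pos (by omega : j ≤ k), if_pos hjk]
      exact hg j (by omega)
    · subst hjk
      simp only [v', g', if_pos (le_refl j), lt_irrefl, if_false, if_true]
      exact ⟨hS j (by omega), (B _).mul_mem ((B _).mul_mem (hB j (by omega)) hgk) hgk2⟩
    · simp only [v', g', if_neg (by omega : ¬ j ≤ k), if_neg (by omega : ¬ j < k),
        if_neg (by omega : ¬ j = k)]
      exact hg (j + 2) (by omega)
  · simp only [v', if_pos (Nat.zero_le k)]
    by_cases h2 : n - 2 ≤ k
    · rw [if_pos h2]
      have : n = k + 2 := by omega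
      subst this
      simp only [Nat.add_sub_cancel]
      rw [hvk, hv]
    · rw [if_neg h2, ← hv]
      congr 1
      omega
  · rw [hprod, h1]

theorem EXTEND (h : IsSys adj B) {S : Set ι} {d : ι → ℕ} {r : ι} (hS : CR adj d r S)
    (f : ι → G → P) (hf : ∀ v ∈ S, HomOn (B v) (f v))
    (hag : ∀ a ∈ S, ∀ b ∈ S, adj a b → ∀ x, x ∈ B a → x ∈ B b → f a x = f b x) :
    ∃ F : G → P, HomOn (GS B S) F ∧ ∀ v ∈ S, ∀ x ∈ B v, F x = f v x := by
  classical
  let M : ι → Set (G × P) := fun w => {z | ∃ (n : ℕ) (v : ℕ → ι) (g : ℕ → G),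
    (∀ k < n, adj (v k) (v (k + 1))) ∧ (∀ k ≤ n, v k ∈ S ∧ g k ∈ B (v k)) ∧ v 0 = r ∧ v n = w ∧
    z.1 = pr g (n + 1) ∧ z.2 = pr (fun k => f (v k) (g k)) (n + 1)}
  have hM1 : (1 : G × P) ∈ M r := by
    refine ⟨0, fun _ => r, fun _ => 1, by simp, ?_, rfl, rfl, ?_, ?_⟩
    · intro k _
      exact ⟨hS.1, one_mem _⟩
    · simp [pr]
    · simp [pr, (hf r hS.1).one]
  have hMmul : ∀ w, ∀ z ∈ M w, ∀ b ∈ B w, z * (b, f w b) ∈ M w := by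
    rintro w z ⟨n, v, g, h1, h2, h3, rfl, h5, h6⟩ b hb
    have hng : ∀ k < n, Function.update g n (g n * b) k = g k := by
      intro k hk
      rw [Function.update_of_ne (by omega)]
    refine ⟨n, v, Function.update g n (g n * b), h1, ?_, h3, rfl, ?_, ?_⟩
    · intro k hk
      rcases hk.lt_or_eq with hk | rfl
      · rw [hng k hk]
        exact h2 k hk.le
      · rw [Function.update_self]
        exact ⟨(h2 k le_rfl).1, (B _).mul_mem (h2 k le_rfl).2 hb⟩
    · simp only [Prod.fst_mul, h5, pr, Function.update_self]
      rw [pr_congr hng, mul_assoc]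
    · simp only [Prod.snd_mul, h6, pr, Function.update_self]
      rw [hf (v n) (h2 n le_rfl).1 _ (h2 n le_rfl).2 _ hb, ← mul_assoc]
      congr 2
      apply pr_congr
      intro k hk
      rw [hng k hk]
  have hMadj : ∀ w w', adj w w' → w' ∈ S → M w ⊆ M w' := by
    rintro w w' hww hw' z ⟨n, v, g, h1, h2, h3, rfl, h5, h6⟩
    have hvn : ∀ k ≤ n, Function.update v (n + 1) w' k = v k := by
      intro k hk
      rw [Function.update_of_ne (by omega)]
    have hgn : ∀ k ≤ n, Function.update g (n + 1) 1 k = g k := by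
      intro k hk
      rw [Function.update_of_ne (by omega)]
    refine ⟨n + 1, Function.update v (n + 1) w', Function.update g (n + 1) 1, ?_, ?_, ?_, ?_, ?_, ?_⟩
    · intro k hk
      rcases (Nat.lt_succ_iff.1 hk).lt_or_eq with hk | rfl
      · rw [hvn k hk.le, hvn (k + 1) hk]
        exact h1 k hk
      · rw [hvn k le_rfl, Function.update_self]
        exact hww
    · intro k hk
      rcases hk.lt_or_eq with hk | rfl
      · rw [hvn k (by omega), hgn k (by omega)]
        exact h2 k (by omega)
      · rw [Function.update_self, Function.update_self]
        exact ⟨hw', one_mem _⟩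
    · rw [hvn 0 (by omega), h3]
    · rw [Function.update_self]
    · rw [h5]
      change _ = pr _ (n + 1) * _
      rw [Function.update_self, mul_one]
      apply pr_congr
      intro k hk
      rw [hgn k (by omega)]
    · rw [h6]
      change _ = pr _ (n + 1) * f (Function.update v (n + 1) w' (n + 1))
        (Function.update g (n + 1) 1 (n + 1))
      rw [Function.update_self, Function.update_self, (hf w' hw').one, mul_one]
      apply pr_congr
      intro k hk
      rw [hgn k (by omega), hvn k (by omega)]
  have hMr : ∀ m, ∀ w ∈ S, d w ≤ m → M w ⊆ M r ∧ M r ⊆ M w := by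
    intro m
    induction m with
    | zero =>
      intro w hw hd
      by_cases hwr : w = r
      · subst hwr
        exact ⟨subset_rfl, subset_rfl⟩
      · obtain ⟨b, -, -, hb⟩ := hS.2 w hw hwr
        omega
    | succ m ihm =>
      intro w hw hd
      by_cases hwr : w = r
      · subst hwr
        exact ⟨subset_rfl, subset_rfl⟩
      · obtain ⟨b, hb1, hb2, hb3⟩ := hS.2 w hw hwr
        obtain ⟨h1, h2⟩ := ihm b hb1 (by omega)
        exact ⟨(hMadj w b hb2 hb1).trans h1, h2.trans (hMadj b w (h.symm _ _ hb2) hw)⟩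
  let gens : Set (G × P) := {z | ∃ w ∈ S, ∃ b ∈ B w, z = (b, f w b)}
  let K : Subgroup (G × P) := Subgroup.closure gens
  have hKM : ∀ z ∈ K, z ∈ M r := by
    intro z hz
    induction hz using Subgroup.closure_induction_right with
    | one => exact hM1
    | mul_right x hx y hy ih =>
      obtain ⟨w, hw, b, hb, rfl⟩ := hy
      obtain ⟨h1, h2⟩ := hMr _ w hw le_rfl
      exact h1 (hMmul w _ (h2 ih) b hb)
    | mul_inv_cancel x hx y hy ih =>
      obtain ⟨w, hw, b, hb, rfl⟩ := hy
      obtain ⟨h1, h2⟩ := hMr _ w hw le_rfl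
      have := h1 (hMmul w _ (h2 ih) b⁻¹ ((B w).inv_mem hb))
      rw [(hf w hw).inv hb] at this
      exact this
  have hK1 : ∀ p, ((1 : G), p) ∈ K → p = 1 := by
    intro p hp
    obtain ⟨n, v, g, h1, h2, h3, h4, h5, h6⟩ := hKM _ hp
    simp only at h5 h6
    rw [h6]
    exact extend_red h f hf hag n v g h1 h2 (by rw [h4, h3]) h5.symm
  have hKu : ∀ x p p', (x, p) ∈ K → (x, p') ∈ K → p = p' := by
    intro x p p' h1 h2
    have := K.mul_mem (K.inv_mem h1) h2
    have h3 := hK1 (p⁻¹ * p') (by simpa using this)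
    exact inv_mul_eq_one.1 h3
  have hKe : ∀ x ∈ GS B S, ∃ p, (x, p) ∈ K := by
    intro x hx
    induction hx using Subgroup.closure_induction with
    | mem x hx =>
      obtain ⟨v, hv, hx⟩ := hx
      exact ⟨f v x, Subgroup.subset_closure ⟨v, hv, x, hx, rfl⟩⟩
    | one => exact ⟨1, K.one_mem⟩
    | mul x y _ _ h1 h2 =>
      obtain ⟨p, hp⟩ := h1
      obtain ⟨q, hq⟩ := h2
      exact ⟨p * q, K.mul_mem hp hq⟩
    | inv x _ h1 =>
      obtain ⟨p, hp⟩ := h1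
      exact ⟨p⁻¹, K.inv_mem hp⟩
  let F : G → P := fun x => if e : ∃ p, (x, p) ∈ K then e.choose else 1
  have hF : ∀ x p, (x, p) ∈ K → F x = p := by
    intro x p hp
    have e : ∃ p, (x, p) ∈ K := ⟨p, hp⟩
    simp only [F]
    rw [dif_pos e]
    exact hKu x _ _ e.choose_spec hp
  refine ⟨F, ?_, ?_⟩
  · intro x hx y hy
    obtain ⟨p, hp⟩ := hKe x hx
    obtain ⟨q, hq⟩ := hKe y hy
    rw [hF x p hp, hF y q hq]
    exact hF _ _ (K.mul_mem hp hq)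
  · intro v hv x hx
    exact hF _ _ (Subgroup.subset_closure ⟨v, hv, x, hx, rfl⟩)

end extend
end FA


namespace FA

section addsec
variable {ι G : Type} [Group G] {adj : ι → ι → Prop} {B : ι → Subgroup G}

theorem ExtP_add (h : IsSys adj B) {d : ι → ℕ} {r : ι}
    (hd : ∀ a b, adj a b → d a = d b + 1 ∨ d b = d a + 1)
    (hp : ∀ a b b', adj a b → adj a b' → d b < d a → d b' < d a → b = b')
    {Y : Set ι} (hY : CR adj d r Y) {a b : ι} (ha : a ∉ Y) (hb : b ∈ Y) (hab : adj a b)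
    (hdab : d b < d a) : ExtP (GS B Y) (B a) (GS B (insert a Y)) (B a ⊓ B b) := by
  classical
  intro P _ f g hf hg hfg
  have hCR : CR adj d r (insert a Y) := by
    refine ⟨Set.mem_insert_of_mem _ hY.1, ?_⟩
    intro c hc hcr
    rcases hc with rfl | hc
    · exact ⟨b, Set.mem_insert_of_mem _ hb, hab, hdab⟩
    · obtain ⟨b', h1, h2⟩ := hY.2 c hc hcr
      exact ⟨b', Set.mem_insert_of_mem _ h1, h2⟩
  have hnb : ∀ c ∈ Y, adj a c → c = b := by
    intro c hc hac
    rcases hd a c hac with h1 | h1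
    · exact hp a c b hac hab (by omega) hdab
    · exfalso
      by_cases hcr : c = r
      · subst hcr
        have h0 : ∀ n, ∀ y ∈ Y, d y = n → d c ≤ n := by
          intro n
          induction n using Nat.strong_induction_on with
          | _ n ih =>
          intro y hy hyn
          by_cases hyc : y = c
          · subst hyc; omega
          · obtain ⟨z, hz, _, hz2⟩ := hY.2 y hy hyc
            have := ih (d z) (by omega) z hz rfl
            omega
        have := h0 _ b hb rfl
        omega
      · obtain ⟨b', hb', h2, h3⟩ := hY.2 c hc hcr
        have := hp c b' a h2 (h.symm _ _ hac) h3 (by omega)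
        exact ha (this ▸ hb')
  have hne : ∀ c ∈ Y, c ≠ a := fun c hc e => ha (e ▸ hc)
  obtain ⟨F, hF1, hF2⟩ := EXTEND (P := P) h hCR (fun v => if v = a then g else f) (by
      intro v hv
      rcases hv with rfl | hv
      · simpa using hg
      · simp only [if_neg (hne v hv)]
        exact hf.mono (le_GS B hv)) (by
      intro v hv w hw hvw x hx hx'
      rcases hv with rfl | hv
      · rcases hw with rfl | hw
        · rfl
        · simp only [if_neg (hne w hw), if_true]
          have := hnb w hw hvw
          subst this
          exact (hfg x ⟨hx, hx'⟩).symm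
      · rcases hw with rfl | hw
        · simp only [if_neg (hne v hv), if_true]
          have := hnb v hv (h.symm _ _ hvw)
          subst this
          exact (hfg x ⟨hx', hx⟩)
        · simp only [if_neg (hne w hw), if_neg (hne v hv)])
  refine ⟨F, hF1, ?_, ?_⟩
  · have hm : GS B Y ≤ GS B (insert a Y) := GS_mono B (Set.subset_insert _ _)
    apply HomOn.ext_closure (hF1.mono hm) hf
    rintro x ⟨v, hv, hx⟩
    rw [hF2 v (Set.mem_insert_of_mem _ hv) x hx, if_neg (hne v hv)]
  · intro x hx
    rw [hF2 a (Set.mem_insert _ _) x hx, if_pos rfl]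

theorem ExtP_enlarge (h : IsSys adj B) {d : ι → ℕ} {r : ι} {S : Set ι} (hS : CR adj d r S)
    {B' : ι → Subgroup G} {w : ι} (hw : w ∈ S) (hB' : ∀ v, v ≠ w → B' v = B v)
    (hle : B' w ≤ B w) (hadj : ∀ c, adj w c → B w ⊓ B c ≤ B' w) :
    ExtP (GS B' S) (B w) (GS B S) (B' w) := by
  classical
  intro P _ f g hf hg hfg
  obtain ⟨F, hF1, hF2⟩ := EXTEND (P := P) h hS (fun v => if v = w then g else f) (by
      intro v hv
      by_cases hvw : v = w
      · subst hvw; simpa using hg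
      · simp only [if_neg hvw]
        have := hf.mono (le_GS B' hv)
        rwa [hB' v hvw] at this) (by
      intro v hv c hc hvc x hx hx'
      by_cases hvw : v = w
      · subst hvw
        by_cases hcv : c = v
        · simp [hcv]
        · simp only [if_neg hcv, if_true]
          exact (hfg x (hadj c hvc ⟨hx, hx'⟩)).symm
      · by_cases hcw : c = w
        · subst hcw
          simp only [if_neg hvw, if_true]
          exact (hfg x (hadj v (h.symm _ _ hvc) ⟨hx', hx⟩))
        · simp only [if_neg hvw, if_neg hcw])
  have hle' : ∀ v, B' v ≤ B v := by
    intro v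
    by_cases hvw : v = w
    · rw [hvw]; exact hle
    · rw [hB' v hvw]
  have hm : GS B' S ≤ GS B S := GS_le fun v hv => (hle' v).trans (le_GS B hv)
  refine ⟨F, hF1, ?_, ?_⟩
  · apply HomOn.ext_closure (hF1.mono hm) hf
    rintro x ⟨v, hv, hx⟩
    rw [hF2 v hv x (hle' v hx)]
    by_cases hvw : v = w
    · rw [if_pos hvw]
      subst hvw
      exact (hfg x hx).symm
    · rw [if_neg hvw]
  · intro x hx
    rw [hF2 w hw x hx, if_pos rfl]

theorem ADD (h : IsSys adj B) {d : ι → ℕ} {r : ι}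
    (hd : ∀ a b, adj a b → d a = d b + 1 ∨ d b = d a + 1)
    (hp : ∀ a b b', adj a b → adj a b' → d b < d a → d b' < d a → b = b')
    {S : Set ι} (hS : CR adj d r S) (Rs : Set (Set ι))
    (hR : ∀ R ∈ Rs, ∀ c ∈ R ∩ S, c ≠ r → ∃ b ∈ R ∩ S, adj c b ∧ d b < d c) (n : ℕ) :
    ∀ (Y : Set ι) (P : Type) [Group P] (f : G → P), CR adj d r Y → Y ⊆ S → (S \ Y).Finite →
      (S \ Y).ncard = n →
      HomOn (GS B Y) f → (∀ v ∈ Y, KT (B v) f) → (∀ R ∈ Rs, KT (GS B (R ∩ Y)) f) →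
      ∃ (P' : Type) (_ : Group P') (F : G → P'), HomOn (GS B S) F ∧
        (∀ x ∈ GS B Y, F x = 1 ↔ f x = 1) ∧ (∀ v ∈ S, KT (B v) F) ∧
        ∀ R ∈ Rs, KT (GS B (R ∩ S)) F := by
  induction n with
  | zero =>
    intro Y P _ f hY hYS hfin hn hf hv hRf
    have : S = Y := by
      rw [Set.ncard_eq_zero hfin] at hn
      exact (Set.diff_eq_empty.1 hn).antisymm hYS
    subst this
    exact ⟨P, inferInstance, f, hf, fun _ _ => Iff.rfl, hv, hRf⟩
  | succ n ih =>
    intro Y P _ f hY hYS hfin hn hf hv hRf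
    have hne : (S \ Y).Nonempty := by
      rw [← Set.ncard_pos hfin]; omega
    obtain ⟨a, ⟨haS, haY⟩, hmin⟩ := hfin.exists_minimalFor d _ hne
    have har : a ≠ r := fun e => haY (e ▸ hY.1)
    obtain ⟨b, hbS, hab, hdab⟩ := hS.2 a haS har
    have hbY : b ∈ Y := by
      by_contra hbY
      have := hmin ⟨hbS, hbY⟩ hdab.le
      omega
    have hCR : CR adj d r (insert a Y) := by
      refine ⟨Set.mem_insert_of_mem _ hY.1, ?_⟩
      intro c hc hcr
      rcases hc with rfl | hc
      · exact ⟨b, Set.mem_insert_of_mem _ hbY, hab, hdab⟩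
      · obtain ⟨b', h1, h2⟩ := hY.2 c hc hcr
        exact ⟨b', Set.mem_insert_of_mem _ h1, h2⟩
    have hm : GS B Y ≤ GS B (insert a Y) := GS_mono B (Set.subset_insert _ _)
    obtain ⟨P1, _, f1, hf1, hf2, hf3, hf4⟩ := AMQ (GS B Y) (B a) (GS B (insert a Y)) (B a ⊓ B b) hm
      (le_GS B (Set.mem_insert _ _)) (inf_le_right.trans (le_GS B hbY)) inf_le_left
      (ExtP_add h hd hp hY haY hbY hab hdab) f hf ((hv b hbY).mono inf_le_right)
    have hdiff : S \ insert a Y = (S \ Y) \ {a} := by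
      ext x; simp only [Set.mem_diff, Set.mem_insert_iff, Set.mem_singleton_iff]; tauto
    have hiff : ∀ L : Subgroup G, L ≤ GS B Y → KT L f → KT L f1 := by
      intro L hL hk x hx h1
      exact hk x hx ((hf2 x (hL hx)).1 h1)
    obtain ⟨P2, _, f2, hg1, hg2, hg3, hg4⟩ := ih (insert a Y) P1 f1 hCR
      (Set.insert_subset haS hYS) (hfin.subset (by rw [hdiff]; exact Set.diff_subset)) (by
        rw [hdiff, Set.ncard_diff_singleton_of_mem (show a ∈ S \ Y from ⟨haS, haY⟩), hn]; rfl) hf1 (by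
        intro v hv'
        rcases hv' with rfl | hv'
        · exact hf3
        · exact hiff _ (le_GS B hv') (hv v hv')) (by
        intro R hRR
        by_cases haR : a ∈ R
        · have hbR : b ∈ R := by
            obtain ⟨b', hb', h1, h2⟩ := hR R hRR a ⟨haR, haS⟩ har
            rw [hp a b b' hab h1 hdab h2]
            exact hb'.1
          refine (hf4 (GS B (R ∩ Y)) (GS_mono B Set.inter_subset_right)
            (inf_le_right.trans (le_GS B ⟨hbR, hbY⟩)) (hRf R hRR)).mono ?_
          apply GS_le
          rintro v ⟨hvR, hvY⟩
          rcases hvY with rfl | hvY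
          · exact le_sup_right
          · exact (le_GS B (⟨hvR, hvY⟩ : v ∈ R ∩ Y)).trans le_sup_left
        · have : R ∩ insert a Y = R ∩ Y := by
            ext x
            simp only [Set.mem_inter_iff, Set.mem_insert_iff]
            constructor
            · rintro ⟨h1, rfl | h2⟩
              · exact absurd h1 haR
              · exact ⟨h1, h2⟩
            · rintro ⟨h1, h2⟩
              exact ⟨h1, Or.inr h2⟩
          rw [this]
          exact hiff _ (GS_mono B Set.inter_subset_right) (hRf R hRR))
    refine ⟨P2, inferInstance, f2, hg1, ?_, hg3, hg4⟩
    intro x hx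
    rw [hg2 x (hm hx), hf2 x hx]

end addsec
end FA


namespace FA

section star
variable {ι G : Type} [Group G]

/-- adjacency of the unfolded system -/
def sadj (adj : ι → ι → Prop) (w : ι) : Option (ι × ℤ) → Option (ι × ℤ) → Prop
  | none, none => False
  | none, some y => adj w y.1
  | some y, none => adj w y.1
  | some y, some y' => adj y.1 y'.1 ∧ y.1 ≠ w ∧ y'.1 ≠ w ∧ y.2 = y'.2

/-- kernel of a partial additive character -/
def kerS (L : Subgroup G) (ψ : G → ℤ) (hψ : ∀ x ∈ L, ∀ y ∈ L, ψ (x * y) = ψ x + ψ y) :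
    Subgroup G where
  carrier := {b | b ∈ L ∧ ψ b = 0}
  mul_mem' := by
    rintro a b ⟨ha, ha'⟩ ⟨hb, hb'⟩
    exact ⟨L.mul_mem ha hb, by rw [hψ a ha b hb, ha', hb', add_zero]⟩
  one_mem' := by
    refine ⟨L.one_mem, ?_⟩
    have := hψ 1 L.one_mem 1 L.one_mem
    rw [one_mul] at this
    omega
  inv_mem' := by
    rintro a ⟨ha, ha'⟩
    refine ⟨L.inv_mem ha, ?_⟩
    have h1 := hψ 1 L.one_mem 1 L.one_mem
    have h2 := hψ a ha a⁻¹ (L.inv_mem ha)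
    rw [one_mul] at h1
    rw [mul_inv_cancel] at h2
    omega

theorem mem_kerS {L : Subgroup G} {ψ : G → ℤ} {hψ : ∀ x ∈ L, ∀ y ∈ L, ψ (x * y) = ψ x + ψ y}
    {b : G} : b ∈ kerS L ψ hψ ↔ b ∈ L ∧ ψ b = 0 := Iff.rfl

theorem psi_one {L : Subgroup G} {ψ : G → ℤ} (hψ : ∀ x ∈ L, ∀ y ∈ L, ψ (x * y) = ψ x + ψ y) :
    ψ 1 = 0 := (kerS L ψ hψ).one_mem.2

theorem psi_inv {L : Subgroup G} {ψ : G → ℤ} (hψ : ∀ x ∈ L, ∀ y ∈ L, ψ (x * y) = ψ x + ψ y)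
    {x : G} (hx : x ∈ L) : ψ x⁻¹ = - ψ x := by
  have h1 := psi_one hψ
  have h2 := hψ x hx x⁻¹ (L.inv_mem hx)
  rw [mul_inv_cancel] at h2
  omega

theorem psi_zpow {L : Subgroup G} {ψ : G → ℤ} (hψ : ∀ x ∈ L, ∀ y ∈ L, ψ (x * y) = ψ x + ψ y)
    {z : G} (hz : z ∈ L) (hz1 : ψ z = 1) (n : ℤ) : ψ (z ^ n) = n := by
  induction n using Int.induction_on with
  | zero => rw [zpow_zero, psi_one hψ]
  | succ n ih => rw [zpow_add_one, hψ _ (L.zpow_mem hz _) _ hz, ih, hz1]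
  | pred n ih =>
    rw [zpow_sub_one, hψ _ (L.zpow_mem hz _) _ (L.inv_mem hz), ih, psi_inv hψ hz, hz1]
    rfl

/-- conjugated subgroup `z ^ i L z ^ (-i)` -/
def cjS (z : G) (i : ℤ) (L : Subgroup G) : Subgroup G :=
  L.map (MulAut.conj (z ^ i)).toMonoidHom

theorem mem_cjS {z : G} {i : ℤ} {L : Subgroup G} {b : G} :
    b ∈ cjS z i L ↔ z ^ (-i) * b * z ^ i ∈ L := by
  rw [cjS, Subgroup.mem_map]
  constructor
  · rintro ⟨x, hx, rfl⟩
    have : z ^ (-i) * (z ^ i * x * (z ^ i)⁻¹) * z ^ i = x := by group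
    change z ^ (-i) * (z ^ i * x * (z ^ i)⁻¹) * z ^ i ∈ L
    rwa [this]
  · intro hb
    refine ⟨_, hb, ?_⟩
    change z ^ i * (z ^ (-i) * b * z ^ i) * (z ^ i)⁻¹ = b
    group

theorem cj_mem_cjS {z : G} {i : ℤ} {L : Subgroup G} {b : G} :
    z ^ i * b * z ^ (-i) ∈ cjS z i L ↔ b ∈ L := by
  rw [mem_cjS]
  have : z ^ (-i) * (z ^ i * b * z ^ (-i)) * z ^ i = b := by group
  rw [this]

theorem cjS_free {z : G} {i : ℤ} {L : Subgroup G} (h : IsFreeGroup L) : IsFreeGroup (cjS z i L) :=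
  IsFreeGroup.ofMulEquiv (L.equivMapOfInjective _ (MulAut.conj (z ^ i)).injective)

/-- vertex groups of the unfolded system -/
def sB (B : ι → Subgroup G) (M : Subgroup G) (z : G) : Option (ι × ℤ) → Subgroup G
  | none => M
  | some y => cjS z y.2 (B y.1)

/-- projection of vertices -/
def sπ (w : ι) : Option (ι × ℤ) → ι
  | none => w
  | some y => y.1

theorem star_key {adj : ι → ι → Prop} {B : ι → Subgroup G} (h : IsSys adj B) {w x : ι}
    (hwx : ∀ y, adj w y → y = x) {ψ : G → ℤ}
    (hψ : ∀ a ∈ B w, ∀ b ∈ B w, ψ (a * b) = ψ a + ψ b)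
    (hψx : ∀ a ∈ B w, a ∈ B x → ψ a = 0) {z : G} (hz : z ∈ B w) (hz1 : ψ z = 1)
    (a b : Option (ι × ℤ)) (hab : sadj adj w a b) :
    adj (sπ w a) (sπ w b) ∧ ∃ i : ℤ, ∀ c,
      (c ∈ sB B (kerS (B w) ψ hψ) z a → z ^ (-i) * c * z ^ i ∈ B (sπ w a)) ∧
      (c ∈ sB B (kerS (B w) ψ hψ) z b → z ^ (-i) * c * z ^ i ∈ B (sπ w b)) ∧
      (z ^ (-i) * c * z ^ i ∈ B (sπ w a) → z ^ (-i) * c * z ^ i ∈ B (sπ w b) →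
        c ∈ sB B (kerS (B w) ψ hψ) z a ∧ c ∈ sB B (kerS (B w) ψ hψ) z b) := by
  have hzi : ∀ i : ℤ, z ^ i ∈ B w := fun i => (B w).zpow_mem hz i
  have key : ∀ (c : G) (i : ℤ), z ^ (-i) * c * z ^ i ∈ B w → z ^ (-i) * c * z ^ i ∈ B x →
      c ∈ kerS (B w) ψ hψ := by
    intro c i h1 h2
    have h3 : c = z ^ i * (z ^ (-i) * c * z ^ i) * z ^ (-i) := by group
    have h4 := hψx _ h1 h2
    rw [h3]
    refine ⟨(B w).mul_mem ((B w).mul_mem (hzi _) h1) (hzi _), ?_⟩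
    rw [hψ _ ((B w).mul_mem (hzi _) h1) _ (hzi _), hψ _ (hzi _) _ h1, h4, psi_zpow hψ hz hz1,
      psi_zpow hψ hz hz1]
    ring
  cases a with
  | none =>
    cases b with
    | none => exact hab.elim
    | some y =>
      obtain ⟨y, i⟩ := y
      have hy : adj w y := hab
      refine ⟨hy, i, fun c => ⟨fun hc => ?_, fun hc => mem_cjS.1 hc, fun h1 h2 => ⟨?_, mem_cjS.2 h2⟩⟩⟩
      · exact (B w).mul_mem ((B w).mul_mem (hzi _) hc.1) (hzi _)
      · rw [show sπ w (some (y, i)) = x from hwx y hy] at h2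
        exact key c i h1 h2
  | some y =>
    obtain ⟨y, i⟩ := y
    cases b with
    | none =>
      have hy : adj w y := hab
      refine ⟨h.symm _ _ hy, i, fun c => ⟨fun hc => mem_cjS.1 hc, fun hc => ?_, fun h1 h2 => ⟨mem_cjS.2 h1, ?_⟩⟩⟩
      · exact (B w).mul_mem ((B w).mul_mem (hzi _) hc.1) (hzi _)
      · rw [show sπ w (some (y, i)) = x from hwx y hy] at h1
        exact key c i h2 h1
    | some y' =>
      obtain ⟨y', i'⟩ := y'
      obtain ⟨h1, h2, h3, h4⟩ := hab
      simp only at h4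
      subst h4
      exact ⟨h1, i, fun c => ⟨fun hc => mem_cjS.1 hc, fun hc => mem_cjS.1 hc,
        fun h1 h2 => ⟨mem_cjS.2 h1, mem_cjS.2 h2⟩⟩⟩

open Classical in
theorem star_rank_none {adj : ι → ι → Prop} {w : ι} (hsymm : ∀ a b, adj a b → adj b a) {d : ι → ℕ} (h0 : d w = 0)
    (h1 : ∀ a b, adj a b → d a = d b + 1 ∨ d b = d a + 1)
    (h2 : ∀ a b b', adj a b → adj a b' → d b < d a → d b' < d a → b = b') :
    (∀ a b, sadj adj w a b → d (sπ w a) = d (sπ w b) + 1 ∨ d (sπ w b) = d (sπ w a) + 1) ∧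
    ∀ a b b', sadj adj w a b → sadj adj w a b' → d (sπ w b) < d (sπ w a) →
      d (sπ w b') < d (sπ w a) → b = b' := by
  have hsy := hsymm
  have hadj : ∀ a b, sadj adj w a b → adj (sπ w a) (sπ w b) := by
    intro a b hab
    cases a with
    | none =>
      cases b with
      | none => exact hab.elim
      | some y => exact hab
    | some y =>
      cases b with
      | none => exact hsy _ _ hab
      | some y' => exact hab.1
  refine ⟨fun a b hab => h1 _ _ (hadj a b hab), ?_⟩
  intro a b b' hb hb' hd hd'
  have e := h2 _ _ _ (hadj _ _ hb) (hadj _ _ hb') hd hd'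
  cases a with
  | none => simp only [sπ, h0] at hd; omega
  | some y =>
    obtain ⟨y, i⟩ := y
    cases b with
    | none =>
      cases b' with
      | none => rfl
      | some y' => exact absurd e.symm hb'.2.2.1
    | some y1 =>
      cases b' with
      | none => exact absurd e hb.2.2.1
      | some y2 =>
        obtain ⟨y1, i1⟩ := y1
        obtain ⟨y2, i2⟩ := y2
        have e1 := hb.2.2.2
        have e2 := hb'.2.2.2
        simp only [sπ] at e e1 e2
        rw [e, ← e1, ← e2]

theorem star_sys {adj : ι → ι → Prop} {B : ι → Subgroup G} (h : IsSys adj B) {w x : ι}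
    (hwx : ∀ y, adj w y → y = x) {ψ : G → ℤ}
    (hψ : ∀ a ∈ B w, ∀ b ∈ B w, ψ (a * b) = ψ a + ψ b)
    (hψx : ∀ a ∈ B w, a ∈ B x → ψ a = 0) {z : G} (hz : z ∈ B w) (hz1 : ψ z = 1) :
    IsSys (sadj adj w) (sB B (kerS (B w) ψ hψ) z) where
  symm := by
    intro a b hab
    cases a with
    | none =>
      cases b with
      | none => exact hab.elim
      | some y => exact hab
    | some y =>
      cases b with
      | none => exact hab
      | some y' => exact ⟨h.symm _ _ hab.1, hab.2.2.1, hab.2.1, hab.2.2.2.symm⟩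
  rank := by
    classical
    intro r
    obtain ⟨dw, e0, e1, e2⟩ := h.rank w
    cases r with
    | none =>
      obtain ⟨e3, e4⟩ := star_rank_none h.symm e0 e1 e2
      exact ⟨fun a => dw (sπ w a), e0, e3, e4⟩
    | some r =>
      obtain ⟨r, i0⟩ := r
      obtain ⟨d, f0, f1, f2⟩ := h.rank r
      obtain ⟨D, hD0, hD1, hD2⟩ : ∃ D : Option (ι × ℤ) → ℕ, D none = d w ∧
          (∀ y, D (some (y, i0)) = d y) ∧ (∀ y i, i ≠ i0 → D (some (y, i)) = d w + dw y) :=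
        ⟨fun a => match a with
          | none => d w
          | some y => if y.2 = i0 then d y.1 else d w + dw y.1, rfl, fun y => by simp,
          fun y i hi => by simp [hi]⟩
      have hw1 : ∀ y, adj w y → dw y = 1 := by
        intro y hy
        have := e1 w y hy
        omega
      refine ⟨D, by rw [hD1, f0], ?_, ?_⟩
      · intro a b hab
        cases a with
        | none =>
          cases b with
          | none => exact hab.elim
          | some y =>
            obtain ⟨y, i⟩ := y
            have hy : adj w y := hab
            by_cases hi : i = i0
            · rw [hi, hD0, hD1]; exact f1 _ _ hab
            · rw [hD0, hD2 _ _ hi, hw1 y hy]; simp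
        | some y =>
          obtain ⟨y, i⟩ := y
          cases b with
          | none =>
            have hy : adj w y := hab
            by_cases hi : i = i0
            · rw [hi, hD0, hD1]; exact f1 _ _ (h.symm _ _ hab)
            · rw [hD0, hD2 _ _ hi, hw1 y hy]; simp
          | some y' =>
            obtain ⟨y', i'⟩ := y'
            obtain ⟨h1, -, -, h4⟩ := hab
            simp only at h1 h4
            subst h4
            by_cases hi : i = i0
            · rw [hi, hD1, hD1]; exact f1 _ _ h1
            · rw [hD2 _ _ hi, hD2 _ _ hi]
              have := e1 _ _ h1
              omega
      · intro a b b' hb hb' hd hd'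
        cases a with
        | none =>
          have key : ∀ b, sadj adj w none b → D b < D none → ∃ y, b = some (y, i0) ∧ adj w y := by
            intro b hb hd
            cases b with
            | none => exact hb.elim
            | some y =>
              obtain ⟨y, i⟩ := y
              by_cases hi : i = i0
              · exact ⟨y, by rw [hi], hb⟩
              · rw [hD0, hD2 _ _ hi] at hd; omega
          obtain ⟨y, rfl, hy⟩ := key b hb hd
          obtain ⟨y', rfl, hy'⟩ := key b' hb' hd'
          rw [hwx y hy, hwx y' hy']
        | some y =>
          obtain ⟨y, i⟩ := y
          by_cases hi : i = i0
          · subst hi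
            have key : ∀ b, sadj adj w (some (y, i)) b → D b < D (some (y, i)) →
                adj y (sπ w b) ∧ d (sπ w b) < d y ∧ (b = none ∨ sπ w b ≠ w ∧ b = some (sπ w b, i)) := by
              intro b hb hd
              cases b with
              | none => exact ⟨h.symm _ _ hb, by simpa [hD0, hD1, sπ] using hd, Or.inl rfl⟩
              | some y' =>
                obtain ⟨y', i'⟩ := y'
                obtain ⟨h1, -, h3, h4⟩ := hb
                simp only at h1 h3 h4
                subst h4
                exact ⟨h1, by simpa [hD1, sπ] using hd, Or.inr ⟨h3, rfl⟩⟩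
            obtain ⟨k1, k2, k3⟩ := key b hb hd
            obtain ⟨l1, l2, l3⟩ := key b' hb' hd'
            have e := f2 _ _ _ k1 l1 k2 l2
            rcases k3 with k3 | ⟨k3, k4⟩
            · rcases l3 with l3 | ⟨l3, l4⟩
              · rw [k3, l3]
              · rw [k3] at e; exact absurd e.symm l3
            · rcases l3 with l3 | ⟨l3, l4⟩
              · rw [l3] at e; exact absurd e k3
              · rw [k4, l4, e]
          · have key : ∀ b, sadj adj w (some (y, i)) b → D b < D (some (y, i)) →
                dw (sπ w b) < dw y := by
              intro b hb hd
              cases b with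
              | none =>
                have := hw1 y hb
                simp only [sπ]
                omega
              | some y' =>
                obtain ⟨y', i'⟩ := y'
                obtain ⟨h1, -, h3, h4⟩ := hb
                simp only at h1 h3 h4
                subst h4
                rw [hD2 _ _ hi, hD2 _ _ hi] at hd
                simp only [sπ]
                omega
            exact (star_rank_none h.symm e0 e1 e2).2 _ _ _ hb hb' (key b hb hd) (key b' hb' hd')
  W := by
    intro n v g hn hadj hg hred hv hmem
    have hkey := star_key h hwx hψ hψx hz hz1
    have hzi : ∀ i : ℤ, z ^ i ∈ B w := fun i => (B w).zpow_mem hz i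
    obtain ⟨l, hl1, hl2⟩ : ∃ l : ℕ → ℤ, (∀ k y, v k = some y → l k = y.2) ∧
        ∀ k y, v (k + 1) = none → v k = some y → l (k + 1) = y.2 := by
      refine ⟨fun k => match v k with
        | some y => y.2
        | none => match v (k - 1) with
          | some y => y.2
          | none => 0, ?_, ?_⟩
      · intro k y hy
        simp only [hy]
      · intro k y h1 h2
        simp only [h1, Nat.add_sub_cancel, h2]
    -- levels along the walk
    have hl3 : ∀ k < n, ∀ y, v k = some y → l (k + 1) = y.2 := by
      intro k hk y hy
      cases hv1 : v (k + 1) with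
      | none => exact hl2 k y hv1 hy
      | some y' =>
        have := hadj k hk
        rw [hy, hv1] at this
        rw [hl1 (k + 1) y' hv1, ← this.2.2.2]
    obtain ⟨g', hg'⟩ : ∃ g' : ℕ → G, ∀ k, g' k = z ^ (-l k) * g k * z ^ (l (k + 1)) :=
      ⟨_, fun _ => rfl⟩
    have hpr : ∀ m, pr g' m = z ^ (-l 0) * pr g m * z ^ (l m) := by
      intro m
      induction m with
      | zero => simp [pr]
      | succ m ih =>
        simp only [pr]
        rw [ih, hg']
        group
    apply h.W n (fun k => sπ w (v k)) g' hn
    · intro k hk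
      exact (hkey _ _ (hadj k hk)).1
    · intro k hk
      rw [hg']
      have hgk := hg k hk
      cases hvk : v k with
      | none =>
        rw [hvk] at hgk
        exact (B w).mul_mem ((B w).mul_mem (hzi _) hgk.1) (hzi _)
      | some y =>
        rw [hvk] at hgk
        rw [hl3 k hk y hvk, hl1 k y hvk]
        exact mem_cjS.1 hgk
    · intro k hk hvk hmem'
      have ha1 := hadj k (by omega)
      have ha2 := hadj (k + 1) (by omega)
      have hgk := hg (k + 1) (by omega)
      have hr := hred k hk
      rw [hg'] at hmem'
      cases hv1 : v (k + 1) with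
      | none =>
        rw [hv1] at ha1 ha2 hgk
        cases hv0 : v k with
        | none => rw [hv0] at ha1; exact ha1.elim
        | some y =>
          obtain ⟨y, i⟩ := y
          cases hv2 : v (k + 2) with
          | none =>
            have : v (k + 1 + 1) = none := hv2
            rw [this] at ha2
            exact ha2.elim
          | some y' =>
            obtain ⟨y', j⟩ := y'
            rw [hv0] at ha1 hmem'
            have hv2' : v (k + 1 + 1) = some (y', j) := hv2
            rw [hv2'] at ha2
            have hy : y = x := hwx y ha1
            have hy' : y' = x := hwx y' ha2
            subst hy
            subst hy'
            have hlk : l (k + 1) = i := hl3 k (by omega) _ hv0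
            have hlk2 : l (k + 1 + 1) = j := hl1 (k + 2) _ hv2
            rw [hlk, hlk2] at hmem'
            have hmw : z ^ (-i) * g (k + 1) * z ^ j ∈ B w :=
              (B w).mul_mem ((B w).mul_mem (hzi _) hgk.1) (hzi _)
            have hps := hψx _ hmw hmem'
            rw [hψ _ ((B w).mul_mem (hzi _) hgk.1) _ (hzi _), hψ _ (hzi _) _ hgk.1, hgk.2,
              psi_zpow hψ hz hz1, psi_zpow hψ hz hz1] at hps
            have hij : i = j := by omega
            subst hij
            refine hr (by rw [hv0, hv2]) ?_
            rw [hv0]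
            exact mem_cjS.2 hmem'
      | some y =>
        obtain ⟨y, i⟩ := y
        have hlk : l (k + 1) = i := hl1 (k + 1) _ hv1
        have hlk2 : l (k + 1 + 1) = i := hl3 (k + 1) (by omega) _ hv1
        rw [hlk, hlk2] at hmem'
        rw [hv1] at ha1 ha2 hgk
        have hgk' := mem_cjS.1 hgk
        have hvv : v k = v (k + 2) := by
          change sadj adj w (some (y, i)) (v (k + 2)) at ha2
          cases hv0 : v k with
          | none =>
            cases hv2 : v (k + 2) with
            | none => rfl
            | some y2 =>
              rw [hv2] at ha2
              rw [hv0, hv2] at hvk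
              exact absurd hvk.symm ha2.2.2.1
          | some y0 =>
            cases hv2 : v (k + 2) with
            | none =>
              rw [hv0] at ha1
              rw [hv0, hv2] at hvk
              exact absurd hvk ha1.2.1
            | some y2 =>
              obtain ⟨y0, i0⟩ := y0
              obtain ⟨y2, i2⟩ := y2
              rw [hv2] at ha2
              rw [hv0] at ha1
              rw [hv0, hv2] at hvk
              have q1 := ha1.2.2.2
              have q2 := ha2.2.2.2
              simp only [sπ] at hvk q1 q2
              rw [hvk, q1, q2]
        apply hr hvv
        cases hv0 : v k with
        | none =>
          rw [hv0] at ha1 hmem'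
          have hy : y = x := hwx y ha1
          subst hy
          have e : g (k + 1) = z ^ i * (z ^ (-i) * g (k + 1) * z ^ i) * z ^ (-i) := by group
          have h4 := hψx _ hmem' hgk'
          rw [e]
          refine ⟨(B w).mul_mem ((B w).mul_mem (hzi _) hmem') (hzi _), ?_⟩
          rw [hψ _ ((B w).mul_mem (hzi _) hmem') _ (hzi _), hψ _ (hzi _) _ hmem', h4,
            psi_zpow hψ hz hz1, psi_zpow hψ hz hz1]
          ring
        | some y0 =>
          obtain ⟨y0, i0⟩ := y0
          rw [hv0] at ha1 hmem'
          have q1 := ha1.2.2.2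
          simp only at q1
          subst q1
          exact mem_cjS.2 hmem'
    · simp only [hv]
    · rw [hpr]
      cases hv0 : v 0 with
      | none =>
        rw [hv0] at hmem
        exact (B w).mul_mem ((B w).mul_mem (hzi _) hmem.1) (hzi _)
      | some y =>
        rw [hv0] at hmem
        rw [hl1 0 y hv0, hl1 n y (by rw [hv, hv0])]
        exact mem_cjS.1 hmem
  free := by
    intro i
    cases i with
    | none => exact free_of_le (fun _ hx => hx.1) (h.free w)
    | some y => exact cjS_free (h.free y.1)
  cyc := by
    intro a b hab
    obtain ⟨h1, i, h2⟩ := star_key h hwx hψ hψx hz hz1 a b hab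
    obtain ⟨u, hu, hu'⟩ := h.cyc _ _ h1
    refine ⟨z ^ i * u * z ^ (-i), ?_, ?_⟩
    · intro e
      apply hu
      have : u = z ^ (-i) * (z ^ i * u * z ^ (-i)) * z ^ i := by group
      rw [this, e]
      group
    · ext c
      have hc : c ∈ Subgroup.zpowers (z ^ i * u * z ^ (-i)) ↔
          z ^ (-i) * c * z ^ i ∈ Subgroup.zpowers u := by
        simp only [Subgroup.mem_zpowers_iff]
        have : ∀ k : ℤ, (z ^ i * u * z ^ (-i)) ^ k = z ^ i * u ^ k * z ^ (-i) := by
          intro k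
          rw [zpow_neg, conj_zpow]
        constructor
        · rintro ⟨k, hk⟩
          refine ⟨k, ?_⟩
          rw [← hk, this]
          group
        · rintro ⟨k, hk⟩
          refine ⟨k, ?_⟩
          rw [this, hk]
          group
      rw [hc, ← hu']
      constructor
      · rintro ⟨h3, h4⟩
        exact ⟨(h2 c).1 h3, (h2 c).2.1 h4⟩
      · rintro ⟨h3, h4⟩
        exact (h2 c).2.2 h3 h4
  iso := by
    intro a b hab c hc n hn hcn
    obtain ⟨h1, i, h2⟩ := star_key h hwx hψ hψx hz hz1 a b hab
    have h3 := (h2 c).1 hc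
    have h4 := (h2 _).2.1 hcn
    have h5 : z ^ (-i) * c ^ n * z ^ i = (z ^ (-i) * c * z ^ i) ^ n := by
      have : z ^ i = (z ^ (-i))⁻¹ := by simp
      rw [this, conj_zpow]
    rw [h5] at h4
    exact ((h2 c).2.2 h3 (h.iso _ _ h1 _ h3 n hn h4)).2

end star
end FA


namespace FA

section walk
variable {ι G : Type} [Group G]

/-- cyclically reduced closed walks -/
structure IsWalk (adj : ι → ι → Prop) (B : ι → Subgroup G) (N : ℕ) (v : ℕ → ι) (g : ℕ → G) :
    Prop where
  pos : 1 ≤ N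
  pv : ∀ k, v (k + N) = v k
  pg : ∀ k, g (k + N) = g k
  adj : ∀ k, adj (v k) (v (k + 1))
  mem : ∀ k, g k ∈ B (v k)
  red : ∀ k, v k = v (k + 2) → g (k + 1) ∉ B (v k)

variable {adj : ι → ι → Prop} {B : ι → Subgroup G} {N : ℕ} {v : ℕ → ι} {g : ℕ → G}

theorem IsWalk.pv' (h : IsWalk adj B N v g) (k m : ℕ) : v (k + m * N) = v k := by
  induction m with
  | zero => simp
  | succ m ih => rw [Nat.succ_mul, ← add_assoc, h.pv, ih]

theorem IsWalk.pg' (h : IsWalk adj B N v g) (k m : ℕ) : g (k + m * N) = g k := by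
  induction m with
  | zero => simp
  | succ m ih => rw [Nat.succ_mul, ← add_assoc, h.pg, ih]

theorem IsWalk.shift (h : IsWalk adj B N v g) (k m : ℕ) : ∃ k', m ≤ k' ∧ v k' = v k ∧ g k' = g k := by
  refine ⟨k + m * N, ?_, h.pv' k m, h.pg' k m⟩
  have := h.pos
  nlinarith

open Classical in
theorem IsWalk.range_eq (h : IsWalk adj B N v g) :
    Set.range v = ((Finset.range N).image (fun k => v k) : Finset ι) := by
  ext y
  simp only [Set.mem_range, Finset.coe_image, Set.mem_image, Finset.coe_range, Set.mem_Iio]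
  constructor
  · rintro ⟨k, rfl⟩
    refine ⟨k % N, Nat.mod_lt _ h.pos, ?_⟩
    have := h.pv' (k % N) (k / N)
    rw [mul_comm, Nat.mod_add_div] at this
    exact this.symm
  · rintro ⟨k, -, rfl⟩
    exact ⟨k, rfl⟩

theorem IsWalk.finite (h : IsWalk adj B N v g) : (Set.range v).Finite := by
  classical
  rw [h.range_eq]
  exact Finset.finite_toSet _

theorem IsWalk.ncard_le (h : IsWalk adj B N v g) : (Set.range v).ncard ≤ N := by
  classical
  rw [h.range_eq, Set.ncard_coe_finset]
  exact Finset.card_image_le.trans (by simp)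

theorem IsWalk.CR (h : IsWalk adj B N v g) (hs : ∀ a b, adj a b → adj b a) {d : ι → ℕ} {r : ι}
    (hr : r ∈ Set.range v) (h0 : d r = 0) (h1 : ∀ a b, adj a b → d a = d b + 1 ∨ d b = d a + 1)
    (h2 : ∀ a b b', adj a b → adj a b' → d b < d a → d b' < d a → b = b') :
    CR adj d r (Set.range v) := by
  obtain ⟨i, rfl⟩ := hr
  have key : ∀ k, Relation.ReflTransGen
      (fun a b => b ∈ Set.range v ∧ adj a b ∧ d b < d a) (v (i + k)) (v i) := by
    intro k
    induction k with
    | zero => exact Relation.ReflTransGen.refl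
    | succ k ih =>
      have ha := h.adj (i + k)
      rcases h1 _ _ ha with e | e
      · rcases ih.cases_head with e' | ⟨b, ⟨hb1, hb2, hb3⟩, hb⟩
        · rw [e'] at e
          omega
        · have := h2 _ _ _ hb2 ha hb3 (by omega)
          rw [this] at hb
          exact hb
      · exact Relation.ReflTransGen.head ⟨⟨_, rfl⟩, hs _ _ ha, by
          change d (v (i + k)) < d (v (i + k + 1)); omega⟩ ih
  refine ⟨⟨i, rfl⟩, ?_⟩
  rintro c ⟨k, rfl⟩ hne
  obtain ⟨k', hk', e, -⟩ := h.shift k i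
  have := key (k' - i)
  rw [Nat.add_sub_cancel' hk', e] at this
  rcases this.cases_head with e' | ⟨b, ⟨hb1, hb2, hb3⟩, hb⟩
  · exact absurd e' hne
  · exact ⟨b, hb1, hb2, hb3⟩

open Classical in
/-- levels along a walk -/
noncomputable def lev (w : ι) (ψ : G → ℤ) (v : ℕ → ι) (g : ℕ → G) : ℕ → ℤ
  | 0 => 0
  | k + 1 => lev w ψ v g k + if v k = w then ψ (g k) else 0

open Classical in
/-- lifted vertices -/
noncomputable def sv (w : ι) (ψ : G → ℤ) (v : ℕ → ι) (g : ℕ → G) (k : ℕ) : Option (ι × ℤ) :=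
  if v k = w then none else some (v k, lev w ψ v g k)

/-- lifted letters -/
noncomputable def sg (w : ι) (ψ : G → ℤ) (z : G) (v : ℕ → ι) (g : ℕ → G) (k : ℕ) : G :=
  z ^ (lev w ψ v g k) * g k * z ^ (-lev w ψ v g (k + 1))

theorem pr_sg (w : ι) (ψ : G → ℤ) (z : G) (v : ℕ → ι) (g : ℕ → G) (n : ℕ) :
    pr (sg w ψ z v g) n = pr g n * z ^ (-lev w ψ v g n) := by
  induction n with
  | zero => simp [pr, lev]
  | succ n ih =>
    simp only [pr]
    rw [ih, sg]
    group

theorem sπ_sv (w : ι) (ψ : G → ℤ) (v : ℕ → ι) (g : ℕ → G) (k : ℕ) : sπ w (sv w ψ v g k) = v k := by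
  rw [sv]
  split_ifs with h
  · exact h.symm
  · rfl

theorem star_walk (h : IsSys adj B) (hw : IsWalk adj B N v g) {w x : ι}
    (hwx : ∀ y, adj w y → y = x) {ψ : G → ℤ}
    (hψ : ∀ a ∈ B w, ∀ b ∈ B w, ψ (a * b) = ψ a + ψ b)
    {z : G} (hz : z ∈ B w) (hz1 : ψ z = 1)
    (hN : lev w ψ v g N = 0) :
    IsWalk (sadj adj w) (sB B (kerS (B w) ψ hψ) z) N (sv w ψ v g) (sg w ψ z v g) := by
  have hzi : ∀ i : ℤ, z ^ i ∈ B w := fun i => (B w).zpow_mem hz i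
  have hlp : ∀ k, lev w ψ v g (k + N) = lev w ψ v g k := by
    intro k
    induction k with
    | zero => rw [zero_add, hN, lev]
    | succ k ih =>
      rw [show k + 1 + N = (k + N) + 1 by ring, lev, lev, ih, hw.pv, hw.pg]
  have hl1 : ∀ k, v k ≠ w → lev w ψ v g (k + 1) = lev w ψ v g k := by
    intro k hk
    rw [lev, if_neg hk, add_zero]
  have hl2 : ∀ k, v k = w → lev w ψ v g (k + 1) = lev w ψ v g k + ψ (g k) := by
    intro k hk
    rw [lev, if_pos hk]
  have hirr : ∀ a, ¬ adj a a := by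
    intro a ha
    obtain ⟨d, -, h2, -⟩ := h.rank a
    have := h2 a a ha
    omega
  refine ⟨hw.pos, ?_, ?_, ?_, ?_, ?_⟩
  · intro k
    rw [sv, sv, hw.pv, hlp]
  · intro k
    rw [sg, sg, hw.pg, hlp, show k + N + 1 = k + 1 + N by ring, hlp]
  · intro k
    have ha := hw.adj k
    rw [sv, sv]
    split_ifs with h1 h2 h2
    · rw [h1, h2] at ha; exact hirr _ ha
    · rw [h1] at ha; exact ha
    · rw [h2] at ha; exact h.symm _ _ ha
    · exact ⟨ha, h1, h2, (hl1 k h1).symm⟩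
  · intro k
    have hm := hw.mem k
    rw [sv]
    split_ifs with h1
    · rw [h1] at hm
      refine ⟨(B w).mul_mem ((B w).mul_mem (hzi _) hm) (hzi _), ?_⟩
      rw [sg, hψ _ ((B w).mul_mem (hzi _) hm) _ (hzi _), hψ _ (hzi _) _ hm,
        psi_zpow hψ hz hz1, psi_zpow hψ hz hz1, hl2 k h1]
      ring
    · rw [sg, hl1 k h1]
      exact cj_mem_cjS.2 hm
  · intro k hk
    have hvk : v k = v (k + 2) := by
      rw [← sπ_sv w ψ v g k, hk, sπ_sv]
    have hr := hw.red k hvk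
    intro hmem
    apply hr
    by_cases h1 : v k = w
    · have h2 : v (k + 1) ≠ w := by
        intro h2
        have := hw.adj k
        rw [h1, h2] at this
        exact hirr _ this
      rw [sv, if_pos h1, sg, hl1 _ h2] at hmem
      have := hmem.1
      rw [h1]
      have e : g (k + 1) = z ^ (-lev w ψ v g (k + 1)) *
        (z ^ lev w ψ v g (k + 1) * g (k + 1) * z ^ (-lev w ψ v g (k + 1))) *
          z ^ (lev w ψ v g (k + 1)) := by group
      rw [e]
      exact (B w).mul_mem ((B w).mul_mem (hzi _) this) (hzi _)
    · have h2 : v (k + 2) ≠ w := by rwa [← hvk]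
      rw [sv, sv, if_neg h1, if_neg h2] at hk
      have hk2 : lev w ψ v g k = lev w ψ v g (k + 1 + 1) := by
        have := Option.some.inj hk
        exact congrArg Prod.snd this
      rw [sv, if_neg h1, sg, hl1 k h1, ← hk2] at hmem
      exact cj_mem_cjS.1 hmem

theorem star_ncard (h : IsSys adj B) (hw : IsWalk adj B N v g) {w x : ι}
    (hwx : ∀ y, adj w y → y = x) {ψ : G → ℤ}
    (hψ : ∀ a ∈ B w, ∀ b ∈ B w, ψ (a * b) = ψ a + ψ b)
    {z : G} (hz : z ∈ B w) (hz1 : ψ z = 1)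
    (hN : lev w ψ v g N = 0) (hk : ∃ k, v k = w ∧ ψ (g k) ≠ 0) :
    ∃ i j : ℤ, i ≠ j ∧ some (x, i) ∈ Set.range (sv w ψ v g) ∧ some (x, j) ∈ Set.range (sv w ψ v g) ∧
    (Set.range v).ncard < (Set.range (sv w ψ v g)).ncard := by
  obtain ⟨k0, h1, h2⟩ := hk
  obtain ⟨k, hk1, hk2, hk3⟩ := hw.shift k0 1
  obtain ⟨m, rfl⟩ : ∃ m, k = m + 1 := ⟨k - 1, by omega⟩
  rw [← hk2] at h1
  rw [← hk3] at h2
  have ha := h.symm _ _ (hw.adj m)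
  have hb := hw.adj (m + 1)
  rw [h1] at ha hb
  have hirr : ∀ a, ¬ adj a a := by
    intro a ha
    obtain ⟨d, -, h2, -⟩ := h.rank a
    have := h2 a a ha
    omega
  have e1 : v m = x := hwx _ ha
  have e2 : v (m + 1 + 1) = x := hwx _ hb
  have hne : x ≠ w := by
    rintro rfl
    rw [e1] at ha
    exact hirr _ ha
  have hsw := star_walk h hw hwx hψ hz hz1 hN
  have hij : lev w ψ v g m ≠ lev w ψ v g (m + 1 + 1) := by
    rw [lev, lev, if_neg (by rw [e1]; exact hne), if_pos h1]
    intro e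
    apply h2
    linarith
  have m1 : some (x, lev w ψ v g m) ∈ Set.range (sv w ψ v g) :=
    ⟨m, by rw [sv, e1, if_neg hne]⟩
  have m2 : some (x, lev w ψ v g (m + 1 + 1)) ∈ Set.range (sv w ψ v g) :=
    ⟨m + 1 + 1, by rw [sv, e2, if_neg hne]⟩
  refine ⟨_, _, hij, m1, m2, ?_⟩
  have hfin := hsw.finite
  have h5 : Set.range v ⊆ sπ w '' (Set.range (sv w ψ v g) \ {some (x, lev w ψ v g m)}) := by
    rintro _ ⟨k, rfl⟩
    by_cases hc : sv w ψ v g k = some (x, lev w ψ v g m)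
    · refine ⟨some (x, lev w ψ v g (m + 1 + 1)), ⟨m2, ?_⟩, ?_⟩
      · intro e
        exact hij (congrArg Prod.snd (Option.some.inj e)).symm
      · rw [← sπ_sv w ψ v g k, hc]
        rfl
    · exact ⟨_, ⟨⟨k, rfl⟩, hc⟩, sπ_sv w ψ v g k⟩
  calc (Set.range v).ncard ≤ _ := Set.ncard_le_ncard h5 ((hfin.diff).image _)
    _ ≤ _ := Set.ncard_image_le hfin.diff
    _ < _ := by
      rw [Set.ncard_diff_singleton_of_mem m1]
      have : 0 < (Set.range (sv w ψ v g)).ncard := (Set.ncard_pos hfin).2 ⟨_, m1⟩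
      omega

end walk
end FA


namespace FA

theorem HNNL {G P : Type} [Group G] [Group P] {L L1 : Subgroup G} (z : G) (F : G → P)
    (hF : HomOn L F) (h1 : L1 ≤ L) (h2 : L1.map (MulAut.conj z).toMonoidHom ≤ L)
    (hk1 : KT L1 F) (hk2 : KT (L1.map (MulAut.conj z).toMonoidHom) F) :
    ∃ (E : Type) (_ : Group E) (o : P →* E) (t : E), Function.Injective o ∧
      ∀ y ∈ L1, t * o (F y) * t⁻¹ = o (F (z * y * z⁻¹)) := by
  obtain ⟨L2, hL2⟩ : ∃ L2, L2 = L1.map (MulAut.conj z).toMonoidHom := ⟨_, rfl⟩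
  rw [← hL2] at h2 hk2
  have i1 : Function.Injective (hF.mono h1).hom := by
    intro x y hxy
    exact Subtype.ext ((hF.mono h1).inj hk1 x.2 y.2 hxy)
  have i2 : Function.Injective (hF.mono h2).hom := by
    intro x y hxy
    exact Subtype.ext ((hF.mono h2).inj hk2 x.2 y.2 hxy)
  let e0 : L1 ≃* L2 := (L1.equivMapOfInjective _ (MulAut.conj z).injective).trans
    (MulEquiv.subgroupCongr hL2.symm)
  let φ : (hF.mono h1).hom.range ≃* (hF.mono h2).hom.range :=
    ((MonoidHom.ofInjective i1).symm.trans e0).trans (MonoidHom.ofInjective i2)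
  refine ⟨HNNExtension P _ _ φ, inferInstance, HNNExtension.of, HNNExtension.t,
    HNNExtension.of_injective φ, ?_⟩
  intro y hy
  have := HNNExtension.equiv_eq_conj (φ := φ) (MonoidHom.ofInjective i1 ⟨y, hy⟩)
  have e1 : (φ (MonoidHom.ofInjective i1 ⟨y, hy⟩) : P) = F (z * y * z⁻¹) := by
    simp only [φ, MulEquiv.trans_apply, MulEquiv.symm_apply_apply]
    rfl
  rw [e1] at this
  rw [this]
  rfl

section
variable {ι G : Type} [Group G]

/-- windows -/
def win (V : Set ι) (w : ι) (a b : ℤ) : Set (Option (ι × ℤ)) :=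
  {c | c = none ∨ ∃ y i, c = some (y, i) ∧ y ∈ V ∧ y ≠ w ∧ a ≤ i ∧ i ≤ b}

theorem MAG {P : Type} [Group P] {adj : ι → ι → Prop} {B : ι → Subgroup G} (h : IsSys adj B)
    {w x : ι}
    (hwx : ∀ y, adj w y → y = x) {ψ : G → ℤ}
    (hψ : ∀ a ∈ B w, ∀ b ∈ B w, ψ (a * b) = ψ a + ψ b)
    (hψx : ∀ a ∈ B w, a ∈ B x → ψ a = 0) {z : G} (hz : z ∈ B w) (hz1 : ψ z = 1)
    {V : Set ι} {d : ι → ℕ} (hV : CR adj d w V) {m M : ℤ} (hm : m < M) (F : G → P)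
    (hF : HomOn (GS (sB B (kerS (B w) ψ hψ) z) (win V w m M)) F)
    (hk1 : KT (GS (sB B (kerS (B w) ψ hψ) z) (win V w m (M - 1))) F)
    (hk2 : KT (GS (sB B (kerS (B w) ψ hψ) z) (win V w (m + 1) M)) F)
    (s : G) (hs : s ∈ (GS (sB B (kerS (B w) ψ hψ) z) (win V w m M))) (hs1 : F s = 1) :
    ∃ (E : Type) (_ : Group E) (Θ : G → E), HomOn (GS B V) Θ ∧ Θ s = 1 ∧ KT (GS B (V \ {w})) Θ := by
  classical
  have hzi : ∀ i : ℤ, z ^ i ∈ B w := fun i => (B w).zpow_mem hz i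
  obtain ⟨K, hK⟩ : ∃ K, K = kerS (B w) ψ hψ := ⟨_, rfl⟩
  have hKm : ∀ b, b ∈ K ↔ b ∈ B w ∧ ψ b = 0 := by intro b; rw [hK]; exact Iff.rfl
  rw [← hK] at hF hk1 hk2 hs
  have hKc : ∀ b ∈ K, ∀ i : ℤ, z ^ i * b * z ^ (-i) ∈ K := by
    intro b hb i
    rw [hKm] at hb ⊢
    refine ⟨(B w).mul_mem ((B w).mul_mem (hzi _) hb.1) (hzi _), ?_⟩
    rw [hψ _ ((B w).mul_mem (hzi _) hb.1) _ (hzi _), hψ _ (hzi _) _ hb.1, hb.2,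
      psi_zpow hψ hz hz1, psi_zpow hψ hz hz1]
    ring
  have hwin : ∀ a b a' b' : ℤ, a' ≤ a → b ≤ b' → win V w a b ⊆ win V w a' b' := by
    rintro a b a' b' h1 h2 c (rfl | ⟨y, i, rfl, h3, h4, h5, h6⟩)
    · exact Or.inl rfl
    · exact Or.inr ⟨y, i, rfl, h3, h4, h1.trans h5, h6.trans h2⟩
  have hmap : (GS (sB B K z) (win V w m (M - 1))).map (MulAut.conj z).toMonoidHom ≤
      GS (sB B K z) (win V w (m + 1) M) := by
    rw [Subgroup.map_le_iff_le_comap]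
    apply GS_le
    rintro c (rfl | ⟨y, i, rfl, h3, h4, h5, h6⟩) b hb
    · apply le_GS _ (show none ∈ win V w (m + 1) M from Or.inl rfl)
      have := hKc b hb 1
      simpa [sB] using this
    · apply le_GS _ (show some (y, i + 1) ∈ win V w (m + 1) M from
        Or.inr ⟨y, i + 1, rfl, h3, h4, by omega, by omega⟩)
      have hb' := mem_cjS.1 hb
      apply mem_cjS.2
      change z ^ (-(i + 1)) * (z * b * z⁻¹) * z ^ (i + 1) ∈ B y
      have : z ^ (-(i + 1)) * (z * b * z⁻¹) * z ^ (i + 1) = z ^ (-i) * b * z ^ i := by group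
      rwa [this]
  have hle1 : GS (sB B K z) (win V w m (M - 1)) ≤ GS (sB B K z) (win V w m M) :=
    GS_mono _ (hwin _ _ _ _ le_rfl (by omega))
  have hle2 : GS (sB B K z) (win V w (m + 1) M) ≤ GS (sB B K z) (win V w m M) :=
    GS_mono _ (hwin _ _ _ _ (by omega) le_rfl)
  obtain ⟨E, _, o, t, ho, ht⟩ := HNNL z F hF hle1 (hmap.trans hle2) hk1 (hk2.mono hmap)
  have hK1 : K ≤ GS (sB B K z) (win V w m (M - 1)) :=
    le_GS (sB B K z) (show none ∈ win V w m (M - 1) from Or.inl rfl)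
  have hconj1 : ∀ (c y : G) (i : ℤ), c = z ^ i * y * z ^ (-i) → z * c * z⁻¹ = z ^ (i + 1) * y * z ^ (-(i + 1)) := by
    rintro _ y i rfl
    group
  -- conjugation on K
  have htK : ∀ i : ℤ, ∀ b ∈ K, t ^ i * o (F b) * t ^ (-i) = o (F (z ^ i * b * z ^ (-i))) := by
    intro i
    induction i using Int.induction_on with
    | zero => intro b _; simp
    | succ i ih =>
      intro b hb
      have e := ht _ (hK1 (hKc b hb i))
      rw [← ih b hb, hconj1 _ b i rfl] at e
      rw [← e]
      group
    | pred i ih =>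
      intro b hb
      have e := ht _ (hK1 (hKc b hb (-i - 1)))
      rw [hconj1 _ b (-i - 1) rfl, show (-(i : ℤ) - 1 + 1) = -i by ring, ← ih b hb] at e
      have e2 : ∀ X Y : E, t * X * t⁻¹ = Y → X = t⁻¹ * Y * t := by
        rintro X _ rfl
        group
      rw [e2 _ _ e]
      group
  have hmemv : ∀ v ∈ V, v ≠ w → ∀ i : ℤ, m ≤ i → i ≤ M → ∀ b ∈ B v,
      z ^ i * b * z ^ (-i) ∈ GS (sB B K z) (win V w m M) := by
    intro v hv hvw i h1 h2 b hb
    exact le_GS (sB B K z) (show some (v, i) ∈ win V w m M from Or.inr ⟨v, i, rfl, hv, hvw, h1, h2⟩)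
      (cj_mem_cjS.2 hb)
  have hmemv1 : ∀ v ∈ V, v ≠ w → ∀ i : ℤ, m ≤ i → i ≤ M - 1 → ∀ b ∈ B v,
      z ^ i * b * z ^ (-i) ∈ GS (sB B K z) (win V w m (M - 1)) := by
    intro v hv hvw i h1 h2 b hb
    exact le_GS (sB B K z) (show some (v, i) ∈ win V w m (M - 1) from
      Or.inr ⟨v, i, rfl, hv, hvw, h1, h2⟩) (cj_mem_cjS.2 hb)
  have hKz : ∀ b ∈ B w, b * z ^ (-ψ b) ∈ K := by
    intro b hb
    rw [hKm]
    refine ⟨(B w).mul_mem hb (hzi _), ?_⟩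
    rw [hψ _ hb _ (hzi _), psi_zpow hψ hz hz1]
    ring
  obtain ⟨T, hT1, hT2⟩ : ∃ T : G → E, HomOn (GS B V) T ∧ ∀ v ∈ V, ∀ b ∈ B v, T b =
      if v = w then o (F (b * z ^ (-ψ b))) * t ^ (ψ b) else
        t ^ (-m) * o (F (z ^ m * b * z ^ (-m))) * t ^ m := EXTEND (P := E) h hV
    (fun v b => if v = w then o (F (b * z ^ (-ψ b))) * t ^ (ψ b) else
      t ^ (-m) * o (F (z ^ m * b * z ^ (-m))) * t ^ m) (by
    intro v hv
    by_cases hvw : v = w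
    · subst hvw
      intro a ha b hb
      simp only [if_true]
      rw [hψ a ha b hb]
      have e1 : a * b * z ^ (-(ψ a + ψ b)) = (a * z ^ (-ψ a)) *
          (z ^ (ψ a) * (b * z ^ (-ψ b)) * z ^ (-ψ a)) := by group
      rw [e1, hF _ (hle1 (hK1 (hKz a ha))) _ (hle1 (hK1 (hKc _ (hKz b hb) _))), map_mul,
        ← htK _ _ (hKz b hb)]
      group
    · intro a ha b hb
      simp only [if_neg hvw]
      have e1 : z ^ m * (a * b) * z ^ (-m) = (z ^ m * a * z ^ (-m)) * (z ^ m * b * z ^ (-m)) := by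
        group
      rw [e1, hF _ (hmemv v hv hvw m le_rfl hm.le a ha) _ (hmemv v hv hvw m le_rfl hm.le b hb),
        map_mul]
      group) (by
    have key : ∀ b ∈ B w, b ∈ B x → o (F (b * z ^ (-ψ b))) * t ^ (ψ b) =
        t ^ (-m) * o (F (z ^ m * b * z ^ (-m))) * t ^ m := by
      intro b hb hbx
      have hp := hψx b hb hbx
      rw [hp, ← htK m b ((hKm b).2 ⟨hb, hp⟩)]
      simp
      group
    intro a _ b _ hab y hy hy'
    by_cases haw : a = w
    · subst haw
      by_cases hbw : b = a
      · simp only [hbw]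
      · simp only [if_true, if_neg hbw]
        rw [hwx b hab] at hy'
        exact key y hy hy'
    · by_cases hbw : b = w
      · subst hbw
        simp only [if_true, if_neg haw]
        rw [hwx a (h.symm _ _ hab)] at hy
        exact (key y hy' hy).symm
      · simp only [if_neg haw, if_neg hbw])
  have hTw : ∀ b ∈ B w, T b = o (F (b * z ^ (-ψ b))) * t ^ (ψ b) := by
    intro b hb
    rw [hT2 w hV.1 b hb, if_pos rfl]
  have hTv : ∀ v ∈ V, v ≠ w → ∀ b ∈ B v, T b = t ^ (-m) * o (F (z ^ m * b * z ^ (-m))) * t ^ m := by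
    intro v hv hvw b hb
    rw [hT2 v hv b hb, if_neg hvw]
  have hF1 : F 1 = 1 := hF.one
  have hTz : ∀ i : ℤ, T (z ^ i) = t ^ i := by
    intro i
    rw [hTw _ (hzi i), psi_zpow hψ hz hz1, ← zpow_add, add_neg_cancel, zpow_zero, hF1, map_one, one_mul]
  have hwV : B w ≤ GS B V := le_GS B hV.1
  have hTc : ∀ y ∈ GS B V, ∀ i : ℤ, T (z ^ i * y * z ^ (-i)) = t ^ i * T y * t ^ (-i) := by
    intro y hy i
    rw [hT1 _ (mul_mem (hwV (hzi i)) hy) _ (hwV (hzi _)), hT1 _ (hwV (hzi i)) _ hy, hTz, hTz]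
  have hstep : ∀ v ∈ V, v ≠ w → ∀ b ∈ B v, ∀ n : ℕ, m + n ≤ M →
      o (F (z ^ (m + n) * b * z ^ (-(m + n)))) = t ^ (n : ℤ) * o (F (z ^ m * b * z ^ (-m))) * t ^ (-(n : ℤ)) := by
    intro v hv hvw b hb n
    induction n with
    | zero => intro _; simp
    | succ n ih =>
      intro hn
      push_cast at hn
      have e := ht _ (hmemv1 v hv hvw (m + n) (by omega) (by omega) b hb)
      rw [hconj1 _ b (m + n) rfl, ih (by omega)] at e
      push_cast
      rw [← add_assoc, ← e]
      group
  have hgen : ∀ y ∈ GS (sB B K z) (win V w m M), T y = o (F y) := by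
    apply HomOn.ext_closure (W := {y | ∃ v ∈ win V w m M, y ∈ sB B K z v})
    · apply hT1.mono
      apply GS_le
      rintro c (rfl | ⟨y, i, rfl, h3, h4, h5, h6⟩) b hb
      · exact hwV ((hKm b).1 hb).1
      · have hb' := mem_cjS.1 hb
        have : b = z ^ i * (z ^ (-i) * b * z ^ i) * z ^ (-i) := by group
        rw [this]
        exact mul_mem (mul_mem (hwV (hzi _)) (le_GS B h3 hb')) (hwV (hzi _))
    · exact hF.comp o
    · rintro b ⟨c, (rfl | ⟨y, i, rfl, h3, h4, h5, h6⟩), hb⟩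
      · have hb' := (hKm b).1 hb
        rw [hTw b hb'.1, hb'.2]
        simp
      · have hb' := mem_cjS.1 hb
        have e : b = z ^ i * (z ^ (-i) * b * z ^ i) * z ^ (-i) := by group
        simp only at hb'
        obtain ⟨n, hn⟩ : ∃ n : ℕ, i = m + n := ⟨(i - m).toNat, by omega⟩
        have e3 := hstep y h3 h4 _ hb' n (by omega)
        rw [← hn] at e3
        rw [e, hTc _ (le_GS B h3 hb'), hTv y h3 h4 _ hb', e3, hn]
        group
  refine ⟨E, inferInstance, T, hT1, by rw [hgen s hs, hs1, map_one], ?_⟩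
  have hH : ∀ y ∈ GS B (V \ {w}), z ^ m * y * z ^ (-m) ∈ GS (sB B K z) (win V w m (M - 1)) := by
    have : GS B (V \ {w}) ≤ cjS z (-m) (GS (sB B K z) (win V w m (M - 1))) := by
      apply GS_le
      rintro v ⟨hv, hvw⟩ b hb
      rw [mem_cjS, neg_neg]
      exact hmemv1 v hv hvw m le_rfl (by omega) b hb
    intro y hy
    have := mem_cjS.1 (this hy)
    rwa [neg_neg] at this
  intro y hy hy1
  have e1 := hH y hy
  have hyV : y ∈ GS B V := GS_mono B Set.diff_subset hy
  have e2 := hTc y hyV m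
  rw [hy1, hgen _ (hle1 e1), mul_one, ← zpow_add, add_neg_cancel, zpow_zero, ← map_one o] at e2
  have e3 := hk1 _ e1 (ho e2)
  have : y = z ^ (-m) * (z ^ m * y * z ^ (-m)) * z ^ m := by group
  rw [this, e3]
  group

end
end FA


namespace FA

/-- the one-relator quotient of the group of `V` embeds the part away from `w` -/
def Emb {ι G : Type} [Group G] (B : ι → Subgroup G) (V : Set ι) (s : G) (w : ι) : Prop :=
  ∃ (P : Type) (_ : Group P) (f : G → P), HomOn (GS B V) f ∧ f s = 1 ∧ KT (GS B (V \ {w})) f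

/-- combining two homomorphisms -/
theorem Emb.pair {ι G : Type} [Group G] {B : ι → Subgroup G} {V : Set ι} {s : G} {w w' : ι}
    (h : Emb B V s w) (h' : Emb B V s w') :
    ∃ (P : Type) (_ : Group P) (f : G → P), HomOn (GS B V) f ∧ f s = 1 ∧
      KT (GS B (V \ {w})) f ∧ KT (GS B (V \ {w'})) f := by
  obtain ⟨P, _, f, h1, h2, h3⟩ := h
  obtain ⟨P', _, f', h1', h2', h3'⟩ := h'
  refine ⟨P × P', inferInstance, fun x => (f x, f' x), ?_, ?_, ?_, ?_⟩
  · intro x hx y hy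
    simp only [h1 x hx y hy, h1' x hx y hy, Prod.mk_mul_mk]
  · simp only [h2, h2']
    rfl
  · intro x hx e
    exact h3 x hx (congrArg Prod.fst e)
  · intro x hx e
    exact h3' x hx (congrArg Prod.snd e)

/-- induction hypothesis -/
def IHyp (G : Type) [Group G] (N c : ℕ) : Prop :=
  ∀ (ι : Type) (adj : ι → ι → Prop) (B : ι → Subgroup G) (v : ℕ → ι) (g : ℕ → G), IsSys adj B →
    IsWalk adj B N v g → c < (Set.range v).ncard → ∀ w ∈ Set.range v, ∀ x,
    (∀ y ∈ Set.range v, adj w y → y = x) → Emb B (Set.range v) (pr g N) w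

section
variable {ι G : Type} [Group G]

theorem MAGSTEP {adj : ι → ι → Prop} {B : ι → Subgroup G} {N : ℕ} {v : ℕ → ι} {g : ℕ → G}
    (h : IsSys adj B) (hw : IsWalk adj B N v g) (IH : IHyp G N (Set.range v).ncard)
    {w x : ι} (hwv : w ∈ Set.range v)
    (hwx : ∀ y, adj w y → y = x) {ψ : G → ℤ}
    (hψ : ∀ a ∈ B w, ∀ b ∈ B w, ψ (a * b) = ψ a + ψ b)
    (hψx : ∀ a ∈ B w, a ∈ B x → ψ a = 0) {z : G} (hz : z ∈ B w) (hz1 : ψ z = 1)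
    (hN : lev w ψ v g N = 0) (hk : ∃ k, v k = w ∧ ψ (g k) ≠ 0) :
    Emb B (Set.range v) (pr g N) w := by
  classical
  have hsys := star_sys h hwx hψ hψx hz hz1
  have hwalk := star_walk h hw hwx hψ hz hz1 hN
  obtain ⟨i1, i2, hi12, hm1, hm2, hcard⟩ := star_ncard h hw hwx hψ hz hz1 hN hk
  have hpr : pr (sg w ψ z v g) N = pr g N := by
    rw [pr_sg, hN]; simp
  obtain ⟨V, hV⟩ : ∃ V, V = Set.range v := ⟨_, rfl⟩
  obtain ⟨V', hV'⟩ : ∃ V', V' = Set.range (sv w ψ v g) := ⟨_, rfl⟩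
  obtain ⟨K, hK⟩ : ∃ K, K = kerS (B w) ψ hψ := ⟨_, rfl⟩
  have hfin : V'.Finite := hV' ▸ hwalk.finite
  obtain ⟨d, d0, d1, d2⟩ := h.rank w
  obtain ⟨sd1, sd2⟩ := star_rank_none h.symm d0 d1 d2
  have hnone : none ∈ V' := by
    obtain ⟨k, hk⟩ := hwv
    rw [hV']
    exact ⟨k, by rw [sv, if_pos hk]⟩
  have hCR : CR adj d w V := hV ▸ hw.CR h.symm hwv d0 d1 d2
  have hCR' : CR (sadj adj w) (fun a => d (sπ w a)) none V' := by
    rw [hV']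
    exact hwalk.CR hsys.symm (hV' ▸ hnone) d0 sd1 sd2
  rw [← hV'] at hm1 hm2
  have hsome : ∀ y i, some (y, i) ∈ V' → y ∈ V ∧ y ≠ w := by
    intro y i hy
    rw [hV'] at hy
    obtain ⟨k, hk⟩ := hy
    rw [sv] at hk
    split_ifs at hk with h1
    have : v k = y := congrArg Prod.fst (Option.some.inj hk)
    rw [← this, hV]
    exact ⟨⟨k, rfl⟩, h1⟩
  have hleaf : ∀ y0 i0, some (y0, i0) ∈ V' → ∃ y, some (y, i0) ∈ V' ∧
      ∃ p, ∀ c ∈ V', sadj adj w (some (y, i0)) c → c = p := by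
    intro y0 i0 hy0
    have hf : ({y | some (y, i0) ∈ V'} : Set ι).Finite :=
      hfin.preimage (f := fun y => some (y, i0)) (by
        intro a _ b _ hab
        exact congrArg Prod.fst (Option.some.inj hab))
    obtain ⟨y, hy, hmax⟩ := hf.exists_maximalFor d _ ⟨y0, hy0⟩
    refine ⟨y, hy, ?_⟩
    obtain ⟨p, hp, hp1, hp2⟩ := hCR'.2 _ hy (by simp)
    refine ⟨p, ?_⟩
    intro c hc hyc
    refine sd2 _ c p hyc hp1 ?_ hp2
    rcases sd1 _ _ hyc with e | e
    · omega
    · exfalso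
      cases c with
      | none => simp only [sπ, d0] at e; omega
      | some c =>
        obtain ⟨c, j⟩ := c
        have hj : i0 = j := hyc.2.2.2
        subst hj
        simp only [sπ] at e
        have : d c ≤ d y := hmax hc (by omega)
        omega
  have hfL : ({i | ∃ y, some (y, i) ∈ V'} : Set ℤ).Finite := by
    refine (hfin.image (fun c => match c with | none => (0 : ℤ) | some y => y.2)).subset ?_
    rintro i ⟨y, hy⟩
    exact ⟨_, hy, rfl⟩
  obtain ⟨M, ⟨yM, hyM⟩, hMmax⟩ := hfL.exists_maximalFor (fun i => i) _ ⟨i1, x, hm1⟩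
  obtain ⟨m, ⟨ym, hym⟩, hmmin⟩ := hfL.exists_minimalFor (fun i => i) _ ⟨i1, x, hm1⟩
  have hM : ∀ y i, some (y, i) ∈ V' → i ≤ M := by
    intro y i hy
    by_contra hc
    push Not at hc
    have := hMmax ⟨y, hy⟩ hc.le
    simp only at this
    omega
  have hm : ∀ y i, some (y, i) ∈ V' → m ≤ i := by
    intro y i hy
    by_contra hc
    push Not at hc
    have := hmmin ⟨y, hy⟩ hc.le
    simp only at this
    omega
  have hmM : m < M := by
    have e1 := hM _ _ hm1
    have e2 := hM _ _ hm2
    have e3 := hm _ _ hm1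
    have e4 := hm _ _ hm2
    omega
  obtain ⟨y1, hy1, p1, hp1⟩ := hleaf _ _ hyM
  obtain ⟨y2, hy2, p2, hp2⟩ := hleaf _ _ hym
  have E1 := IH _ _ _ _ _ hsys hwalk hcard (some (y1, M)) (hV' ▸ hy1) p1 (by rw [← hV']; exact hp1)
  have E2 := IH _ _ _ _ _ hsys hwalk hcard (some (y2, m)) (hV' ▸ hy2) p2 (by rw [← hV']; exact hp2)
  rw [← hV', hpr] at E1 E2
  obtain ⟨P, _, f, hf1, hf2, hf3, hf4⟩ := E1.pair E2
  have hwinsub : win V w m (M - 1) ⊆ win V w m M ∧ win V w (m + 1) M ⊆ win V w m M := by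
    constructor
    · rintro c (rfl | ⟨y, i, rfl, h3, h4, h5, h6⟩)
      · exact Or.inl rfl
      · exact Or.inr ⟨y, i, rfl, h3, h4, by omega, by omega⟩
    · rintro c (rfl | ⟨y, i, rfl, h3, h4, h5, h6⟩)
      · exact Or.inl rfl
      · exact Or.inr ⟨y, i, rfl, h3, h4, by omega, by omega⟩
  have hwinCR : ∀ a b : ℤ, ∀ c ∈ win V w a b, c ≠ none → ∃ b' ∈ win V w a b, sadj adj w c b' ∧
      d (sπ w b') < d (sπ w c) := by
    rintro a b c (rfl | ⟨y, i, rfl, h3, h4, h5, h6⟩) hc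
    · exact absurd rfl hc
    · obtain ⟨b', hb1, hb2, hb3⟩ := hCR.2 y h3 h4
      by_cases hbw : b' = w
      · subst hbw
        exact ⟨none, Or.inl rfl, h.symm _ _ hb2, hb3⟩
      · exact ⟨some (b', i), Or.inr ⟨b', i, rfl, hb1, hbw, h5, h6⟩, ⟨hb2, h4, hbw, rfl⟩, hb3⟩
  have hV'S : V' ⊆ win V w m M := by
    intro c hc
    cases c with
    | none => exact Or.inl rfl
    | some y =>
      obtain ⟨y, i⟩ := y
      exact Or.inr ⟨y, i, rfl, (hsome y i hc).1, (hsome y i hc).2, hm _ _ hc, hM _ _ hc⟩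
  have hSfin : (win V w m M).Finite := by
    have hVf : V.Finite := hV ▸ hw.finite
    refine (((hVf.prod (Set.finite_Icc m M)).image some).insert none).subset ?_
    rintro c (rfl | ⟨y, i, rfl, h3, h4, h5, h6⟩)
    · exact Or.inl rfl
    · exact Or.inr ⟨(y, i), ⟨h3, h5, h6⟩, rfl⟩
  obtain ⟨P', _, F, hF1, hF2, hF3, hF4⟩ := ADD hsys sd1 sd2 (S := win V w m M)
    ⟨Or.inl rfl, hwinCR m M⟩ {win V w m (M - 1), win V w (m + 1) M} (by
      rintro R (rfl | rfl)
      · rw [Set.inter_eq_left.2 hwinsub.1]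
        exact hwinCR _ _
      · rw [Set.inter_eq_left.2 hwinsub.2]
        exact hwinCR _ _) _ V' P f hCR' hV'S (hSfin.subset Set.diff_subset) rfl hf1 (by
      intro c hc
      by_cases hc1 : c = some (y1, M)
      · refine hf4.mono (le_GS _ ⟨hc, ?_⟩)
        rw [hc1]
        intro e
        have := congrArg Prod.snd (Option.some.inj e)
        simp only at this
        omega
      · exact hf3.mono (le_GS _ ⟨hc, hc1⟩)) (by
      rintro R (rfl | rfl)
      · refine hf3.mono (GS_mono _ ?_)
        rintro c ⟨hc1, hc2⟩
        refine ⟨hc2, ?_⟩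
        rintro rfl
        rcases hc1 with e | ⟨y, i, e, -, -, h5, h6⟩
        · cases e
        · have := congrArg Prod.snd (Option.some.inj e)
          simp only at this
          omega
      · refine hf4.mono (GS_mono _ ?_)
        rintro c ⟨hc1, hc2⟩
        refine ⟨hc2, ?_⟩
        rintro rfl
        rcases hc1 with e | ⟨y, i, e, -, -, h5, h6⟩
        · cases e
        · have := congrArg Prod.snd (Option.some.inj e)
          simp only at this
          omega)
  have hs : pr g N ∈ GS (sB B (kerS (B w) ψ hψ) z) V' := by
    rw [← hpr]
    apply pr_mem
    intro k _
    exact le_GS _ (hV' ▸ ⟨k, rfl⟩) (hwalk.mem k)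
  have hk1 := hF4 _ (Or.inl rfl)
  have hk2 := hF4 _ (Or.inr rfl)
  rw [Set.inter_eq_left.2 hwinsub.1] at hk1
  rw [Set.inter_eq_left.2 hwinsub.2] at hk2
  have := MAG h hwx hψ hψx hz hz1 hCR hmM F hF1 hk1 hk2 (pr g N) (GS_mono _ hV'S hs)
    ((hF2 _ hs).2 hf2)
  rw [← hV]
  exact this

end
end FA


namespace FA

section
variable {ι G : Type} [Group G]

/-- rational functional on a free group -/
noncomputable def Lam {X : Type} (l : X → ℚ) (y : FreeGroup X) : ℚ :=
  Multiplicative.toAdd (FreeGroup.lift (fun x => Multiplicative.ofAdd (l x)) y)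

open Classical in
theorem NSD {adj : ι → ι → Prop} {B : ι → Subgroup G} {N : ℕ} {v : ℕ → ι} {g : ℕ → G}
    (hRC : RC G) (h : IsSys adj B) (hw : IsWalk adj B N v g)
    {w x : ι} (hwv : w ∈ Set.range v)
    (hwx : ∀ y, adj w y → y = x) {X : Type} (e : B w →* FreeGroup X) {u : G} (hxv : x ∈ Set.range v)
    (hxw : x ≠ w)
    (hu : B w ⊓ B x = Subgroup.zpowers u) (l : Bool → X → ℚ)
    (hl0 : ∀ j, Lam (l j) (extF e u) = if false = j then -1 else 0)
    (hl1 : ∀ j, ∑ k ∈ Finset.range N, (if v k = w then Lam (l j) (extF e (g k)) else 0)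
      = if true = j then 1 else 0) : Emb B (Set.range v) (pr g N) w := by
  classical
  obtain ⟨V, hV⟩ : ∃ V, V = Set.range v := ⟨_, rfl⟩
  rw [← hV] at hwv hxv ⊢
  obtain ⟨H, hH⟩ : ∃ H, H = GS B (V \ {w}) := ⟨_, rfl⟩
  have hRH : RC H := RC_inj hRC H.subtype Subtype.val_injective
  have hBH : ∀ c ∈ V, c ≠ w → B c ≤ H := fun c hc hcw => hH ▸ le_GS B ⟨hc, hcw⟩
  obtain ⟨hl, hhl⟩ : ∃ hl : G → Monoid.Coprod H (FreeGroup X), hl = extF (Monoid.Coprod.inl) := ⟨_, rfl⟩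
  obtain ⟨wl, hwl⟩ : ∃ wl : G → Monoid.Coprod H (FreeGroup X),
    wl = fun b => Monoid.Coprod.inr (extF e b) := ⟨_, rfl⟩
  have hhlH : HomOn H hl := hhl ▸ extF_hom _
  have hwlH : HomOn (B w) wl := by
    intro a ha b hb
    rw [hwl]
    simp only
    rw [extF_hom e a ha b hb, map_mul]
  have huw : u ∈ B w ⊓ B x := hu ▸ Subgroup.mem_zpowers u
  have huH : u ∈ H := hBH x hxv hxw huw.2
  have hlL : ∀ j, ∀ y ∈ H, Monoid.Coprod.lift (1 : H →* Multiplicative ℚ)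
      (FreeGroup.lift (fun x => Multiplicative.ofAdd (l j x))) (hl y) = 1 := by
    intro j y hy
    rw [hhl, extF_apply _ hy, Monoid.Coprod.lift_apply_inl]
    rfl
  have hwL : ∀ j y, Multiplicative.toAdd (Monoid.Coprod.lift (1 : H →* Multiplicative ℚ)
      (FreeGroup.lift (fun x => Multiplicative.ofAdd (l j x))) (wl y)) = Lam (l j) (extF e y) := by
    intro j y
    rw [hwl, Monoid.Coprod.lift_apply_inr]
    rfl
  obtain ⟨P, _, f, hf1, hf2⟩ := NS hRH (fun i : Bool => if i then
      pr (fun k => if v k = w then wl (g k) else hl (g k)) N else hl u * (wl u)⁻¹) l (by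
    intro i j
    cases i with
    | false =>
      simp only [Bool.false_eq_true, if_false]
      rw [map_mul, hlL j u huH, one_mul, map_inv, toAdd_inv, hwL, hl0]
      split_ifs <;> simp
    | true =>
      simp only [if_true]
      rw [← hl1]
      have : ∀ n, Multiplicative.toAdd (Monoid.Coprod.lift (1 : H →* Multiplicative ℚ)
          (FreeGroup.lift (fun x => Multiplicative.ofAdd (l j x)))
          (pr (fun k => if v k = w then wl (g k) else hl (g k)) n)) =
          ∑ k ∈ Finset.range n, (if v k = w then Lam (l j) (extF e (g k)) else 0) := by
        intro n
        induction n with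
        | zero => simp [pr]
        | succ n ih =>
          rw [pr, map_mul, toAdd_mul, ih, Finset.sum_range_succ]
          congr 1
          split_ifs with h1
          · exact hwL j _
          · rw [hlL j _ (hBH _ (hV ▸ ⟨n, rfl⟩) h1 (hw.mem n))]
            rfl
      exact this N)
  have hfu : f (hl u) = f (wl u) := by
    have := hf1 false
    simp only [Bool.false_eq_true, if_false] at this
    rw [map_mul, map_inv] at this
    exact mul_inv_eq_one.1 this
  have hfs : f (pr (fun k => if v k = w then wl (g k) else hl (g k)) N) = 1 := by
    have := hf1 true
    simpa using this
  have hA1 : HomOn H (fun y => f (hl y)) := by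
    intro a ha b hb
    simp only
    rw [hhlH a ha b hb, map_mul]
  have hA2 : HomOn (B w) (fun y => f (wl y)) := by
    intro a ha b hb
    simp only
    rw [hwlH a ha b hb, map_mul]
  have hag : ∀ y, y ∈ B w → y ∈ B x → f (hl y) = f (wl y) := by
    intro y h1 h2
    have h3 : y ∈ Subgroup.closure {u} := by
      rw [← Subgroup.zpowers_eq_closure, ← hu]
      exact ⟨h1, h2⟩
    have h4 : Subgroup.closure {u} ≤ B w ⊓ B x := by
      rw [← Subgroup.zpowers_eq_closure, hu]
    refine HomOn.ext_closure (f := fun y => f (hl y)) (g := fun y => f (wl y))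
      (hA1.mono (h4.trans (inf_le_right.trans (hBH x hxv hxw)))) (hA2.mono (h4.trans inf_le_left))
      ?_ y h3
    rintro _ rfl
    exact hfu
  obtain ⟨d, d0, d1, d2⟩ := h.rank w
  have hCR : CR adj d w V := hV ▸ hw.CR h.symm (hV ▸ hwv) d0 d1 d2
  obtain ⟨F, hF1, hF2⟩ : ∃ F : G → P, HomOn (GS B V) F ∧
      ∀ c ∈ V, ∀ y ∈ B c, F y = if c = w then f (wl y) else f (hl y) :=
    EXTEND h hCR (fun c y => if c = w then f (wl y) else f (hl y)) (by
      intro c hc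
      by_cases hcw : c = w
      · subst hcw
        simpa using hA2
      · simp only [if_neg hcw]
        exact hA1.mono (hBH c hc hcw)) (by
      intro a ha b hb hab y hya hyb
      by_cases haw : a = w
      · by_cases hbw : b = w
        · rw [if_pos haw, if_pos hbw]
        · rw [if_pos haw, if_neg hbw]
          subst haw
          have := hwx _ hab
          subst this
          exact (hag y hya hyb).symm
      · by_cases hbw : b = w
        · rw [if_neg haw, if_pos hbw]
          subst hbw
          have := hwx _ (h.symm _ _ hab)
          subst this
          exact hag y hyb hya
        · rw [if_neg haw, if_neg hbw])
  refine ⟨P, inferInstance, F, hF1, ?_, ?_⟩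
  · rw [← hfs]
    have : ∀ n, F (pr g n) = f (pr (fun k => if v k = w then wl (g k) else hl (g k)) n) := by
      intro n
      induction n with
      | zero => simp only [pr]; rw [hF1.one, map_one]
      | succ n ih =>
        have hk : ∀ k, v k ∈ V := fun k => hV ▸ ⟨k, rfl⟩
        rw [pr, pr, hF1 _ (pr_mem _ fun k _ => le_GS B (hk k) (hw.mem k)) _ (le_GS B (hk n) (hw.mem n)),
          ih, map_mul, hF2 _ (hk n) _ (hw.mem n)]
        split_ifs <;> rfl
    exact this N
  · have h5 : ∀ y ∈ GS B (V \ {w}), F y = f (hl y) := by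
      refine HomOn.ext_closure (f := F) (g := fun y => f (hl y)) ?_ ?_ ?_
      · exact hF1.mono (GS_mono B Set.diff_subset)
      · exact hA1.mono hH.ge
      · rintro y ⟨c, hc, hy⟩
        rw [hF2 c hc.1 y hy, if_neg (show ¬ c = w from hc.2)]
    intro y hy' hy1
    have hy : y ∈ H := hH.ge hy'
    rw [h5 y hy', hhl, extF_apply _ hy] at hy1
    have := hf2 (a₁ := ⟨y, hy⟩) (a₂ := 1) (by simpa using hy1)
    exact congrArg Subtype.val this

end
end FA


namespace FA

open Classical in
/-- exponent sums -/
noncomputable def exs {X : Type} (t : X) (y : FreeGroup X) : ℤ :=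
  Multiplicative.toAdd (FreeGroup.lift (fun s => Multiplicative.ofAdd (if s = t then (1 : ℤ) else 0)) y)

theorem exs_mul {X : Type} (t : X) (y z : FreeGroup X) : exs t (y * z) = exs t y + exs t z := by
  simp [exs]

open Classical in
theorem exs_of {X : Type} (t s : X) : exs t (FreeGroup.of s) = if s = t then 1 else 0 := by
  simp [exs]

theorem exs_inv {X : Type} (t : X) (y : FreeGroup X) : exs t y⁻¹ = - exs t y := by
  simp [exs]

theorem exs_zpow {X : Type} (t : X) (y : FreeGroup X) (n : ℤ) : exs t (y ^ n) = n * exs t y := by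
  simp [exs]

open Classical in
theorem Lam_exs {X : Type} (x1 x2 : X) (P Q : ℚ) (y : FreeGroup X) :
    Lam (fun t => P * (if t = x1 then 1 else 0) + Q * (if t = x2 then 1 else 0)) y =
      P * exs x1 y + Q * exs x2 y := by
  have e : FreeGroup.lift (fun t => Multiplicative.ofAdd
      (P * (if t = x1 then 1 else 0) + Q * (if t = x2 then 1 else 0) : ℚ)) =
      (AddMonoidHom.toMultiplicative ((AddMonoidHom.mulLeft P).comp (Int.castAddHom ℚ))).comp
        (FreeGroup.lift (fun s => Multiplicative.ofAdd (if s = x1 then (1 : ℤ) else 0))) *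
      (AddMonoidHom.toMultiplicative ((AddMonoidHom.mulLeft Q).comp (Int.castAddHom ℚ))).comp
        (FreeGroup.lift (fun s => Multiplicative.ofAdd (if s = x2 then (1 : ℤ) else 0))) := by
    ext t
    simp
  rw [Lam, e]
  rfl

theorem int_kill (a b c d : ℤ) (h : a * d - b * c = 0) : ∃ p q m n : ℤ,
    m * p + n * q = 1 ∧ p * a + q * b = 0 ∧ p * c + q * d = 0 := by
  have key : ∀ p q : ℤ, (p ≠ 0 ∨ q ≠ 0) → p * a + q * b = 0 → p * c + q * d = 0 →
      ∃ p q m n : ℤ, m * p + n * q = 1 ∧ p * a + q * b = 0 ∧ p * c + q * d = 0 := by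
    intro p q hpq h1 h2
    obtain ⟨g, p', q', hg, hgcd, hp, hq⟩ := Int.exists_gcd_one' (m := p) (n := q) (by
      rw [Nat.pos_iff_ne_zero]
      intro hc
      rw [Int.gcd_eq_zero_iff] at hc
      tauto)
    obtain ⟨m, n, hmn⟩ := Int.isCoprime_iff_gcd_eq_one.2 hgcd
    have hg' : (g : ℤ) ≠ 0 := by exact_mod_cast hg.ne'
    refine ⟨p', q', m, n, hmn, ?_, ?_⟩
    · apply mul_left_cancel₀ hg'
      rw [mul_zero, ← h1, hp, hq]; ring
    · apply mul_left_cancel₀ hg'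
      rw [mul_zero, ← h2, hp, hq]; ring
  by_cases h1 : a = 0 ∧ b = 0
  · by_cases h2 : c = 0 ∧ d = 0
    · exact key 1 0 (by simp) (by rw [h1.1, h1.2]; ring) (by rw [h2.1, h2.2]; ring)
    · exact key d (-c) (by by_contra hc; push Not at hc; exact h2 ⟨by omega, by omega⟩)
        (by rw [h1.1, h1.2]; ring) (by ring)
  · exact key b (-a) (by by_contra hc; push Not at hc; exact h1 ⟨by omega, by omega⟩)
        (by ring) (by linarith)

section
variable {ι G : Type} [Group G]

theorem free_one {X : Type} (hX : ∀ a b : X, a = b) : ∃ c : FreeGroup X, ∀ y, ∃ n : ℤ, y = c ^ n := by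
  by_cases hne : Nonempty X
  · obtain ⟨x1⟩ := hne
    refine ⟨FreeGroup.of x1, ?_⟩
    intro y
    have : y ∈ Subgroup.zpowers (FreeGroup.of x1) := by
      have h1 : y ∈ (⊤ : Subgroup (FreeGroup X)) := trivial
      rw [← FreeGroup.closure_range_of, ] at h1
      refine (Subgroup.closure_le _).2 ?_ h1
      rintro _ ⟨t, rfl⟩
      rw [hX t x1]
      exact Subgroup.mem_zpowers _
    obtain ⟨n, hn⟩ := Subgroup.mem_zpowers_iff.1 this
    exact ⟨n, hn.symm⟩
  · refine ⟨1, ?_⟩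
    intro y
    have : IsEmpty X := not_nonempty_iff.1 hne
    exact ⟨0, Subsingleton.elim _ _⟩

theorem lev_sum [DecidableEq ι] (w : ι) (ψ : G → ℤ) (v : ℕ → ι) (g : ℕ → G) (n : ℕ) :
    lev w ψ v g n = ∑ k ∈ Finset.range n, if v k = w then ψ (g k) else 0 := by
  induction n with
  | zero => simp [lev]
  | succ n ih =>
    rw [lev, Finset.sum_range_succ, ih]
    congr

theorem NSM {adj : ι → ι → Prop} {B : ι → Subgroup G} {N : ℕ} {v : ℕ → ι} {g : ℕ → G}
    (hRC : RC G) (h : IsSys adj B) (hw : IsWalk adj B N v g) (IH : IHyp G N (Set.range v).ncard)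
    {w x : ι} (hwv : w ∈ Set.range v) (hwx : ∀ y, adj w y → y = x)
    (hgen : B w ≤ Subgroup.closure ({b | ∃ k, v k = w ∧ b = g k} ∪ {b | b ∈ B w ∧ b ∈ B x})) :
    Emb B (Set.range v) (pr g N) w := by
  classical
  have hirr : ∀ a, ¬ adj a a := by
    intro a ha
    obtain ⟨d, -, h2, -⟩ := h.rank a
    have := h2 a a ha
    omega
  obtain ⟨k0, hk0⟩ := hwv
  obtain ⟨k1, hk1, hk2, -⟩ := hw.shift k0 1
  obtain ⟨m, rfl⟩ : ∃ m, k1 = m + 1 := ⟨k1 - 1, by omega⟩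
  have hvw : v (m + 1) = w := hk2.trans hk0
  have ha := h.symm _ _ (hw.adj m)
  have hb := hw.adj (m + 1)
  rw [hvw] at ha hb
  have e1 : v m = x := hwx _ ha
  have e2 : v (m + 2) = x := hwx _ hb
  have hadj : adj w x := e1 ▸ ha
  have hxw : x ≠ w := by rintro rfl; exact hirr _ hadj
  obtain ⟨u, hu1, hu⟩ := h.cyc w x hadj
  have hub : u ∈ B w ⊓ B x := hu ▸ Subgroup.mem_zpowers u
  have := h.free w
  obtain ⟨X, ⟨e⟩⟩ : ∃ X : Type, Nonempty (B w ≃* FreeGroup X) := ⟨_, ⟨IsFreeGroup.toFreeGroup (B w)⟩⟩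
  by_cases hX : ∀ a b : X, a = b
  · exfalso
    obtain ⟨c, hc⟩ := free_one hX
    have hpw : ∀ b (hb : b ∈ B w), ∃ n : ℤ, b = (e.symm c : G) ^ n := by
      intro b hb
      obtain ⟨n, hn⟩ := hc (e ⟨b, hb⟩)
      refine ⟨n, ?_⟩
      have : e.symm (e ⟨b, hb⟩) = (e.symm c) ^ n := by rw [hn, map_zpow]
      rw [e.symm_apply_apply] at this
      have := congrArg Subtype.val this
      simpa using this
    obtain ⟨n, hn⟩ := hpw u hub.1
    have hcx : (e.symm c : G) ∈ B x := by
      refine h.iso w x hadj _ (e.symm c).2 n ?_ (hn ▸ hub.2)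
      rintro rfl
      rw [zpow_zero] at hn
      exact hu1 hn
    refine hw.red m (by rw [e1, e2]) ?_
    have := hw.mem (m + 1)
    rw [hvw] at this
    obtain ⟨i, hi⟩ := hpw _ this
    rw [hi, e1]
    exact (B x).zpow_mem hcx i
  push Not at hX
  obtain ⟨x1, x2, hx12⟩ := hX
  obtain ⟨A, hA⟩ : ∃ A : X → G → ℤ, A = fun t b => exs t (extF e.toMonoidHom b) := ⟨_, rfl⟩
  have hAmul : ∀ t, ∀ a ∈ B w, ∀ b ∈ B w, A t (a * b) = A t a + A t b := by
    intro t a ha b hb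
    rw [hA]
    simp only
    rw [extF_hom e.toMonoidHom a ha b hb, exs_mul]
  obtain ⟨T1, hT1⟩ : ∃ T, T = lev w (A x1) v g N := ⟨_, rfl⟩
  obtain ⟨T2, hT2⟩ : ∃ T, T = lev w (A x2) v g N := ⟨_, rfl⟩
  by_cases hD : A x1 u * T2 - A x2 u * T1 = 0
  · obtain ⟨p, q, m', n', hmn, hp1, hp2⟩ := int_kill _ _ _ _ hD
    obtain ⟨ψ, hψ⟩ : ∃ ψ : G → ℤ, ∀ b, ψ b = p * A x1 b + q * A x2 b := ⟨_, fun _ => rfl⟩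
    have hψm : ∀ a ∈ B w, ∀ b ∈ B w, ψ (a * b) = ψ a + ψ b := by
      intro a ha b hb
      rw [hψ, hψ, hψ, hAmul _ a ha b hb, hAmul _ a ha b hb]
      ring
    have hψx : ∀ a ∈ B w, a ∈ B x → ψ a = 0 := by
      intro a ha hax
      have h1 : a ∈ Subgroup.zpowers u := hu ▸ ⟨ha, hax⟩
      have h2 : Subgroup.zpowers u ≤ kerS (B w) ψ hψm := by
        rw [Subgroup.zpowers_le]
        refine ⟨hub.1, ?_⟩
        rw [hψ, hp1]
      exact (h2 h1).2
    obtain ⟨z, hz⟩ : ∃ z : B w, z = e.symm (FreeGroup.of x1 ^ m' * FreeGroup.of x2 ^ n') := ⟨_, rfl⟩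
    have hAz : ∀ t, A t z = m' * (if x1 = t then 1 else 0) + n' * (if x2 = t then 1 else 0) := by
      intro t
      rw [hA]
      simp only
      rw [extF_apply _ z.2]
      have : e.toMonoidHom ⟨z, z.2⟩ = (FreeGroup.of x1 ^ m' * FreeGroup.of x2 ^ n') := by
        change e z = _
        rw [hz, e.apply_symm_apply]
      rw [this, exs_mul, exs_zpow, exs_zpow, exs_of, exs_of]
    have hlev : lev w ψ v g N = p * T1 + q * T2 := by
      rw [hT1, hT2, lev_sum, lev_sum, lev_sum, Finset.mul_sum, Finset.mul_sum,
        ← Finset.sum_add_distrib]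
      apply Finset.sum_congr rfl
      intro k _
      split_ifs
      · rw [hψ]
      · ring
    have hz1 : ψ z = 1 := by
      rw [hψ, hAz, hAz, if_pos rfl, if_pos rfl, if_neg hx12.symm, if_neg hx12]
      linarith
    refine MAGSTEP h hw IH ⟨k0, hk0⟩ hwx hψm hψx z.2 hz1 (hlev.trans hp2) ?_
    by_contra hc
    push Not at hc
    have : B w ≤ kerS (B w) ψ hψm := by
      refine hgen.trans ((Subgroup.closure_le _).2 ?_)
      rintro b (⟨k, hk, rfl⟩ | ⟨hb1, hb2⟩)
      · exact ⟨hk ▸ hw.mem k, hc k hk⟩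
      · exact ⟨hb1, hψx b hb1 hb2⟩
    have := (this z.2).2
    omega
  · have hD' : ((A x1 u : ℚ) * T2 - A x2 u * T1) ≠ 0 := by exact_mod_cast hD
    obtain ⟨D, hDD⟩ : ∃ D : ℚ, D = (A x1 u : ℚ) * T2 - A x2 u * T1 := ⟨_, rfl⟩
    rw [← hDD] at hD'
    obtain ⟨P, hP⟩ : ∃ P : Bool → ℚ, ∀ j, P j = if j then - (A x2 u : ℚ) / D else - T2 / D := ⟨_, fun _ => rfl⟩
    obtain ⟨Q, hQ⟩ : ∃ Q : Bool → ℚ, ∀ j, Q j = if j then (A x1 u : ℚ) / D else T1 / D := ⟨_, fun _ => rfl⟩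
    have hLam : ∀ j b, Lam (fun t => P j * (if t = x1 then 1 else 0) + Q j * (if t = x2 then 1 else 0))
        (extF e.toMonoidHom b) = P j * A x1 b + Q j * A x2 b := by
      intro j b
      rw [Lam_exs, hA]
    refine NSD hRC h hw ⟨k0, hk0⟩ hwx e.toMonoidHom (u := u) ⟨m, e1⟩ hxw hu
      (fun j t => P j * (if t = x1 then 1 else 0) + Q j * (if t = x2 then 1 else 0)) ?_ ?_
    · intro j
      rw [hLam, hP, hQ]
      cases j
      · simp only [Bool.false_eq_true, if_false, if_true]
        field_simp
        rw [hDD]; ring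
      · simp
        ring
    · intro j
      have : ∑ k ∈ Finset.range N, (if v k = w then Lam (fun t => P j * (if t = x1 then 1 else 0) +
          Q j * (if t = x2 then 1 else 0)) (extF e.toMonoidHom (g k)) else 0) = P j * T1 + Q j * T2 := by
        rw [hT1, hT2, lev_sum, lev_sum]
        push_cast
        rw [Finset.mul_sum, Finset.mul_sum, ← Finset.sum_add_distrib]
        apply Finset.sum_congr rfl
        intro k _
        rw [hLam]
        split_ifs <;> simp
      rw [this, hP, hQ]
      cases j
      · simp
        ring
      · simp only [if_true]
        field_simp
        rw [hDD]; ring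

end
end FA


namespace FA

section
variable {ι G : Type} [Group G]

theorem CLAIM_core {adj : ι → ι → Prop} {B : ι → Subgroup G} {N : ℕ} {v : ℕ → ι} {g : ℕ → G}
    (hRC : RC G) (h0 : IsSys adj B) (hw0 : IsWalk adj B N v g) (IH : IHyp G N (Set.range v).ncard)
    {w x : ι} (hwv : w ∈ Set.range v) (hwx0 : ∀ y ∈ Set.range v, adj w y → y = x) :
    Emb B (Set.range v) (pr g N) w := by
  classical
  obtain ⟨V, hV⟩ : ∃ V, V = Set.range v := ⟨_, rfl⟩
  have hvV : ∀ k, v k ∈ V := fun k => hV ▸ ⟨k, rfl⟩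
  obtain ⟨adj', hadj'⟩ : ∃ adj' : ι → ι → Prop, ∀ a b, adj' a b ↔ adj a b ∧ a ∈ V ∧ b ∈ V :=
    ⟨_, fun _ _ => Iff.rfl⟩
  have h : IsSys adj' B := h0.restrict adj' B (fun a b hab => ((hadj' a b).1 hab).1)
    (fun a b hab => (hadj' b a).2 (by
      have := (hadj' a b).1 hab
      exact ⟨h0.symm _ _ this.1, this.2.2, this.2.1⟩)) (fun _ => le_rfl) (fun _ _ _ => inf_le_left)
  have hw : IsWalk adj' B N v g :=
    ⟨hw0.pos, hw0.pv, hw0.pg, fun k => (hadj' _ _).2 ⟨hw0.adj k, hvV _, hvV _⟩, hw0.mem, hw0.red⟩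
  have hwx : ∀ y, adj' w y → y = x := by
    intro y hy
    have := (hadj' _ _).1 hy
    exact hwx0 y (hV ▸ this.2.2) this.1
  clear hwx0 h0 hw0
  obtain ⟨d, d0, d1, d2⟩ := h.rank w
  have hCR : CR adj' d w V := hV ▸ hw.CR h.symm hwv d0 d1 d2
  have hfin : V.Finite := hV ▸ hw.finite
  obtain ⟨y, hy, hmax⟩ := hfin.exists_maximalFor d _ ⟨_, hvV 0⟩
  have hmax' : ∀ c ∈ V, d c ≤ d y := by
    intro c hc
    by_contra hcc
    push Not at hcc
    have := hmax hc hcc.le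
    omega
  have hyw : y ≠ w := by
    rintro rfl
    have e1 : d (v 0) ≤ d y := hmax' _ (hvV 0)
    have e2 : d (v (0 + 1)) ≤ d y := hmax' _ (hvV (0 + 1))
    rcases d1 _ _ (hw.adj 0) with e3 | e3 <;> omega
  obtain ⟨p, hp, hp1, hp2⟩ := hCR.2 _ hy hyw
  have hyp : ∀ c, adj' y c → c = p := by
    intro c hc
    refine d2 _ c p hc hp1 ?_ hp2
    have := hmax' c ((hadj' _ _).1 hc).2.2
    rcases d1 _ _ hc with e | e <;> omega
  obtain ⟨K, hK⟩ : ∃ K : ι → ι → Subgroup G, ∀ a b, K a b =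
      Subgroup.closure ({b | ∃ k, v k = a ∧ b = g k} ∪ {z | z ∈ B a ∧ z ∈ B b}) := ⟨_, fun _ _ => rfl⟩
  have hKB : ∀ a b, K a b ≤ B a := by
    intro a b
    rw [hK, Subgroup.closure_le]
    rintro z (⟨k, rfl, rfl⟩ | hz)
    · exact hw.mem k
    · exact hz.1
  have hKI : ∀ a b, B a ⊓ B b ≤ K a b := by
    intro a b z hz
    rw [hK]
    exact Subgroup.subset_closure (Or.inr hz)
  have hKg : ∀ k b, g k ∈ K (v k) b := by
    intro k b
    rw [hK]
    exact Subgroup.subset_closure (Or.inl ⟨k, rfl, rfl⟩)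
  obtain ⟨B1, hB1⟩ : ∃ B1 : ι → Subgroup G, ∀ c, B1 c = if c = w then K w x else B c :=
    ⟨_, fun _ => rfl⟩
  obtain ⟨B2, hB2⟩ : ∃ B2 : ι → Subgroup G, ∀ c, B2 c = if c = y then K y p else B1 c :=
    ⟨_, fun _ => rfl⟩
  have hB1w : B1 w = K w x := by rw [hB1, if_pos rfl]
  have hB1n : ∀ c, c ≠ w → B1 c = B c := fun c hc => by rw [hB1, if_neg hc]
  have hB2y : B2 y = K y p := by rw [hB2, if_pos rfl]
  have hB2n : ∀ c, c ≠ y → B2 c = B1 c := fun c hc => by rw [hB2, if_neg hc]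
  have hle1 : ∀ c, B1 c ≤ B c := by
    intro c
    by_cases hc : c = w
    · rw [hc, hB1w]; exact hKB _ _
    · rw [hB1n c hc]
  have hle2 : ∀ c, B2 c ≤ B1 c := by
    intro c
    by_cases hc : c = y
    · rw [hc, hB2y, hB1n y hyw]; exact hKB _ _
    · rw [hB2n c hc]
  have hI1 : ∀ i j, adj' i j → B i ⊓ B j ≤ B1 i := by
    intro i j hij
    by_cases hc : i = w
    · subst hc
      rw [hB1w, hwx _ hij]
      exact hKI _ _
    · rw [hB1n i hc]
      exact inf_le_left
  have hI2 : ∀ i j, adj' i j → B i ⊓ B j ≤ B2 i := by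
    intro i j hij
    by_cases hc : i = y
    · subst hc
      rw [hB2y, hyp _ hij]
      exact hKI _ _
    · rw [hB2n i hc]
      exact hI1 i j hij
  have hs1 : IsSys adj' B1 := h.restrict adj' B1 (fun _ _ h => h) h.symm hle1 hI1
  have hs2 : IsSys adj' B2 := h.restrict adj' B2 (fun _ _ h => h) h.symm
    (fun c => (hle2 c).trans (hle1 c)) hI2
  have hm2 : ∀ k, g k ∈ B2 (v k) := by
    intro k
    by_cases hc : v k = y
    · rw [hc, hB2y, ← hc]; exact hKg _ _
    · rw [hB2n _ hc]
      by_cases hc : v k = w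
      · rw [hc, hB1w, ← hc]; exact hKg _ _
      · rw [hB1n _ hc]; exact hw.mem k
  have hw2 : IsWalk adj' B2 N v g :=
    ⟨hw.pos, hw.pv, hw.pg, hw.adj, hm2, fun k hk hc => hw.red k hk (hle1 _ (hle2 _ hc))⟩
  have gen : ∀ a b, B2 a = K a b → adj' a b → B2 a ≤ Subgroup.closure
      ({b | ∃ k, v k = a ∧ b = g k} ∪ {z | z ∈ B2 a ∧ z ∈ B2 b}) := by
    intro a b e hab
    conv_lhs => rw [e, hK]
    apply Subgroup.closure_mono
    apply Set.union_subset_union_right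
    rintro z ⟨hz1, hz2⟩
    exact ⟨hI2 _ _ hab ⟨hz1, hz2⟩, hI2 _ _ (h.symm _ _ hab) ⟨hz2, hz1⟩⟩
  have hadjwx : adj' w x := by
    obtain ⟨k, hk⟩ := hwv
    have := hw.adj k
    rw [hk] at this
    have e := hwx _ this
    rwa [e] at this
  have E1 := NSM hRC hs2 hw2 IH hwv hwx (gen w x (by rw [hB2n w hyw.symm, hB1w]) hadjwx)
  have E2 := NSM hRC hs2 hw2 IH (hV ▸ hy) hyp (gen y p hB2y hp1)
  rw [← hV] at E1 E2 ⊢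
  obtain ⟨P, _, f, hf1, hf2, hf3, hf4⟩ := E1.pair E2
  have hGS : ∀ (C C' : ι → Subgroup G), (∀ c, C c ≤ C' c) → ∀ S, GS C S ≤ GS C' S := by
    intro C C' hC S
    exact GS_le fun c hc => (hC c).trans (le_GS C' hc)
  obtain ⟨P1, _, F1, a1, a2, a3, a4⟩ := AMQ (GS B2 V) (B1 y) (GS B1 V) (B2 y) (hGS _ _ hle2 V)
    (le_GS B1 hy) (le_GS B2 hy) (hle2 y)
    (ExtP_enlarge hs1 hCR hy hB2n (hle2 y) (by
      intro c hc
      exact (inf_le_inf (hle1 y) (hle1 c)).trans (hI2 _ _ hc))) f hf1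
      (hf3.mono (le_GS B2 ⟨hy, hyw⟩))
  have a5 := a4 (GS B2 (V \ {w})) (GS_mono B2 Set.diff_subset) (le_GS B2 ⟨hy, hyw⟩) hf3
  have hR : GS B (V \ {w}) ≤ GS B2 (V \ {w}) ⊔ B1 y := by
    apply GS_le
    intro c hc
    by_cases hcy : c = y
    · rw [hcy, hB1n y hyw]
      exact le_sup_right
    · rw [← hB1n c hc.2, ← hB2n c hcy]
      exact (le_GS B2 hc).trans le_sup_left
  have a6 := a5.mono hR
  have hQ : KT (B1 w) F1 := by
    intro z hz hz1
    rw [← hB2n w hyw.symm] at hz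
    have hwV : w ∈ V := hV ▸ hwv
    exact hf4 z (le_GS B2 (S := V \ {y}) (show w ∈ V \ {y} from ⟨hwV, hyw.symm⟩) hz) ((a2 z (le_GS B2 hwV hz)).1 hz1)
  obtain ⟨P2, _, F2, b1, b2, b3, b4⟩ := AMQ (GS B1 V) (B w) (GS B V) (B1 w) (hGS _ _ hle1 V)
    (le_GS B (hV ▸ hwv)) (le_GS B1 (hV ▸ hwv)) (hle1 w)
    (ExtP_enlarge h hCR (hV ▸ hwv) hB1n (hle1 w) (by
      intro c hc
      exact hI1 _ _ hc)) F1 a1 hQ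
  have hs : pr g N ∈ GS B2 V := pr_mem _ fun k _ => le_GS B2 (hvV k) (hm2 k)
  refine ⟨P2, inferInstance, F2, b1, ?_, ?_⟩
  · rw [b2 _ (hGS _ _ hle2 V hs), a2 _ hs, hf2]
  · intro z hz hz1
    refine a6 z hz ((b2 z ?_).1 hz1)
    refine (GS_le ?_ : GS B (V \ {w}) ≤ GS B1 V) hz
    intro c hc
    rw [← hB1n c hc.2]
    exact le_GS B1 hc.1

theorem CLAIM (hRC : RC G) (N : ℕ) : ∀ n c, N ≤ c + n → IHyp G N c := by
  intro n
  induction n with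
  | zero =>
    intro c hc ι adj B v g h hw hlt
    have := hw.ncard_le
    omega
  | succ n ih =>
    intro c hc ι adj B v g h hw hlt w hwv x hx
    exact CLAIM_core hRC h hw (ih _ (by omega)) hwv hx

end
end FA


namespace FA

section
variable {G : Type} [Group G]

theorem pr_list (g : ℕ → G) (n : ℕ) : pr g n = ((List.range n).map g).prod := by
  induction n with
  | zero => simp [pr]
  | succ n ih => rw [pr, ih, List.range_succ]; simp

theorem pr_add (g : ℕ → G) (k m : ℕ) : pr g (k + m) = pr g k * pr (fun i => g (k + i)) m := by
  induction m with
  | zero => simp [pr]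
  | succ m ih => rw [← add_assoc, pr, ih, pr, mul_assoc]

theorem minlist (Z : Bool → Subgroup G) (hgen : Subgroup.closure {x | ∃ b, x ∈ Z b} = ⊤)
    (C : G → Prop) (hC : ∀ g x, C x → C (g * x * g⁻¹)) (hne : ∃ x, C x)
    (hZ : ∀ b, ∀ x ∈ Z b, ¬ C x) : ∃ (N : ℕ) (g : ℕ → G), 2 ≤ N ∧ (∀ k, g (k + N) = g k) ∧
    (∀ k, ∃ b, g k ∈ Z b) ∧ (∀ k b, g k ∈ Z b → g (k + 1) ∉ Z b) ∧ (∀ k, C (pr (fun i => g (k + i)) N)) ∧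
    ∀ l : List G, (∀ x ∈ l, ∃ b, x ∈ Z b) → C l.prod → N ≤ l.length := by
  classical
  have hex : ∃ n, ∃ l : List G, l.length = n ∧ (∀ x ∈ l, ∃ b, x ∈ Z b) ∧ C l.prod := by
    obtain ⟨x, hx⟩ := hne
    have h1 : x ∈ Subgroup.closure {x | ∃ b, x ∈ Z b} := hgen ▸ trivial
    have h2 : ∃ l : List G, (∀ x ∈ l, ∃ b, x ∈ Z b) ∧ l.prod = x := by
      clear hx
      induction h1 using Subgroup.closure_induction with
      | mem x hx => exact ⟨[x], by simpa using hx, by simp⟩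
      | one => exact ⟨[], by simp, rfl⟩
      | mul x y _ _ h1 h2 =>
        obtain ⟨l, h3, rfl⟩ := h1
        obtain ⟨l', h4, rfl⟩ := h2
        refine ⟨l ++ l', ?_, by simp⟩
        intro z hz
        rcases List.mem_append.1 hz with hz | hz
        · exact h3 z hz
        · exact h4 z hz
      | inv x _ h1 =>
        obtain ⟨l, h3, rfl⟩ := h1
        refine ⟨(l.map (fun x => x⁻¹)).reverse, ?_, by rw [List.prod_inv_reverse]⟩
        intro z hz
        rw [List.mem_reverse, List.mem_map] at hz
        obtain ⟨y, hy, rfl⟩ := hz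
        obtain ⟨b, hb⟩ := h3 y hy
        exact ⟨b, (Z b).inv_mem hb⟩
    obtain ⟨l, hl, rfl⟩ := h2
    exact ⟨_, l, rfl, hl, hx⟩
  obtain ⟨l, hlN, hl1, hl2⟩ := Nat.find_spec hex
  obtain ⟨N, hN⟩ : ∃ N, N = Nat.find hex := ⟨_, rfl⟩
  have hmin : ∀ l : List G, (∀ x ∈ l, ∃ b, x ∈ Z b) → C l.prod → N ≤ l.length := by
    intro l h1 h2
    rw [hN]
    exact Nat.find_min' hex ⟨l, rfl, h1, h2⟩
  rw [← hN] at hlN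
  have hN2 : 2 ≤ N := by
    by_contra hc
    have : N = 0 ∨ N = 1 := by omega
    rcases this with h0 | h0
    · rw [h0, List.length_eq_zero_iff] at hlN
      subst hlN
      exact hZ true 1 (one_mem _) (by simpa using hl2)
    · rw [h0, List.length_eq_one_iff] at hlN
      obtain ⟨a, rfl⟩ := hlN
      obtain ⟨b, hb⟩ := hl1 a (by simp)
      exact hZ b a hb (by simpa using hl2)
  obtain ⟨g, hg⟩ : ∃ g : ℕ → G, ∀ k, g k = l.getD (k % N) 1 := ⟨_, fun _ => rfl⟩
  have hper : ∀ k, g (k + N) = g k := by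
    intro k
    rw [hg, hg, Nat.add_mod_right]
  have hlet : ∀ k, ∃ b, g k ∈ Z b := by
    intro k
    have hlt : k % N < l.length := hlN ▸ Nat.mod_lt _ (by omega)
    rw [hg, List.getD_eq_getElem _ _ hlt]
    exact hl1 _ (List.getElem_mem hlt)
  have hmap : (List.range N).map g = l := by
    apply List.ext_getElem
    · simp [hlN]
    · intro i h1 h2
      rw [List.getElem_map, List.getElem_range, hg, Nat.mod_eq_of_lt (by omega),
        List.getD_eq_getElem _ _ h2]
  have hC0 : C (pr g N) := by rw [pr_list, hmap]; exact hl2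
  have hCk : ∀ k, C (pr (fun i => g (k + i)) N) := by
    intro k
    induction k with
    | zero => simpa using hC0
    | succ k ih =>
      have e1 := pr_add (fun i => g (k + i)) 1 N
      rw [add_comm 1 N, pr] at e1
      simp only [pr, one_mul, add_zero] at e1
      rw [hper] at e1
      have e2 : (fun i => g (k + (1 + i))) = fun i => g (k + 1 + i) := by
        funext i; rw [add_assoc]
      rw [e2] at e1
      have e3 : pr (fun i => g (k + 1 + i)) N = (g k)⁻¹ * pr (fun i => g (k + i)) N * (g k)⁻¹⁻¹ := by
        rw [inv_inv, mul_assoc, e1]; group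
      rw [e3]
      exact hC _ _ ih
  refine ⟨N, g, hN2, hper, hlet, ?_, hCk, hmin⟩
  intro k b h1 h2
  obtain ⟨m, rfl⟩ : ∃ m, N = 2 + m := ⟨N - 2, by omega⟩
  have := hmin ((g k * g (k + 1)) :: (List.range m).map (fun i => g (k + (2 + i)))) (by
    intro x hx
    rcases List.mem_cons.1 hx with rfl | hx
    · exact ⟨b, (Z b).mul_mem h1 h2⟩
    · obtain ⟨i, -, rfl⟩ := List.mem_map.1 hx
      exact hlet _) (by
    have h3 := hCk k
    rw [pr_add] at h3
    rw [List.prod_cons, ← pr_list]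
    simpa [pr] using h3)
  simp at this
  omega

end
end FA


namespace FA

theorem amalg_symm {A B G : Type} [Group A] [Group B] [Group G] {iA : A →* G} {iB : B →* G}
    {p : A} {q : B} (h : IsAmalgam iA iB p q) : IsAmalgam iB iA q p := by
  obtain ⟨h1, h2, h3, h4⟩ := h
  refine ⟨h2, h1, h3.symm, ?_⟩
  intro K _ fB fA e
  obtain ⟨f, ⟨ha, hb⟩, hu⟩ := h4 K fA fB e.symm
  exact ⟨f, ⟨hb, ha⟩, fun f' hf' => hu f' ⟨hf'.2, hf'.1⟩⟩

theorem amalg_lift {A B G : Type} [Group A] [Group B] [Group G] {iA : A →* G} {iB : B →* G}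
    {p : A} {q : B} (h : IsAmalgam iA iB p q) {K : Type} [Group K] (fA : A →* K) (fB : B →* K)
    (e : fA p = fB q) : ∃ f : G →* K, (∀ a, f (iA a) = fA a) ∧ ∀ b, f (iB b) = fB b := by
  obtain ⟨f, ⟨ha, hb⟩, -⟩ := h.2.2.2 K fA fB e
  exact ⟨f, DFunLike.congr_fun ha, DFunLike.congr_fun hb⟩

/-- first step: derivations detecting an element -/
theorem dq_hom {A : Type} [Group A] (hA : RC A) {p : A} (hp : p ≠ 1) :
    ∃ (Γ : Type) (_ : Group Γ) (f : A →* Wr Γ Γ), RC Γ ∧ (f p).g = 1 ∧ (f p).c 1 ≠ 0 := by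
  by_contra hcon
  push Not at hcon
  obtain ⟨π, hπ⟩ : ∃ π, π = QuotientGroup.mk' (dq {p}) := ⟨_, rfl⟩
  have hker : π.ker = dq {p} := by rw [hπ, QuotientGroup.ker_mk']
  have hpk : p ∈ π.ker := by rw [hker]; exact mem_dq_of_mem rfl
  have hΓ : RC (A ⧸ dq {p}) := RC_dq {p}
  have h1 : ∀ η : π.ker →* Multiplicative ℚ, η ⟨p, hpk⟩ = 1 := by
    intro η
    obtain ⟨f, hf1, hf2⟩ := kk π η
    have := hcon _ _ f hΓ (by rw [hf1]; exact hpk)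
    have h3 := hf2 ⟨p, hpk⟩
    rw [this] at h3
    exact (Multiplicative.toAdd.injective (by simpa using h3.symm))
  have h2 : ∀ η : π.ker →* Multiplicative ℚ, η = 1 := by
    intro η
    obtain ⟨f, hf1, hf2⟩ := kk π η
    have hfp : f p = 1 := by
      ext x
      · let ξ : π.ker →* Multiplicative ℚ :=
          { toFun := fun y => Multiplicative.ofAdd ((f y).c x)
            map_one' := by simp
            map_mul' := by
              intro a b
              have : π a = 1 := a.2
              simp [hf1, this] }
        have := h1 ξ
        exact Multiplicative.ofAdd.injective (by simpa [ξ] using this)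
      · rw [hf1]; exact hpk
    ext y
    have hy : (y : A) ∈ dq {p} := hker.le y.2
    have h5 : f y = 1 := hy _ _ f (Wr.rc hΓ) (by rintro _ rfl; exact hfp)
    have h6 := hf2 y
    rw [h5] at h6
    simpa using h6.symm
  obtain ⟨η, hη⟩ := hA π.ker (by
    intro h
    rw [h] at hpk
    exact hp hpk)
  exact hη (h2 η)

theorem amalg_det {A B G : Type} [Group A] [Group B] [Group G] {iA : A →* G} {iB : B →* G}
    {p : A} {q : B} (h : IsAmalgam iA iB p q) (hA : RC A) (hB : RC B) (hp : p ≠ 1) (hq : q ≠ 1) :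
    iA p ∉ dq (∅ : Set G) := by
  obtain ⟨Γ, _, f, hΓ, hf1, hf2⟩ := dq_hom hA hp
  obtain ⟨Δ, _, k, hΔ, hk1, hk2⟩ := dq_hom hB hq
  let FA : A →* Wr (Γ × Δ) (Γ × Δ) :=
    { toFun := fun a => ⟨fun x => (f a).c x.1 * (k q).c x.2, ((f a).g, 1)⟩
      map_one' := by
        ext x
        · simp
        · simp
        · simp
      map_mul' := by
        intro a b
        ext x
        · simp [add_mul]
        · simp
        · simp }
  let FB : B →* Wr (Γ × Δ) (Γ × Δ) :=
    { toFun := fun b => ⟨fun x => (f p).c x.1 * (k b).c x.2, (1, (k b).g)⟩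
      map_one' := by
        ext x
        · simp
        · simp
        · simp
      map_mul' := by
        intro a b
        ext x
        · simp [mul_add]
        · simp
        · simp }
  obtain ⟨F, hF1, hF2⟩ := amalg_lift h FA FB (by
    ext x
    · rfl
    · simp [FA, FB, hf1]
    · simp [FA, FB, hk1])
  intro hd
  have := hd _ _ F (Wr.rc (RC_prod hΓ hΔ)) (by simp)
  rw [hF1] at this
  have h2 := congrFun (congrArg Wr.c this) 1
  simp [FA] at h2
  rcases h2 with h2 | h2
  · exact hf2 h2
  · exact hk2 h2

theorem antidiff (ψ : ℤ → ℚ) : ∃ F : ℤ → ℚ, ∀ n, F n - F (n - 1) = ψ n := by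
  refine ⟨fun n => ∑ i ∈ Finset.range n.toNat, ψ (i + 1) - ∑ i ∈ Finset.range (-n).toNat, ψ (-i), ?_⟩
  intro n
  simp only
  rcases lt_or_ge 0 n with h | h
  · obtain ⟨m, rfl⟩ : ∃ m : ℕ, n = m + 1 := ⟨(n - 1).toNat, by omega⟩
    have e1 : ((m : ℤ) + 1).toNat = m + 1 := by omega
    have e2 : ((m : ℤ) + 1 - 1).toNat = m := by omega
    have e3 : (-((m : ℤ) + 1)).toNat = 0 := by omega
    have e4 : (-((m : ℤ) + 1 - 1)).toNat = 0 := by omega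
    rw [e1, e2, e3, e4, Finset.sum_range_succ]
    simp
  · obtain ⟨m, rfl⟩ : ∃ m : ℕ, n = -m := ⟨(-n).toNat, by omega⟩
    have e1 : (-(m : ℤ)).toNat = 0 := by omega
    have e2 : (-(m : ℤ) - 1).toNat = 0 := by omega
    have e3 : (-(-(m : ℤ))).toNat = m := by omega
    have e4 : (-(-(m : ℤ) - 1)).toNat = m + 1 := by omega
    rw [e1, e2, e3, e4, Finset.sum_range_succ]
    simp

theorem coboundary {Γ : Type} [Group Γ] (u : Γ) (hu : ∀ n : ℤ, n ≠ 0 → u ^ n ≠ 1) (φ : Γ → ℚ) :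
    ∃ c : Γ → ℚ, ∀ x, c x - c (u⁻¹ * x) = φ x := by
  classical
  choose F hF using antidiff
  let s := MulAction.orbitRel (Subgroup.zpowers u) Γ
  let σ : Γ → Γ := fun x => (Quotient.mk s x).out
  have hσ1 : ∀ x, ∃ n : ℤ, x = u ^ n * σ x := by
    intro x
    have h1 : s.r (σ x) x := Quotient.mk_out x
    obtain ⟨⟨g, hg⟩, h2⟩ := h1
    obtain ⟨n, rfl⟩ := Subgroup.mem_zpowers_iff.1 hg
    refine ⟨-n, ?_⟩
    have h3 : u ^ n * x = σ x := h2
    rw [← h3]; group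
  have hσ2 : ∀ x, σ (u⁻¹ * x) = σ x := by
    intro x
    have : Quotient.mk s (u⁻¹ * x) = Quotient.mk s x := by
      apply Quotient.sound
      exact ⟨⟨u⁻¹, Subgroup.inv_mem _ (Subgroup.mem_zpowers u)⟩, rfl⟩
    simp only [σ, this]
  choose n hn using hσ1
  refine ⟨fun x => F (fun k => φ (u ^ k * σ x)) (n x), ?_⟩
  intro x
  simp only
  have h1 : n (u⁻¹ * x) = n x - 1 := by
    have h2 := hn (u⁻¹ * x)
    rw [hσ2] at h2
    have h3 : u ^ (n (u⁻¹ * x) - (n x - 1)) = 1 := by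
      have h4 : u⁻¹ * (u ^ n x * σ x) = u ^ n (u⁻¹ * x) * σ x := by rw [← hn x]; exact h2
      have h5 : u ^ n (u⁻¹ * x) = u ^ (n x - 1) := by
        have : u⁻¹ * u ^ n x = u ^ n (u⁻¹ * x) := mul_right_cancel (by rw [mul_assoc]; exact h4)
        rw [← this]; group
      rw [zpow_sub, h5]; group
    by_contra hc
    exact hu _ (by omega) h3
  rw [hσ2, h1, hF, ← hn x]

theorem amalg_inj {A B G : Type} [Group A] [Group B] [Group G] {iA : A →* G} {iB : B →* G}
    {p : A} {q : B} (h : IsAmalgam iA iB p q) (hA : RC A) (hB : RC B) (hp : p ≠ 1) (hq : q ≠ 1) :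
    ∀ a, iA a ∈ dq (∅ : Set G) → a = 1 := by
  have hdet := amalg_det h hA hB hp hq
  obtain ⟨Γ, _, hΓ, π, hπ⟩ : ∃ (Γ : Type) (_ : Group Γ) (_ : RC Γ) (π : G →* Γ), ∀ x, π x = 1 ↔ x ∈ dq ∅ :=
    ⟨G ⧸ dq (∅ : Set G), inferInstance, RC_dq _, QuotientGroup.mk' _, fun x => QuotientGroup.eq_one_iff x⟩
  by_contra hc
  push Not at hc
  obtain ⟨a0, ha0, ha1⟩ := hc
  obtain ⟨η, hη⟩ := hA (π.comp iA).ker (by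
    rw [Subgroup.ne_bot_iff_exists_ne_one]
    refine ⟨⟨a0, (hπ _).2 ha0⟩, ?_⟩
    intro e
    exact ha1 (congrArg Subtype.val e))
  obtain ⟨f, hf1, hf2⟩ := kk (π.comp iA) η
  have hu : π (iA p) ≠ 1 := fun e => hdet ((hπ _).1 e)
  obtain ⟨c, hcc⟩ := coboundary (π (iA p)) (fun n hn => RC_torsion hΓ _ hu n hn) (f p).c
  let FB : B →* Wr Γ Γ :=
    { toFun := fun b => ⟨fun x => c x - c ((π (iB b))⁻¹ * x), π (iB b)⟩
      map_one' := by
        ext x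
        · simp
        · simp
      map_mul' := by
        intro a b
        ext x
        · simp [mul_assoc]
        · simp }
  obtain ⟨F, hF1, hF2⟩ := amalg_lift h f FB (by
    ext x
    · simp only [FB, MonoidHom.coe_mk, OneHom.coe_mk]
      rw [← h.2.2.1, hcc]
    · simp only [FB, MonoidHom.coe_mk, OneHom.coe_mk]
      rw [hf1, ← h.2.2.1]
      rfl)
  apply hη
  ext y
  have h3 : iA y ∈ dq (∅ : Set G) := (hπ _).1 y.2
  have h4 := h3 _ _ F (Wr.rc hΓ) (by simp)
  rw [hF1] at h4
  have h5 := hf2 y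
  rw [h4] at h5
  simpa using h5.symm

theorem amalg_gen {A B G : Type} [Group A] [Group B] [Group G] {iA : A →* G} {iB : B →* G}
    {p : A} {q : B} (h : IsAmalgam iA iB p q) :
    Subgroup.closure {x | ∃ b : Bool, x ∈ (if b then iA.range else iB.range)} = ⊤ := by
  obtain ⟨T, hT⟩ : ∃ T, T = Subgroup.closure {x | ∃ b : Bool, x ∈ (if b then iA.range else iB.range)} :=
    ⟨_, rfl⟩
  have hTA : ∀ a, iA a ∈ T := fun a => hT ▸ Subgroup.subset_closure ⟨true, by simp⟩
  have hTB : ∀ a, iB a ∈ T := fun a => hT ▸ Subgroup.subset_closure ⟨false, by simp⟩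
  rw [← hT, eq_top_iff]
  obtain ⟨f, hf1, hf2⟩ := amalg_lift h (iA.codRestrict T hTA) (iB.codRestrict T hTB) (by
    ext; exact h.2.2.1)
  obtain ⟨F, -, hF⟩ := h.2.2.2 G iA iB h.2.2.1
  have h1 : T.subtype.comp f = F := hF _ ⟨by ext a; simp [hf1], by ext a; simp [hf2]⟩
  have h2 : MonoidHom.id G = F := hF _ ⟨rfl, rfl⟩
  intro x _
  have h3 : T.subtype.comp f = MonoidHom.id G := h1.trans h2.symm
  have := DFunLike.congr_fun h3 x
  simp only [MonoidHom.comp_apply, MonoidHom.id_apply, Subgroup.coe_subtype] at this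
  rw [← this]
  exact (f x).2

end FA


namespace FA

theorem RC_amalg {A B G : Type} [Group A] [Group B] [Group G] {iA : A →* G} {iB : B →* G}
    {p : A} {q : B} (h : IsAmalgam iA iB p q) (hA : RC A) (hB : RC B) (hp : p ≠ 1) (hq : q ≠ 1) :
    RC G := by
  classical
  intro S hS
  by_cases hSD : S ≤ dq (∅ : Set G)
  swap
  · obtain ⟨s, hs, hsD⟩ : ∃ s ∈ S, s ∉ dq (∅ : Set G) := by
      by_contra hc
      push Not at hc
      exact hSD hc
    let π := (QuotientGroup.mk' (dq (∅ : Set G))).comp S.subtype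
    have hne : π ⟨s, hs⟩ ≠ 1 := by
      intro e
      exact hsD ((QuotientGroup.eq_one_iff s).1 e)
    obtain ⟨f, hf⟩ := RC_dq (∅ : Set G) π.range (by
      rw [Subgroup.ne_bot_iff_exists_ne_one]
      refine ⟨⟨π ⟨s, hs⟩, ⟨_, rfl⟩⟩, ?_⟩
      intro e
      exact hne (congrArg Subtype.val e))
    refine ⟨f.comp π.rangeRestrict, ?_⟩
    intro e
    apply hf
    ext ⟨_, x, rfl⟩
    exact DFunLike.congr_fun e x
  have hDA := amalg_inj h hA hB hp hq
  have hDB := amalg_inj (amalg_symm h) hB hA hq hp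
  obtain ⟨Z, hZ⟩ : ∃ Z : Bool → Subgroup G, ∀ b, Z b = if b then iA.range else iB.range :=
    ⟨_, fun _ => rfl⟩
  have hZt : Z true = iA.range := by rw [hZ]; rfl
  have hZf : Z false = iB.range := by rw [hZ]; rfl
  obtain ⟨C, hC⟩ : ∃ C : G → Prop, ∀ x, C x ↔ x ≠ 1 ∧ ∃ g, g⁻¹ * x * g ∈ S := ⟨_, fun _ => Iff.rfl⟩
  have hconj : ∀ g x, C x → C (g * x * g⁻¹) := by
    intro g x hx
    rw [hC] at hx ⊢
    obtain ⟨h1, k, hk⟩ := hx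
    refine ⟨?_, g * k, ?_⟩
    · intro e
      apply h1
      rwa [conj_eq_one_iff] at e
    · convert hk using 1
      group
  have hCD : ∀ x, C x → x ∈ dq (∅ : Set G) := by
    intro x hx
    obtain ⟨h1, k, hk⟩ := (hC x).1 hx
    have := (inferInstance : (dq (∅ : Set G)).Normal).conj_mem _ (hSD hk) k
    convert this using 1
    group
  obtain ⟨N, g, hN, hper, hlet, hadj, hCg, hmin⟩ := minlist Z (by
      have := amalg_gen h
      simp only [hZ]
      exact this) C hconj (by
      obtain ⟨s, hs⟩ := (Subgroup.ne_bot_iff_exists_ne_one).1 hS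
      refine ⟨s, (hC _).2 ⟨fun e => hs (Subtype.ext e), 1, by simp⟩⟩) (by
      intro b x hx hCx
      have h1 := hCD x hCx
      have h2 := ((hC x).1 hCx).1
      cases b with
      | true =>
        rw [hZt] at hx
        obtain ⟨a, rfl⟩ := hx
        apply h2
        rw [hDA a h1, map_one]
      | false =>
        rw [hZf] at hx
        obtain ⟨a, rfl⟩ := hx
        apply h2
        rw [hDB a h1, map_one])
  -- rotate so that the first letter is in the second factor
  obtain ⟨j, hj⟩ : ∃ j, g j ∈ Z false := by
    obtain ⟨b, hb⟩ := hlet 0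
    cases b with
    | false => exact ⟨0, hb⟩
    | true =>
      obtain ⟨b, hb'⟩ := hlet 1
      cases b with
      | false => exact ⟨1, hb'⟩
      | true => exact absurd hb' (hadj 0 true hb)
  obtain ⟨t, ht⟩ : ∃ t : ℕ → G, ∀ i, t i = g (j + i) := ⟨_, fun _ => rfl⟩
  have ht0 : t 0 ∈ Z false := by rw [ht]; exact hj
  have htl : ∀ i, ∃ b, t i ∈ Z b := fun i => by rw [ht]; exact hlet _
  have htN : t (N - 1) ∉ Z false := by
    intro hc
    rw [ht] at hc
    have := hadj _ _ hc
    rw [show j + (N - 1) + 1 = j + N by omega, hper] at this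
    exact this hj
  have htC : C (pr t N) := by
    have := hCg j
    rwa [← (funext ht : t = fun i => g (j + i))] at this
  obtain ⟨hne, y, hy⟩ := (hC _).1 htC
  let X := G ⧸ S
  let x0 : X := QuotientGroup.mk y
  have hfix : ∀ z : G, z • x0 = x0 ↔ y⁻¹ * z * y ∈ S := by
    intro z
    rw [eq_comm]
    change (QuotientGroup.mk y : G ⧸ S) = QuotientGroup.mk (z * y) ↔ _
    rw [QuotientGroup.eq, mul_assoc]
  obtain ⟨u, hu⟩ : ∃ u, u = iA p := ⟨_, rfl⟩
  have huA : u ∈ Z true := by rw [hZt, hu]; exact ⟨p, rfl⟩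
  have huB : u ∈ Z false := by rw [hZf, hu, h.2.2.1]; exact ⟨q, rfl⟩
  have huZ : ∀ b (n : ℤ), u ^ n ∈ Z b := by
    intro b n
    cases b
    · exact (Z _).zpow_mem huB n
    · exact (Z _).zpow_mem huA n
  obtain ⟨m, hm⟩ : ∃ m : X → ℚ, ∀ x, m x = if ∃ n : ℤ, u ^ n • x = x0 then 1 else 0 :=
    ⟨_, fun _ => rfl⟩
  have hm0 : m x0 = 1 := by rw [hm, if_pos ⟨0, by simp⟩]
  have hmu : ∀ x, m (u⁻¹ • x) = m x := by
    intro x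
    rw [hm, hm]
    congr 1
    apply propext
    constructor
    · rintro ⟨n, hn⟩
      refine ⟨n - 1, ?_⟩
      rw [← hn, smul_smul]
      congr 1
      group
    · rintro ⟨n, hn⟩
      refine ⟨n + 1, ?_⟩
      rw [← hn, smul_smul]
      congr 1
      group
  have hmpre : ∀ k, 1 ≤ k → k < N → m ((pr t k)⁻¹ • x0) = 0 := by
    intro k hk1 hkN
    rw [hm, if_neg]
    rintro ⟨n, hn⟩
    rw [smul_smul] at hn
    obtain ⟨k', rfl⟩ : ∃ k', k = k' + 1 := ⟨k - 1, by omega⟩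
    have hn' : (pr t (k' + 1) * u ^ (-n)) • x0 = x0 := by
      have e : (pr t (k' + 1) * u ^ (-n)) = (u ^ n * (pr t (k' + 1))⁻¹)⁻¹ := by group
      rw [e, inv_smul_eq_iff, hn]
    have hS1 := (hfix _).1 hn'
    by_cases hone : pr t (k' + 1) * u ^ (-n) = 1
    · have hP : pr t (k' + 1) = u ^ n := by
        rw [mul_eq_one_iff_eq_inv] at hone
        rw [hone]; group
      obtain ⟨m', hm'⟩ : ∃ m', N = k' + 1 + (m' + 1) := ⟨N - k' - 2, by omega⟩
      have hC2 : C (pr (fun i => t (k' + 1 + i)) m' * (t (k' + 1 + m') * u ^ n)) := by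
        have := hconj (pr t (k' + 1))⁻¹ _ htC
        have e : pr t N = pr t (k' + 1) * (pr (fun i => t (k' + 1 + i)) m' * t (k' + 1 + m')) := by
          rw [hm', pr_add]; rfl
        rw [e] at this
        convert this using 1
        rw [← hP]
        group
      obtain ⟨b, hb⟩ := htl (k' + 1 + m')
      have := hmin ((List.range m').map (fun i => t (k' + 1 + i)) ++ [t (k' + 1 + m') * u ^ n]) (by
        intro x hx
        rcases List.mem_append.1 hx with hx | hx
        · obtain ⟨i, -, rfl⟩ := List.mem_map.1 hx
          exact htl _
        · rw [List.mem_singleton] at hx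
          rw [hx]
          exact ⟨b, (Z b).mul_mem hb (huZ b n)⟩) (by
        rw [List.prod_append, ← pr_list, List.prod_singleton]
        exact hC2)
      simp at this
      omega
    · obtain ⟨b, hb⟩ := htl k'
      have := hmin ((List.range k').map t ++ [t k' * u ^ (-n)]) (by
        intro x hx
        rcases List.mem_append.1 hx with hx | hx
        · obtain ⟨i, -, rfl⟩ := List.mem_map.1 hx
          exact htl _
        · rw [List.mem_singleton] at hx
          rw [hx]
          exact ⟨b, (Z b).mul_mem hb (huZ b _)⟩) (by
        rw [List.prod_append, ← pr_list, List.prod_singleton, ← mul_assoc]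
        exact (hC _).2 ⟨hone, y, hS1⟩)
      simp at this
      omega
  let FA : A →* Wr X G :=
    { toFun := fun a => ⟨fun x => 0, iA a⟩
      map_one' := by
        ext x
        · simp
        · simp
      map_mul' := by
        intro a b
        ext x
        · simp
        · simp }
  let FB : B →* Wr X G :=
    { toFun := fun b => ⟨fun x => m ((iB b)⁻¹ • x) - m x, iB b⟩
      map_one' := by
        ext x
        · simp
        · simp
      map_mul' := by
        intro a b
        ext x
        · simp [mul_smul]
        · simp }
  obtain ⟨F, hF1, hF2⟩ := amalg_lift h FA FB (by
    ext x
    · simp only [FA, FB, MonoidHom.coe_mk, OneHom.coe_mk]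
      rw [← h.2.2.1, ← hu, hmu, sub_self]
    · simp only [FA, FB, MonoidHom.coe_mk, OneHom.coe_mk]
      exact h.2.2.1)
  have hFg : ∀ z, (F z).g = z := by
    intro z
    have h1 : (Wr.proj.comp F) = MonoidHom.id G := by
      obtain ⟨F', -, hF'⟩ := h.2.2.2 G iA iB h.2.2.1
      rw [hF' (Wr.proj.comp F) ⟨by ext a; simp [hF1, FA], by ext a; simp [hF2, FB]⟩]
      exact (hF' _ ⟨rfl, rfl⟩).symm
    exact DFunLike.congr_fun h1 z
  have hFA : ∀ z ∈ Z true, ∀ x, (F z).c x = 0 := by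
    intro z hz x
    rw [hZt] at hz
    obtain ⟨a, rfl⟩ := hz
    rw [hF1]
    rfl
  have hFB : ∀ z ∈ Z false, ∀ x, (F z).c x = m (z⁻¹ • x) - m x := by
    intro z hz x
    rw [hZf] at hz
    obtain ⟨a, rfl⟩ := hz
    rw [hF2]
    rfl
  have hd : ∀ k, k + 1 ≤ N → (F (pr t (k + 1))).c x0 = -1 := by
    intro k
    induction k with
    | zero =>
      intro _
      have e : pr t (0 + 1) = t 0 := by simp [pr]
      have := hmpre 1 le_rfl (by omega)
      rw [show pr t 1 = t 0 from e] at this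
      rw [e, hFB _ ht0, this, hm0]
      norm_num
    | succ k ih =>
      intro hk
      rw [pr, map_mul, Wr.mul_c, ih (by omega), hFg]
      obtain ⟨b, hb⟩ := htl (k + 1)
      cases b with
      | true => rw [hFA _ hb, add_zero]
      | false =>
        have hkN : k + 1 + 1 < N := by
          rcases Nat.lt_or_ge (k + 1 + 1) N with h1 | h1
          · exact h1
          · exfalso
            apply htN
            rw [show N - 1 = k + 1 by omega]
            exact hb
        rw [hFB _ hb, smul_smul, ← mul_inv_rev]
        have e1 := hmpre (k + 1) (by omega) (by omega)
        have e2 := hmpre (k + 1 + 1) (by omega) hkN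
        rw [pr] at e2
        rw [e1, e2]
        norm_num
  let δ : S →* Multiplicative ℚ :=
    { toFun := fun s => Multiplicative.ofAdd ((F (y * s * y⁻¹)).c x0)
      map_one' := by simp
      map_mul' := by
        intro a b
        have e : y * ((a * b : S) : G) * y⁻¹ = (y * a * y⁻¹) * (y * b * y⁻¹) := by
          push_cast
          group
        have e2 : (y * (a : G) * y⁻¹)⁻¹ • x0 = x0 := by
          rw [hfix]
          have := S.inv_mem a.2
          convert this using 1
          group
        rw [e, map_mul, Wr.mul_c, hFg, e2]
        rfl }
  refine ⟨δ, ?_⟩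
  intro e
  have h1 := DFunLike.congr_fun e ⟨_, hy⟩
  have h2 : (F (y * (y⁻¹ * pr t N * y) * y⁻¹)).c x0 = 0 := h1
  have h3 : y * (y⁻¹ * pr t N * y) * y⁻¹ = pr t N := by group
  have h4 := hd (N - 1) (by omega)
  rw [show N - 1 + 1 = N by omega] at h4
  rw [h3, h4] at h2
  norm_num at h2

end FA


namespace FA

theorem isolated {α : Type} {p : FreeGroup α} (hp : IsMaximalCyclic (Subgroup.zpowers p))
    (b : FreeGroup α) (n : ℤ) (hn : n ≠ 0) (hb : b ^ n ∈ Subgroup.zpowers p) :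
    b ∈ Subgroup.zpowers p := by
  classical
  obtain ⟨k, hk⟩ := Subgroup.mem_zpowers_iff.1 hb
  obtain ⟨H, hH⟩ : ∃ H : Subgroup (FreeGroup α), H = Subgroup.closure {b, p} := ⟨_, rfl⟩
  have hbH : b ∈ H := hH ▸ Subgroup.subset_closure (by simp)
  have hpH : p ∈ H := hH ▸ Subgroup.subset_closure (by simp)
  have hfree : IsFreeGroup H := inferInstance
  obtain ⟨X, ⟨e⟩⟩ : ∃ X : Type, Nonempty (H ≃* FreeGroup X) :=
    ⟨IsFreeGroup.Generators H, ⟨IsFreeGroup.toFreeGroup H⟩⟩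
  have hX : ∀ x1 x2 : X, x1 = x2 := by
    intro x1 x2
    by_contra hne
    obtain ⟨E, hE⟩ : ∃ E : X → H → ℤ, ∀ t y, E t y = exs t (e y) := ⟨_, fun _ _ => rfl⟩
    have hpow : ∀ t, n * E t ⟨b, hbH⟩ = k * E t ⟨p, hpH⟩ := by
      intro t
      rw [hE, hE, ← exs_zpow, ← exs_zpow, ← map_zpow, ← map_zpow]
      congr 2
      ext1
      exact hk.symm
    have hdet : E x1 ⟨b, hbH⟩ * E x2 ⟨p, hpH⟩ - E x2 ⟨b, hbH⟩ * E x1 ⟨p, hpH⟩ = 0 := by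
      have h1 := hpow x1
      have h2 := hpow x2
      have : n * (E x1 ⟨b, hbH⟩ * E x2 ⟨p, hpH⟩ - E x2 ⟨b, hbH⟩ * E x1 ⟨p, hpH⟩) = 0 := by
        linear_combination E x2 ⟨p, hpH⟩ * h1 - E x1 ⟨p, hpH⟩ * h2
      rcases mul_eq_zero.1 this with h | h
      · exact absurd h hn
      · exact h
    obtain ⟨c, d, m1, m2, hm, hc1, hc2⟩ := int_kill _ _ _ _ hdet
    have hall : ∀ y (hy : y ∈ H), c * E x1 ⟨y, hy⟩ + d * E x2 ⟨y, hy⟩ = 0 := by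
      intro y hy
      have hy' : y ∈ Subgroup.closure {b, p} := hH ▸ hy
      have : ∃ hy : y ∈ H, c * E x1 ⟨y, hy⟩ + d * E x2 ⟨y, hy⟩ = 0 := by
        clear hy
        induction hy' using Subgroup.closure_induction with
        | mem x hx =>
          rcases hx with rfl | rfl
          · exact ⟨hbH, hc1⟩
          · exact ⟨hpH, hc2⟩
        | one =>
          refine ⟨one_mem _, ?_⟩
          have h0 : (⟨1, one_mem _⟩ : H) = 1 := rfl
          rw [h0, hE, hE, map_one]
          simp [exs]
        | mul x y hx hy h1 h2 =>
          obtain ⟨a1, h1⟩ := h1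
          obtain ⟨a2, h2⟩ := h2
          refine ⟨mul_mem a1 a2, ?_⟩
          have h0 : (⟨x * y, mul_mem a1 a2⟩ : H) = ⟨x, a1⟩ * ⟨y, a2⟩ := rfl
          rw [hE, hE] at h1 h2 ⊢
          rw [h0, map_mul, exs_mul, exs_mul]
          linear_combination h1 + h2
        | inv x hx h1 =>
          obtain ⟨a1, h1⟩ := h1
          refine ⟨inv_mem a1, ?_⟩
          have h0 : (⟨x⁻¹, inv_mem a1⟩ : H) = ⟨x, a1⟩⁻¹ := rfl
          rw [hE, hE] at h1 ⊢
          rw [h0, map_inv, exs_inv, exs_inv]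
          linear_combination - h1
      exact this.2
    have hg : ∀ z, c * exs x1 z + d * exs x2 z = 0 := by
      intro z
      have := hall (e.symm z) (e.symm z).2
      rw [hE, hE] at this
      simpa using this
    have h1 := hg (FreeGroup.of x1)
    have h2 := hg (FreeGroup.of x2)
    rw [exs_of, exs_of] at h1 h2
    simp [hne, Ne.symm hne] at h1 h2
    simp [h1, h2] at hm
  obtain ⟨c, hc⟩ := free_one hX
  have hcyc : ∀ y ∈ H, y ∈ Subgroup.zpowers ((e.symm c : H) : FreeGroup α) := by
    intro y hy
    obtain ⟨m, hm⟩ := hc (e ⟨y, hy⟩)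
    refine Subgroup.mem_zpowers_iff.2 ⟨m, ?_⟩
    have : e.symm (e ⟨y, hy⟩) = (e.symm c) ^ m := by rw [hm, map_zpow]
    rw [MulEquiv.symm_apply_apply] at this
    exact (congrArg Subtype.val this).symm
  have hm := hp.2.2 _ ((Subgroup.zpowers_le).2 (hcyc p hpH))
  rw [hm]
  exact hcyc b hbH

theorem maxcyc_ne {H : Type} [Group H] {p : H} (hp : IsMaximalCyclic (Subgroup.zpowers p)) :
    p ≠ 1 := by
  rintro rfl
  apply hp.2.1
  rw [Subgroup.zpowers_one_eq_bot]
  simp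

theorem NF.ne {G : Type} [Group G] {Z : Bool → Subgroup G} (h : NF Z) (b : Bool) (l : List G)
    (hl : AltW Z (!b) l) (hne : l ≠ []) : l.prod ∉ Z b := by
  intro hx
  match l, hne with
  | y :: l', _ =>
    obtain ⟨h1, h2, h3⟩ := hl
    rw [Bool.not_not] at h2 h3
    by_cases hc : (y :: l').prod ∈ Z (!b)
    · refine h (!b) (((y :: l').prod⁻¹ * y) :: l') ⟨mul_mem (inv_mem hc) h1, ?_, ?_⟩ (by simp) ?_
      · rw [Bool.not_not]
        intro hq
        exact h2 (((Z b).mul_mem_cancel_left (inv_mem hx)).1 hq)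
      · rwa [Bool.not_not]
      · rw [List.prod_cons, mul_assoc, ← List.prod_cons, inv_mul_cancel]
    · refine h b ((y :: l').prod⁻¹ :: y :: l') ⟨inv_mem hx, ?_, ?_⟩ (by simp) ?_
      · rwa [inv_mem_iff]
      · exact ⟨h1, by rwa [Bool.not_not], by rwa [Bool.not_not]⟩
      · rw [List.prod_cons, inv_mul_cancel]

theorem altW_range {G : Type} [Group G] {Z : Bool → Subgroup G} {v : ℕ → Bool} {g : ℕ → G} (m : ℕ) :
    ∀ k, (∀ i, k ≤ i → i < k + m → g i ∈ Z (v i) ∧ g i ∉ Z (!(v i)) ∧ v (i + 1) = !(v i)) →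
      AltW Z (v k) ((List.range' k m).map g) := by
  induction m with
  | zero => intro k _; trivial
  | succ m ih =>
    intro k hk
    rw [List.range'_succ, List.map_cons]
    obtain ⟨h1, h2, h3⟩ := hk k le_rfl (by omega)
    refine ⟨h1, h2, ?_⟩
    rw [← h3]
    exact ih (k + 1) (fun i hi hi' => hk i (by omega) (by omega))

theorem amalg_NF {α β G : Type} [Group G]
    {iA : FreeGroup α →* G} {iB : FreeGroup β →* G}
    {p : FreeGroup α} {q : FreeGroup β}
    (hG : IsAmalgam iA iB p q) (hp : p ≠ 1) (hq : q ≠ 1) (Z : Bool → Subgroup G)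
    (hZt : Z true = iA.range) (hZf : Z false = iB.range) :
    (∀ x y, iA x = iB y → ∃ n : ℤ, p ^ n = x ∧ q ^ n = y) ∧ NF Z := by
  have inj : ∀ {γ : Type} (p : FreeGroup γ), p ≠ 1 → Function.Injective (zpowersHom (FreeGroup γ) p) := by
    intro γ p hp
    rw [injective_iff_map_eq_one]
    intro a ha
    by_contra hc
    exact RC_torsion RC_free p hp (Multiplicative.toAdd a) (fun h => hc (Multiplicative.toAdd.injective (by simpa using h))) (by simpa [zpowersHom_apply] using ha)
  obtain ⟨P, _, i, j, hi, hj, hij, hpb, hNF⟩ := PO _ _ (inj p hp) (inj q hq)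
  obtain ⟨φ, hφ1, hφ2⟩ := amalg_lift hG i j (by simpa [zpowersHom_apply] using hij (Multiplicative.ofAdd 1))
  have hpb' : ∀ x y, i x = j y → ∃ n : ℤ, p ^ n = x ∧ q ^ n = y := by
    intro x y h
    obtain ⟨a, h1, h2⟩ := hpb x y h
    exact ⟨Multiplicative.toAdd a, by simpa [zpowersHom_apply] using h1, by simpa [zpowersHom_apply] using h2⟩
  refine ⟨?_, ?_⟩
  · intro x y h
    apply hpb'
    rw [← hφ1, h, hφ2]
  have hmem : ∀ b x, x ∈ Z b → φ x ∈ (if b then i.range else j.range) := by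
    intro b x hx
    cases b
    · rw [hZf] at hx
      obtain ⟨y, rfl⟩ := hx
      rw [hφ2]; exact ⟨y, rfl⟩
    · rw [hZt] at hx
      obtain ⟨y, rfl⟩ := hx
      rw [hφ1]; exact ⟨y, rfl⟩
  have hupow : ∀ n : ℤ, iA (p ^ n) = iB (q ^ n) := by
    intro n; rw [map_zpow, map_zpow, hG.2.2.1]
  have hnot : ∀ b x, x ∈ Z b → x ∉ Z (!b) → φ x ∉ (if (!b) then i.range else j.range) := by
    intro b x hx hn hc
    apply hn
    cases b
    · simp only [Bool.not_false, if_true] at hc ⊢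
      rw [hZf] at hx
      obtain ⟨y, rfl⟩ := hx
      rw [hφ2] at hc
      obtain ⟨z, hz⟩ := hc
      obtain ⟨n, h1, h2⟩ := hpb' z y hz
      rw [hZt, ← h2, ← hupow]
      exact ⟨_, rfl⟩
    · simp only [Bool.not_true, Bool.false_eq_true, if_false] at hc ⊢
      rw [hZt] at hx
      obtain ⟨y, rfl⟩ := hx
      rw [hφ1] at hc
      obtain ⟨z, hz⟩ := hc
      obtain ⟨n, h1, h2⟩ := hpb' y z hz.symm
      rw [hZf, ← h1, hupow]
      exact ⟨_, rfl⟩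
  have halt : ∀ l b, AltW Z b l → AltW (fun b : Bool => if b then i.range else j.range) b (l.map φ) := by
    intro l
    induction l with
    | nil => intro b _; trivial
    | cons x l ih =>
      intro b h
      exact ⟨hmem b x h.1, hnot b x h.1 h.2.1, ih _ h.2.2⟩
  intro b l hl hne hprod
  apply hNF b (l.map φ) (halt l b hl) (by simpa using hne)
  rw [← map_list_prod, hprod, map_one]

theorem amalg_sys {α β G : Type} [Group G]
    {iA : FreeGroup α →* G} {iB : FreeGroup β →* G}
    {p : FreeGroup α} {q : FreeGroup β}
    (hG : IsAmalgam iA iB p q)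
    (hp : IsMaximalCyclic (Subgroup.zpowers p))
    (hq : IsMaximalCyclic (Subgroup.zpowers q)) (Z : Bool → Subgroup G)
    (hZt : Z true = iA.range) (hZf : Z false = iB.range) :
    IsSys (fun a b : Bool => a ≠ b) Z := by
  obtain ⟨hpb, hNF⟩ := amalg_NF hG (maxcyc_ne hp) (maxcyc_ne hq) Z hZt hZf
  have hupow : ∀ n : ℤ, iA (p ^ n) = iB (q ^ n) := by
    intro n; rw [map_zpow, map_zpow, hG.2.2.1]
  have hne : iA p ≠ 1 := fun h => maxcyc_ne hp (hG.1 (h.trans (map_one iA).symm))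
  have hcyc : iA.range ⊓ iB.range = Subgroup.zpowers (iA p) := by
    apply le_antisymm
    · rintro x ⟨⟨y, rfl⟩, ⟨z, hz⟩⟩
      obtain ⟨n, h1, h2⟩ := hpb y z hz.symm
      exact Subgroup.mem_zpowers_iff.2 ⟨n, by rw [← map_zpow, h1]⟩
    · rw [Subgroup.zpowers_le]
      exact ⟨⟨p, rfl⟩, ⟨q, hG.2.2.1.symm⟩⟩
  refine ⟨fun a b h => h.symm, ?_, ?_, ?_, ?_, ?_⟩
  · intro r
    refine ⟨fun a => if a = r then 0 else 1, by simp, ?_, ?_⟩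
    · intro a b hab
      cases a <;> cases b <;> cases r <;> simp_all
    · intro a b b' h1 h2 _ _
      cases a <;> cases b <;> cases b' <;> simp_all
  · intro n v g hn hadj hg hred hv
    have hadj' : ∀ k < n, v (k + 1) = !(v k) := by
      intro k hk
      have := hadj k hk
      cases h1 : v k <;> cases h2 : v (k + 1) <;> simp_all
    obtain ⟨m, rfl⟩ : ∃ m, n = m + 2 := by
      refine ⟨n - 2, ?_⟩
      have : n ≠ 1 := by
        rintro rfl
        exact hadj 0 (by omega) hv.symm
      omega
    intro hc
    have e : pr g (m + 2) = g 0 * ((List.range' 1 (m + 1)).map g).prod := by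
      rw [pr_list, List.range_eq_range', List.range'_succ]
      simp
    rw [e] at hc
    have h3 := ((Z (v 0)).mul_mem_cancel_left (hg 0 (by omega))).1 hc
    refine hNF.ne (v 0) _ ?_ (by simp) h3
    rw [← hadj' 0 (by omega)]
    apply altW_range
    intro i hi hi'
    refine ⟨hg i (by omega), ?_, hadj' i (by omega)⟩
    obtain ⟨k, rfl⟩ : ∃ k, i = k + 1 := ⟨i - 1, by omega⟩
    rw [hadj' k (by omega), Bool.not_not]
    apply hred k (by omega)
    rw [show k + 2 = (k + 1) + 1 from rfl, hadj' (k + 1) (by omega), hadj' k (by omega), Bool.not_not]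
  · intro i
    cases i
    · rw [hZf]
      exact IsFreeGroup.ofMulEquiv (MonoidHom.ofInjective hG.2.1)
    · rw [hZt]
      exact IsFreeGroup.ofMulEquiv (MonoidHom.ofInjective hG.1)
  · intro i j hij
    refine ⟨iA p, hne, ?_⟩
    cases i <;> cases j <;> simp_all
    rw [inf_comm, hcyc]
  · intro i j hij b hb n hn hbn
    cases i <;> cases j <;> simp only [ne_eq, not_true_eq_false, not_false_eq_true] at hij
    · rw [hZf] at hb
      rw [hZt] at hbn ⊢
      obtain ⟨y, rfl⟩ := hb
      obtain ⟨z, hz⟩ := hbn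
      rw [← map_zpow] at hz
      obtain ⟨k, h1, h2⟩ := hpb z (y ^ n) hz
      obtain ⟨l, hl⟩ := Subgroup.mem_zpowers_iff.1 (isolated hq y n hn (Subgroup.mem_zpowers_iff.2 ⟨k, h2⟩))
      exact ⟨p ^ l, by rw [hupow, hl]⟩
    · rw [hZt] at hb
      rw [hZf] at hbn ⊢
      obtain ⟨y, rfl⟩ := hb
      obtain ⟨z, hz⟩ := hbn
      rw [← map_zpow] at hz
      obtain ⟨k, h1, h2⟩ := hpb (y ^ n) z hz.symm
      obtain ⟨l, hl⟩ := Subgroup.mem_zpowers_iff.1 (isolated hp y n hn (Subgroup.mem_zpowers_iff.2 ⟨k, h1⟩))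
      exact ⟨q ^ l, by rw [← hupow, hl]⟩

theorem main {α β G : Type} [Group G]
    (iA : FreeGroup α →* G) (iB : FreeGroup β →* G)
    (p : FreeGroup α) (q : FreeGroup β)
    (hG : IsAmalgam iA iB p q)
    (hp : IsMaximalCyclic (Subgroup.zpowers p))
    (hq : IsMaximalCyclic (Subgroup.zpowers q))
    (r : G)
    (hrA : ¬ ∃ a : FreeGroup α, IsConj (iA a) r)
    (hrB : ¬ ∃ b : FreeGroup β, IsConj (iB b) r) :
    Function.Injective ((QuotientGroup.mk' (Subgroup.normalClosure {r})).comp iA) ∧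
    Function.Injective ((QuotientGroup.mk' (Subgroup.normalClosure {r})).comp iB) := by
  classical
  obtain ⟨Z, hZ⟩ : ∃ Z : Bool → Subgroup G, ∀ b, Z b = if b then iA.range else iB.range :=
    ⟨_, fun _ => rfl⟩
  have hZt : Z true = iA.range := by rw [hZ]; rfl
  have hZf : Z false = iB.range := by rw [hZ]; rfl
  have hgen : Subgroup.closure {x | ∃ b, x ∈ Z b} = ⊤ := by
    have := amalg_gen hG
    simp only [hZ]
    exact this
  have hRC : RC G := RC_amalg hG RC_free RC_free (maxcyc_ne hp) (maxcyc_ne hq)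
  have hsys := amalg_sys hG hp hq Z hZt hZf
  obtain ⟨N, g, hN, hper, hlet, hadj, hCg, -⟩ := minlist Z hgen (fun x => IsConj x r)
    (fun a x hx => (isConj_iff.2 ⟨a, rfl⟩ : IsConj x (a * x * a⁻¹)).symm.trans hx)
    ⟨r, IsConj.refl r⟩ (by
      intro b x hx hc
      cases b
      · rw [hZf] at hx
        obtain ⟨y, rfl⟩ := hx
        exact hrB ⟨y, hc⟩
      · rw [hZt] at hx
        obtain ⟨y, rfl⟩ := hx
        exact hrA ⟨y, hc⟩)
  obtain ⟨v, hv⟩ : ∃ v : ℕ → Bool, ∀ k, v k = decide (g k ∈ Z true) := ⟨_, fun _ => rfl⟩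
  have hmem : ∀ k, g k ∈ Z (v k) := by
    intro k
    by_cases h : g k ∈ Z true
    · have : v k = true := by rw [hv]; exact decide_eq_true h
      rwa [this]
    · have : v k = false := by rw [hv]; exact decide_eq_false h
      rw [this]
      obtain ⟨b, hb⟩ := hlet k
      cases b
      · exact hb
      · exact absurd hb h
  have hne : ∀ k, v k ≠ v (k + 1) := by
    intro k e
    have := hadj k (v k) (hmem k)
    rw [e] at this
    exact this (hmem (k + 1))
  have hw : IsWalk (fun a b : Bool => a ≠ b) Z N v g :=
    ⟨by omega, fun k => by rw [hv, hv, hper], hper, hne, hmem, fun k _ => hadj k _ (hmem k)⟩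
  have hall : ∀ b, b ∈ Set.range v := by
    intro b
    by_cases h : v 0 = b
    · exact ⟨0, h⟩
    · refine ⟨1, ?_⟩
      have := hne 0
      cases h1 : v 0 <;> cases h2 : v 1 <;> cases b <;> simp_all
  have huniv : Set.range v = Set.univ := Set.eq_univ_of_forall hall
  have htop : GS Z (Set.range v) = ⊤ := by
    rw [huniv, ← hgen, GS]
    simp
  have hconj : IsConj (pr g N) r := by simpa using hCg 0
  have key : ∀ w : Bool, ∀ x ∈ Z (!w), x ∈ Subgroup.normalClosure {r} → x = 1 := by
    intro w x hx hxr
    obtain ⟨P, _, f, hf, hs, hk⟩ := CLAIM hRC N N 0 (by omega) Bool _ Z v g hsys hw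
      (by rw [huniv]; simp [Set.ncard_univ]) w (hall w) (!w)
      (by intro y _ hy; revert hy; cases w <;> cases y <;> simp)
    rw [htop] at hf
    obtain ⟨F, hF⟩ : ∃ F : G →* P, ∀ x, F x = f x :=
      ⟨MonoidHom.mk' f (fun x y => hf x trivial y trivial), fun _ => rfl⟩
    have hFr : F r = 1 := by
      obtain ⟨c, hc⟩ := isConj_iff.1 hconj
      rw [← hc, map_mul, map_mul, hF (pr g N), hs, map_inv]
      simp
    have hle : Subgroup.normalClosure {r} ≤ F.ker := by
      apply Subgroup.normalClosure_le_normal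
      rintro _ rfl
      exact hFr
    have h1 : F x = 1 := hle hxr
    rw [hF] at h1
    have hmw : (!w) ∈ Set.range v \ {w} := ⟨hall _, by cases w <;> simp⟩
    exact hk x (le_GS Z hmw hx) h1
  constructor
  · rw [injective_iff_map_eq_one]
    intro a ha
    have h1 : iA a ∈ Subgroup.normalClosure {r} := (QuotientGroup.eq_one_iff _).1 ha
    have h2 := key false (iA a) (by rw [Bool.not_false, hZt]; exact ⟨a, rfl⟩) h1
    exact hG.1 (h2.trans (map_one iA).symm)
  · rw [injective_iff_map_eq_one]
    intro a ha
    have h1 : iB a ∈ Subgroup.normalClosure {r} := (QuotientGroup.eq_one_iff _).1 ha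
    have h2 := key true (iB a) (by rw [Bool.not_true, hZf]; exact ⟨a, rfl⟩) h1
    exact hG.2.1 (h2.trans (map_one iB).symm)

end FA

/-- **Main Theorem (Freiheitssatz for amalgams of free groups over maximal cyclic
subgroups).** If `r ∈ G = A ∗_U B` is not conjugate to an element of `A` nor of `B`,
then `A` and `B` embed canonically into `G/⟨⟨r⟩⟩`. -/
theorem freiheitssatz_amalgam_free_maximal_cyclic {α β G : Type} [Group G]
    (iA : FreeGroup α →* G) (iB : FreeGroup β →* G)
    (p : FreeGroup α) (q : FreeGroup β)
    (hG : IsAmalgam iA iB p q)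
    (hp : IsMaximalCyclic (Subgroup.zpowers p))
    (hq : IsMaximalCyclic (Subgroup.zpowers q))
    (r : G)
    (hrA : ¬ ∃ a : FreeGroup α, IsConj (iA a) r)
    (hrB : ¬ ∃ b : FreeGroup β, IsConj (iB b) r) :
    Function.Injective ((QuotientGroup.mk' (Subgroup.normalClosure {r})).comp iA) ∧
    Function.Injective ((QuotientGroup.mk' (Subgroup.normalClosure {r})).comp iB) := by
  exact FA.main iA iB p q hG hp hq r hrA hrB
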